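/- Let Ω ⊂ ℝ² be a bounded, open, connected set with Lipschitz boundary and let u ∈ W^{1,1}(Ω;S¹). Then 𝒜**(u,Ω) = inf{ 𝒜(u, Ω ∖ C) : C ⊂ Ω a finite set }. -/

import Mathlib

open MeasureTheory Metric Filter Set
open scoped ENNReal NNReal Topology Classical

noncomputable section

abbrev R2 := EuclideanSpace ℝ (Fin 2)

/-- `Ω ⊂ ℝ²` has Lipschitz boundary: near every boundary point, after a rigid motion,
`Ω` coincides with the open region strictly above the graph of a Lipschitz function. -/
def HasLipschitzBoundary (Ω : Set R2) : Prop :=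
  ∀ p ∈ frontier Ω, ∃ r : ℝ, 0 < r ∧ ∃ (f : R2 ≃ᵢ R2) (γ : ℝ → ℝ) (L : ℝ≥0),
    LipschitzWith L γ ∧ ∀ x ∈ Metric.ball p r, (x ∈ Ω ↔ γ (f x 0) < f x 1)

/-- `G` is the weak (distributional) gradient of `u` on `Ω`:
`∫_Ω u_i ∂_j φ = -∫_Ω G_{ij} φ` for all test functions `φ ∈ C_c^∞(Ω)`. -/
def IsWeakGradient (Ω : Set R2) (u : R2 → R2) (G : R2 → Matrix (Fin 2) (Fin 2) ℝ) : Prop :=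
  ∀ φ : R2 → ℝ, ContDiff ℝ (⊤ : ℕ∞) φ → HasCompactSupport φ → tsupport φ ⊆ Ω →
    ∀ i j : Fin 2,
      (∫ x in Ω, u x i * fderiv ℝ φ x (EuclideanSpace.single j 1)) =
        - ∫ x in Ω, G x i j * φ x

/-- `u ∈ W^{1,1}(Ω;ℝ²)` with weak gradient `G`. -/
def MemW11 (Ω : Set R2) (u : R2 → R2) (G : R2 → Matrix (Fin 2) (Fin 2) ℝ) : Prop :=
  IntegrableOn u Ω ∧ (∀ i j : Fin 2, IntegrableOn (fun x => G x i j) Ω) ∧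
    IsWeakGradient Ω u G

/-- `|u| = 1` a.e. in `Ω`. -/
def SphereValued (Ω : Set R2) (u : R2 → R2) : Prop :=
  ∀ᵐ x ∂(volume.restrict Ω), ‖u x‖ = 1

/-- Frobenius norm of a `2×2` matrix. -/
def frob (M : Matrix (Fin 2) (Fin 2) ℝ) : ℝ :=
  Real.sqrt (∑ i, ∑ j, (M i j) ^ 2)

/-- Jacobian matrix of a map `v : ℝ² → ℝ²`. -/
def jacobianMatrix (v : R2 → R2) (x : R2) : Matrix (Fin 2) (Fin 2) ℝ :=
  Matrix.of fun i j => fderiv ℝ v x (EuclideanSpace.single j 1) i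

/-- Classical graph area `A(v,A) = ∫_A √(1 + |∇v|² + (Jv)²)` of a `C¹` map. -/
def classicalArea (A : Set R2) (v : R2 → R2) : ℝ≥0∞ :=
  ∫⁻ x in A, ENNReal.ofReal
    (Real.sqrt (1 + (∑ i, ∑ j, (jacobianMatrix v x i j) ^ 2) + (jacobianMatrix v x).det ^ 2))

/-- `L¹`-relaxed area functional `𝒜(u,A)`. -/
def relaxedArea (u : R2 → R2) (A : Set R2) : ℝ≥0∞ :=
  sInf { a : ℝ≥0∞ | ∃ v : ℕ → R2 → R2,
    (∀ k, ContDiffOn ℝ 1 (v k) A) ∧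
    (∀ k, IntegrableOn (fun x => v k x - u x) A) ∧
    Tendsto (fun k => ∫ x in A, ‖v k x - u x‖) atTop (nhds 0) ∧
    a = Filter.liminf (fun k => classicalArea A (v k)) atTop }

/-- `λ_u = (1/2)(u₁ ∇^⊥u₂ − u₂ ∇^⊥u₁)`, computed from the weak gradient `G`. -/
def lambdaVec (u : R2 → R2) (G : R2 → Matrix (Fin 2) (Fin 2) ℝ) (x : R2) : Fin 2 → ℝ :=
  ![ (1 / 2) * (-(u x 0) * G x 1 1 + u x 1 * G x 0 1),
     (1 / 2) * (u x 0 * G x 1 0 - u x 1 * G x 0 0) ]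

/-- Distributional Jacobian pairing `⟨Det(∇u), φ⟩ = ∫_Ω λ_u · ∇φ`. -/
def detPairing (Ω : Set R2) (u : R2 → R2) (G : R2 → Matrix (Fin 2) (Fin 2) ℝ)
    (φ : R2 → ℝ) : ℝ :=
  ∫ x in Ω, ∑ j, lambdaVec u G x j * fderiv ℝ φ x (EuclideanSpace.single j 1)

/-- `φ ∈ Lip₀(Ω)`: Lipschitz on `cl(Ω)` and vanishing on `∂Ω`. -/
def MemLip0 (Ω : Set R2) (φ : R2 → ℝ) : Prop :=
  (∃ L : ℝ≥0, LipschitzOnWith L φ (closure Ω)) ∧ ∀ p ∈ frontier Ω, φ p = 0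

/-- Admissible test functions for the flat norm: Lipschitz constant `≤ L` on `cl(Ω)`,
vanishing on `Z`, and bounded by `1` on `cl(Ω)`. -/
def FlatAdmissible (Ω Z : Set R2) (L : ℝ≥0) (φ : R2 → ℝ) : Prop :=
  LipschitzOnWith L φ (closure Ω) ∧ (∀ p ∈ Z, φ p = 0) ∧ ∀ p ∈ closure Ω, |φ p| ≤ 1

/-- Flat norm of a functional `F`, with vanishing condition on the set `Z`. -/
def flatNormOn (Ω Z : Set R2) (L : ℝ≥0) (F : (R2 → ℝ) → ℝ) : ℝ≥0∞ :=
  ⨆ φ ∈ {φ : R2 → ℝ | FlatAdmissible Ω Z L φ}, ENNReal.ofReal (F φ)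

/-- Flat norm of a functional `F` on `Lip₀(Ω)`; `L = 2` gives `‖·‖_{flat,α}` (α = 1/2),
`L = 1` gives `‖·‖_flat`. -/
def flatNorm (Ω : Set R2) (L : ℝ≥0) (F : (R2 → ℝ) → ℝ) : ℝ≥0∞ :=
  flatNormOn Ω (frontier Ω) L F

/-- `d̄_Ω(x,y) = min{|x−y|, dist(x,∂Ω) + dist(y,∂Ω)}`. -/
def dbar (Ω : Set R2) (x y : R2) : ℝ :=
  min (dist x y) (Metric.infDist x (frontier Ω) + Metric.infDist y (frontier Ω))

/-- Countably subadditive interior envelope `𝒜**(u,V)` (relative to `Ω`). -/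
def envA (u : R2 → R2) (Ω V : Set R2) : ℝ≥0∞ :=
  sInf { a : ℝ≥0∞ | ∃ A : ℕ → Set R2,
    (∀ k, IsOpen (A k) ∧ A k ⊆ Ω) ∧ V ⊆ ⋃ k, A k ∧ a = ∑' k, relaxedArea u (A k) }

/-- Property `(P_f)` for a finite family of pairs of points of `cl(Ω)`. -/
def SatisfiesPf (Ω : Set R2) {n : ℕ} (x y : Fin n → R2) : Prop :=
  (∀ k, (x k ∈ Ω ∧ y k ∈ frontier Ω ∧ dist (x k) (y k) = Metric.infDist (x k) (frontier Ω)) ∨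
        (y k ∈ Ω ∧ x k ∈ frontier Ω ∧ dist (x k) (y k) = Metric.infDist (y k) (frontier Ω))) ∧
  ∀ i j, x i ∈ Ω → y j ∈ Ω → x i ≠ y j

/-- The points of the family `x, y` lying in `Ω` are distinct and three by three
not collinear. -/
def InteriorPointsGeneric (Ω : Set R2) {n : ℕ} (x y : Fin n → R2) : Prop :=
  (∀ a b : Fin n ⊕ Fin n, Sum.elim x y a ∈ Ω → Sum.elim x y b ∈ Ω → a ≠ b →
    Sum.elim x y a ≠ Sum.elim x y b) ∧
  ∀ a b c : Fin n ⊕ Fin n, Sum.elim x y a ∈ Ω → Sum.elim x y b ∈ Ω → Sum.elim x y c ∈ Ω →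
    a ≠ b → a ≠ c → b ≠ c →
    ¬ Collinear ℝ ({Sum.elim x y a, Sum.elim x y b, Sum.elim x y c} : Set R2)

/-- `ι(w₁,w₂) = (w₁,−w₂)`. -/
def conjPt (w : R2) : R2 := (WithLp.equiv 2 (Fin 2 → ℝ)).symm ![w 0, -(w 1)]

/-- `u` is a (positive/negative) vortex around the points of the family lying in `Ω`:
the closed discs of radii `ρ` are contained in `Ω` and pairwise disjoint,
`u(z) = (z−x_i)/|z−x_i|` on `B_{ρ}(x_i)` and `u(z) = ι((z−y_j)/|z−y_j|)` on `B_{ρ}(y_j)`. -/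
def VortexAt (Ω : Set R2) (u : R2 → R2) {n : ℕ} (x y : Fin n → R2)
    (ρ : Fin n ⊕ Fin n → ℝ) : Prop :=
  (∀ a, Sum.elim x y a ∈ Ω → Metric.closedBall (Sum.elim x y a) (ρ a) ⊆ Ω) ∧
  (∀ a b, a ≠ b → Sum.elim x y a ∈ Ω → Sum.elim x y b ∈ Ω →
    Disjoint (Metric.closedBall (Sum.elim x y a) (ρ a))
      (Metric.closedBall (Sum.elim x y b) (ρ b))) ∧
  (∀ i, x i ∈ Ω → ∀ᵐ z ∂(volume.restrict (Metric.ball (x i) (ρ (Sum.inl i)))),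
    u z = ‖z - x i‖⁻¹ • (z - x i)) ∧
  (∀ i, y i ∈ Ω → ∀ᵐ z ∂(volume.restrict (Metric.ball (y i) (ρ (Sum.inr i)))),
    u z = conjPt (‖z - y i‖⁻¹ • (z - y i)))

/-- The energy `E(I_P, I_D, τ)` of a partition `{I_Dᶜ, I_D}` of `I` and an injection
`τ : I_D → I`. -/
def energy (Ω : Set R2) {n : ℕ} (x y : Fin n → R2) (ID : Finset (Fin n))
    (τ : Fin n → Fin n) : ℝ≥0∞ :=
  ((IDᶜ.filter fun k => x k ∈ Ω).card : ℝ≥0∞) +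
  (((Finset.univ \ ID.image τ).filter fun j => y j ∈ Ω).card : ℝ≥0∞) +
  2 * ∑ k ∈ ID, μH[1] (segment ℝ (y (τ k)) (x k) ∩ Ω)

/-!
Both sides equal `∫_Ω √(1 + |∇u|²)`: a circle-valued map has no Jacobian term.

Every open `A ⊆ Ω` satisfies `∫_A √(1 + |∇u|²) ≤ 𝒜(u, A)`: dropping the Jacobian term, the
integrand is the length of the vector `(1, ∇u)`; mollifying does not increase its `L¹` norm, and
the mollified gradients converge when the maps do in `L¹`, the derivative being moved onto the
kernel. Summing over a cover bounds `𝒜**(u, Ω)` from below.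

For the upper bound, let `Uₙ` be smooth disc-valued maps converging to `u` in `W^{1,1}`, and compose
them with a retraction of the punctured disc onto the circle. By Sard's theorem and an average over
the centre `a` of the puncture, `a` can be chosen so that each `Uₙ⁻¹{a} ∩ Ω` is finite and the
gradients of the composed maps still converge to `∇u` in `L¹` along a subsequence. Hence, off a
finite set `C`, `u` is `W^{1,1}`-close to a `C¹` circle-valued map `w`. Then `u` factors as `w`
times a circle-valued map with small gradient, and the area of such a product exceeds that of `w`
by little, so `𝒜(u, Ω ∖ C)` is at most `∫_Ω √(1 + |∇u|²)` plus a small error.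

Restoring `C` costs nothing: `𝒜(u, ·)` is dominated on open sets by a finite measure absolutely
continuous with respect to Lebesgue measure, so `C` has neighbourhoods of arbitrarily small area.
-/

open scoped Convolution ComplexConjugate

/-! ### Mollification in `L¹` -/

section Mollification

variable {V E : Type*} [NormedAddCommGroup V] [NormedSpace ℝ V] [FiniteDimensional ℝ V]
  [MeasurableSpace V] [BorelSpace V] [NormedAddCommGroup E]
  {μ : Measure V} [μ.IsAddHaarMeasure]

lemma tendsto_lintegral_enorm_translate_sub {f : V → E} (hf : Integrable f μ) :
    Tendsto (fun z => ∫⁻ x, ‖f (x - z) - f x‖ₑ ∂μ) (𝓝 0) (𝓝 0) := by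
  have := FiniteDimensional.proper ℝ V
  have : Fact ((1 : ℝ≥0∞) ≠ ∞) := ⟨ENNReal.one_ne_top⟩
  have hfL : MemLp f 1 μ := memLp_one_iff_integrable.2 hf
  let F : Lp E 1 μ := hfL.toLp f
  have hcont : Continuous fun z : V => edist (DomAddAct.mk (-z) +ᵥ F) F :=
    ((DomAddAct.continuous_mk.comp continuous_neg).vadd continuous_const).edist continuous_const
  have heq : ∀ z : V, edist (DomAddAct.mk (-z) +ᵥ F) F = ∫⁻ x, ‖f (x - z) - f x‖ₑ ∂μ := by
    intro z
    have hfz : MemLp (fun x => f (x - z)) 1 μ :=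
      hfL.comp_measurePreserving (measurePreserving_sub_right μ z)
    have hshift : DomAddAct.mk (-z) +ᵥ F = hfz.toLp _ := by
      rw [DomAddAct.mk_vadd_toLp]
      congr 1
      ext x
      simp [sub_eq_neg_add]
    rw [hshift, Lp.edist_toLp_toLp, eLpNorm_one_eq_lintegral_enorm]
    rfl
  have hlim := hcont.tendsto 0
  simp only [heq] at hlim
  simpa using hlim

variable [NormedSpace ℝ E]

lemma lintegral_enorm_convolution_sub_le [CompleteSpace E] {f : V → E} (hf : Integrable f μ)
    {ψ : V → ℝ} (hψi : Integrable ψ μ) (hψ0 : ∀ x, 0 ≤ ψ x) (hψ1 : ∫ x, ψ x ∂μ = 1) {ε : ℝ≥0∞}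
    (hε : ∀ z ∈ Function.support ψ, ∫⁻ x, ‖f (x - z) - f x‖ₑ ∂μ ≤ ε) :
    ∫⁻ x, ‖(ψ ⋆[ContinuousLinearMap.lsmul ℝ ℝ, μ] f) x - f x‖ₑ ∂μ ≤ ε := by
  have hpointwise : ∀ᵐ x ∂μ, ‖(ψ ⋆[ContinuousLinearMap.lsmul ℝ ℝ, μ] f) x - f x‖ₑ ≤
      ∫⁻ z, ‖ψ z‖ₑ * ‖f (x - z) - f x‖ₑ ∂μ := by
    filter_upwards [hψi.ae_convolution_exists (ContinuousLinearMap.lsmul ℝ ℝ) hf] with x hx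
    have hdiff : (ψ ⋆[ContinuousLinearMap.lsmul ℝ ℝ, μ] f) x - f x =
        ∫ z, ψ z • (f (x - z) - f x) ∂μ := by
      simp_rw [smul_sub]
      rw [integral_sub (by exact hx) (hψi.smul_const _), integral_smul_const, hψ1, one_smul,
        convolution_lsmul]
    rw [hdiff]
    exact (enorm_integral_le_lintegral_enorm _).trans_eq (by simp only [enorm_smul])
  have hmeas : AEMeasurable (Function.uncurry fun x z : V => ‖ψ z‖ₑ * ‖f (x - z) - f x‖ₑ)
      (μ.prod μ) := by
    have hshift : AEStronglyMeasurable (fun p : V × V => f (p.1 - p.2)) (μ.prod μ) :=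
      hf.aestronglyMeasurable.comp_quasiMeasurePreserving (quasiMeasurePreserving_sub _ _)
    exact hψi.aestronglyMeasurable.comp_snd.enorm.mul
      (hshift.sub hf.aestronglyMeasurable.comp_fst).enorm
  have hmass : ∫⁻ z, ‖ψ z‖ₑ ∂μ = 1 := by
    simp_rw [← ofReal_norm, Real.norm_of_nonneg (hψ0 _)]
    rw [← ofReal_integral_eq_lintegral_ofReal hψi (Eventually.of_forall hψ0), hψ1,
      ENNReal.ofReal_one]
  calc ∫⁻ x, ‖(ψ ⋆[ContinuousLinearMap.lsmul ℝ ℝ, μ] f) x - f x‖ₑ ∂μ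
      ≤ ∫⁻ x, ∫⁻ z, ‖ψ z‖ₑ * ‖f (x - z) - f x‖ₑ ∂μ ∂μ := lintegral_mono_ae hpointwise
    _ = ∫⁻ z, ∫⁻ x, ‖ψ z‖ₑ * ‖f (x - z) - f x‖ₑ ∂μ ∂μ := lintegral_lintegral_swap hmeas
    _ ≤ ∫⁻ z, ‖ψ z‖ₑ * ε ∂μ := by
        refine lintegral_mono fun z => ?_
        rw [lintegral_const_mul' _ _ enorm_ne_top]
        by_cases hz : ψ z = 0
        · simp [hz]
        · gcongr
          exact hε z hz
    _ = ε := by rw [lintegral_mul_const'' _ hψi.aestronglyMeasurable.enorm, hmass, one_mul]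

lemma exists_radius_convolution_normed_sub_le [CompleteSpace E] {f : V → E} (hf : Integrable f μ)
    {ε : ℝ≥0∞} (hε : ε ≠ 0) :
    ∃ δ > 0, ∀ (c : V) (φ : ContDiffBump c), closedBall c φ.rOut ⊆ ball 0 δ →
      ∫⁻ x, ‖(φ.normed μ ⋆[ContinuousLinearMap.lsmul ℝ ℝ, μ] f) x - f x‖ₑ ∂μ ≤ ε := by
  obtain ⟨δ, hδ, hball⟩ := Metric.eventually_nhds_iff_ball.1
    ((tendsto_lintegral_enorm_translate_sub hf).eventually_le_const (pos_iff_ne_zero.2 hε))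
  refine ⟨δ, hδ, fun c φ hφ => lintegral_enorm_convolution_sub_le hf φ.integrable_normed
    φ.nonneg_normed φ.integral_normed fun z hz => hball z (hφ ?_)⟩
  rw [φ.support_normed_eq] at hz
  exact ball_subset_closedBall hz

lemma fderiv_convolution_left_apply [CompleteSpace E] {ψ : V → ℝ} (hψ : ContDiff ℝ 1 ψ)
    (hψc : HasCompactSupport ψ) {f : V → E} (hf : Integrable f μ) (x v : V) :
    fderiv ℝ (ψ ⋆[ContinuousLinearMap.lsmul ℝ ℝ, μ] f) x v =
      ((fun y => fderiv ℝ ψ y v) ⋆[ContinuousLinearMap.lsmul ℝ ℝ, μ] f) x := by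
  rw [(hψc.hasFDerivAt_convolution_left _ hψ hf.locallyIntegrable x).fderiv]
  change (fderiv ℝ ψ ⋆[(((ContinuousLinearMap.lsmul ℝ ℝ).flip.precompR V).flip), μ] f) x v = _
  rw [convolution_flip, convolution_precompR_apply _ hf.locallyIntegrable (hψc.fderiv (𝕜 := ℝ))
    (hψ.continuous_fderiv one_ne_zero), ← convolution_flip]
  rfl

end Mollification

/-! ### The segment property -/

/-- The segment property of `Ω`: near each boundary point, translating by small multiples of a fixed
vector pushes the closure of `Ω` into `Ω`. -/
def HasSegmentProperty {V : Type*} [NormedAddCommGroup V] [NormedSpace ℝ V] (Ω : Set V) : Prop :=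
  ∀ p ∈ frontier Ω, ∃ r > 0, ∃ v : V, ∀ x ∈ closure Ω ∩ ball p r, ∀ t ∈ Ioo (0 : ℝ) 1,
    x + t • v ∈ Ω

lemma HasLipschitzBoundary.hasSegmentProperty {Ω : Set R2} (hΩ : HasLipschitzBoundary Ω) :
    HasSegmentProperty Ω := by
  intro p hp
  obtain ⟨r, hr, f, γ, L, hγ, hf⟩ := hΩ p hp
  let A := f.toRealAffineIsometryEquiv
  let e : R2 := EuclideanSpace.single 1 (r / 2)
  have hfA : ∀ x (t : ℝ), f (x + t • A.linearIsometryEquiv.symm e) = f x + t • e := fun x t => by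
    have := A.map_vadd x (t • A.linearIsometryEquiv.symm e)
    simpa [A, add_comm] using this
  have habove : ∀ x ∈ closure Ω ∩ ball p r, γ (f x 0) ≤ f x 1 := by
    have hclosed : IsClosed {x | γ (f x 0) ≤ f x 1} := by
      have hγc := hγ.continuous
      have hfc := f.continuous
      exact isClosed_le (by fun_prop) (by fun_prop)
    rintro x ⟨hxΩ, hxr⟩
    refine hclosed.closure_subset_iff.2 ?_ (isOpen_ball.closure_inter ⟨hxΩ, hxr⟩)
    exact fun y hy => ((hf y hy.2).1 hy.1).le
  refine ⟨r / 2, half_pos hr, A.linearIsometryEquiv.symm e, fun x hx t ht => ?_⟩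
  have hxr : x ∈ ball p r := ball_subset_ball (half_le_self hr.le) hx.2
  have hmem : x + t • A.linearIsometryEquiv.symm e ∈ ball p r := by
    have hnorm : ‖t • A.linearIsometryEquiv.symm e‖ ≤ r / 2 := by
      rw [norm_smul, LinearIsometryEquiv.norm_map, Real.norm_of_nonneg ht.1.le]
      simp only [e, PiLp.norm_single, Real.norm_of_nonneg (half_pos hr).le]
      nlinarith [ht.2]
    rw [mem_ball, dist_eq_norm, add_sub_right_comm]
    have := mem_ball_iff_norm.1 hx.2
    linarith [norm_add_le (x - p) (t • A.linearIsometryEquiv.symm e)]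
  rw [hf _ hmem, hfA]
  have := habove x ⟨hx.1, hxr⟩
  have := mul_pos ht.1 (half_pos hr)
  simp only [e, PiLp.add_apply, PiLp.smul_apply, PiLp.single_apply, smul_eq_mul]
  norm_num
  linarith

section SegmentProperty

variable {V : Type*} [NormedAddCommGroup V] [NormedSpace ℝ V] {Ω : Set V} {p : V}

lemma HasSegmentProperty.exists_translation (hΩs : HasSegmentProperty Ω) (hΩo : IsOpen Ω)
    (hp : p ∈ closure Ω) :
    ∃ r > 0, ∃ v : V, ∀ x ∈ closure Ω ∩ ball p r, ∀ t ∈ Ioo (0 : ℝ) 1, x + t • v ∈ Ω := by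
  by_cases hpΩ : p ∈ Ω
  · obtain ⟨r, hr, hball⟩ := Metric.isOpen_iff.1 hΩo p hpΩ
    exact ⟨r, hr, 0, fun x hx t _ => by simpa using hball hx.2⟩
  · exact hΩs p (hΩo.frontier_eq ▸ ⟨hp, hpΩ⟩)

lemma HasSegmentProperty.exists_translation_closedBall_subset [FiniteDimensional ℝ V]
    (hΩs : HasSegmentProperty Ω) (hΩo : IsOpen Ω) (hp : p ∈ closure Ω) :
    ∃ r > 0, ∀ δ > 0, ∃ w : V, ‖w‖ < δ ∧ ∃ s > 0, ∀ x ∈ Ω ∩ closedBall p r,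
      closedBall (x + w) s ⊆ Ω := by
  obtain ⟨r, hr, v, hv⟩ := hΩs.exists_translation hΩo hp
  refine ⟨r / 2, half_pos hr, fun δ hδ => ?_⟩
  have := FiniteDimensional.proper ℝ V
  obtain ⟨t, ht, htδ⟩ : ∃ t ∈ Ioo (0 : ℝ) 1, ‖t • v‖ < δ := by
    have hlim : Tendsto (fun t : ℝ => ‖t • v‖) (𝓝[>] 0) (𝓝 0) := by
      have : Continuous fun t : ℝ => ‖t • v‖ := by fun_prop
      simpa using (this.tendsto 0).mono_left nhdsWithin_le_nhds
    exact ((hlim.eventually_lt_const hδ).and (Ioo_mem_nhdsGT one_pos)).exists.imp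
      fun _ h => h.symm
  let K : Set V := (· + t • v) '' (closure Ω ∩ closedBall p (r / 2))
  have hK : IsCompact K :=
    ((isCompact_closedBall p (r / 2)).inter_left isClosed_closure).image (by fun_prop)
  have hKΩ : K ⊆ Ω := by
    rintro _ ⟨x, hx, rfl⟩
    exact hv x ⟨hx.1, closedBall_subset_ball (half_lt_self hr) hx.2⟩ t ht
  obtain ⟨s, hs, hsΩ⟩ := hK.exists_cthickening_subset_open hΩo hKΩ
  refine ⟨t • v, htδ, s, hs, fun x hx => (closedBall_subset_cthickening ?_ s).trans hsΩ⟩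
  exact mem_image_of_mem (· + t • v) ⟨subset_closure hx.1, hx.2⟩

/-- On `ball p r`, arbitrarily small mollification kernels at points of `Ω` only see `Ω`. -/
def HasInwardBumps (Ω : Set V) (p : V) (r : ℝ) : Prop :=
  ∀ δ > 0, ∃ (c : V) (φ : ContDiffBump c), closedBall c φ.rOut ⊆ ball 0 δ ∧
    ∀ x ∈ Ω, ∀ y ∈ ball p r, x - y ∈ closedBall c φ.rOut → y ∈ Ω

lemma HasSegmentProperty.exists_hasInwardBumps [FiniteDimensional ℝ V]
    (hΩs : HasSegmentProperty Ω) (hΩo : IsOpen Ω) (hp : p ∈ closure Ω) :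
    ∃ r > 0, HasInwardBumps Ω p r := by
  obtain ⟨r, hr, hroom⟩ := hΩs.exists_translation_closedBall_subset hΩo hp
  refine ⟨r / 2, half_pos hr, fun δ hδ => ?_⟩
  let η := min (δ / 2) (r / 2)
  have hη : 0 < η / 2 := by positivity
  obtain ⟨w, hw, s, hs, hsΩ⟩ := hroom (η / 2) hη
  have hρ : 0 < min s (η / 2) := lt_min hs hη
  have hcenter : ∀ z ∈ closedBall (-w) (min s (η / 2)), ‖z‖ < η := fun z hz => by
    have hzw : ‖z + w‖ ≤ η / 2 := by
      rw [← sub_neg_eq_add]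
      exact (mem_closedBall_iff_norm.1 hz).trans (min_le_right _ _)
    have := norm_sub_le (z + w) w
    rw [add_sub_cancel_right] at this
    linarith
  refine ⟨-w, ⟨min s (η / 2) / 2, min s (η / 2), half_pos hρ, half_lt_self hρ⟩,
    fun z hz => ?_, fun x hx y hy hxy => hsΩ x ⟨hx, ?_⟩ ?_⟩
  · rw [mem_ball_zero_iff]
    linarith [hcenter z hz, min_le_left (δ / 2) (r / 2)]
  · rw [mem_closedBall_iff_norm, ← sub_add_sub_cancel x y p]
    linarith [norm_add_le (x - y) (y - p), hcenter _ hxy, min_le_right (δ / 2) (r / 2),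
      mem_ball_iff_norm.1 hy]
  · have := (mem_closedBall_iff_norm.1 hxy).trans (min_le_left _ _)
    rwa [sub_neg_eq_add, sub_add_eq_add_sub, ← mem_closedBall_iff_norm', ] at this

end SegmentProperty

/-! ### Weak derivatives and density of smooth functions -/

lemma fderiv_mul_comp_const_sub_apply {V : Type*} [NormedAddCommGroup V] [NormedSpace ℝ V]
    {ζ ψ : V → ℝ} {x y : V} (hζ : DifferentiableAt ℝ ζ y)
    (hψ : DifferentiableAt ℝ ψ (x - y)) (v : V) :
    fderiv ℝ (fun y => ζ y * ψ (x - y)) y v =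
      fderiv ℝ ζ y v * ψ (x - y) - ζ y * fderiv ℝ ψ (x - y) v := by
  have hψy : HasFDerivAt (fun y => ψ (x - y)) (-fderiv ℝ ψ (x - y)) y := by
    rw [← ContinuousLinearMap.comp_id (fderiv ℝ ψ _), ← ContinuousLinearMap.comp_neg]
    exact hψ.hasFDerivAt.comp y ((hasFDerivAt_id y).const_sub x)
  rw [(hζ.hasFDerivAt.fun_mul hψy).fderiv]
  simp only [add_apply, smul_apply, neg_apply, smul_eq_mul]
  ring

section WeakDerivative

variable {V E : Type*} [NormedAddCommGroup V] [MeasurableSpace V] [NormedAddCommGroup E]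
  [NormedSpace ℝ E]

lemma integrable_smul_of_hasCompactSupport [OpensMeasurableSpace V] {μ : Measure V} {φ : V → ℝ}
    {f : V → E} (hf : Integrable f μ) (hφ : Continuous φ) (hφc : HasCompactSupport φ) :
    Integrable (fun x => φ x • f x) μ := by
  obtain ⟨K, hK⟩ := hφc.exists_bound_of_continuous hφ
  exact hf.bdd_smul K (hφ.stronglyMeasurable_of_hasCompactSupport hφc).aestronglyMeasurable
    (Eventually.of_forall hK)

lemma integrable_smul_of_tsupport_subset [BorelSpace V] {μ : Measure V}
    [IsFiniteMeasureOnCompacts μ] {A : Set V} {φ : V → ℝ} {f : V → E} (hφ : Continuous φ)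
    (hφc : HasCompactSupport φ) (hφA : tsupport φ ⊆ A) (hf : ContinuousOn f A) :
    Integrable (fun x => φ x • f x) μ := by
  refine (integrableOn_iff_integrable_of_support_subset
    ((Function.support_smul_subset_left φ f).trans (subset_tsupport φ))).1 ?_
  exact (hφ.continuousOn.smul (hf.mono hφA)).integrableOn_compact hφc

/-- `g` is the weak derivative of `f` on `Ω` in the direction `v`. -/
def HasWeakLineDeriv [NormedSpace ℝ V] (μ : Measure V) (Ω : Set V) (f g : V → E) (v : V) : Prop :=
  ∀ φ : V → ℝ, ContDiff ℝ (⊤ : ℕ∞) φ → HasCompactSupport φ → tsupport φ ⊆ Ω →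
    ∫ x in Ω, fderiv ℝ φ x v • f x ∂μ = -∫ x in Ω, φ x • g x ∂μ

variable [NormedSpace ℝ V] [BorelSpace V] [FiniteDimensional ℝ V] {μ : Measure V}
  [μ.IsAddHaarMeasure] {Ω : Set V}

lemma HasWeakLineDeriv.of_contDiffOn (hΩ : IsOpen Ω) {f : V → E} (hf : ContDiffOn ℝ 1 f Ω)
    (v : V) : HasWeakLineDeriv μ Ω f (fun x => fderiv ℝ f x v) v := by
  intro φ hφ hφc hφΩ
  have hdφ : Continuous fun x => fderiv ℝ φ x v :=
    (hφ.continuous_fderiv (by simp)).clm_apply continuous_const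
  have hdφΩ : tsupport (fun x => fderiv ℝ φ x v) ⊆ Ω :=
    (tsupport_fderiv_apply_subset ℝ v).trans hφΩ
  have hdf : ContinuousOn (fun x => fderiv ℝ f x v) Ω :=
    (hf.continuousOn_fderiv_of_isOpen hΩ le_rfl).clm_apply continuousOn_const
  have hparts := integral_smul_fderiv_eq_neg_fderiv_smul_of_integrable (μ := μ) (v := v)
    (integrable_smul_of_tsupport_subset hdφ (hφc.fderiv_apply (𝕜 := ℝ) v) hdφΩ hf.continuousOn)
    (integrable_smul_of_tsupport_subset hφ.continuous hφc hφΩ hdf)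
    (integrable_smul_of_tsupport_subset hφ.continuous hφc hφΩ hf.continuousOn)
    (fun x _ => hφ.differentiable (by simp) x)
    (fun x hx => (hf.contDiffAt (hΩ.mem_nhds (hφΩ hx))).differentiableAt one_ne_zero)
  rw [setIntegral_eq_integral_of_forall_compl_eq_zero fun x hx => ?_,
    setIntegral_eq_integral_of_forall_compl_eq_zero fun x hx => ?_, hparts, neg_neg]
  · rw [image_eq_zero_of_notMem_tsupport fun h => hx (hφΩ h), zero_smul]
  · rw [image_eq_zero_of_notMem_tsupport (f := fun x => fderiv ℝ φ x v) fun h => hx (hdφΩ h),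
      zero_smul]

lemma convolution_lsmul_indicator (hΩ : MeasurableSet Ω) (ψ : V → ℝ) (f : V → E) (x : V) :
    (ψ ⋆[ContinuousLinearMap.lsmul ℝ ℝ, μ] Ω.indicator f) x = ∫ y in Ω, ψ (x - y) • f y ∂μ := by
  rw [convolution_lsmul_swap, ← integral_indicator hΩ]
  simp only [indicator_smul_apply Ω fun y => ψ (x - y)]

/-- The test function `y ↦ ζ y * ψ (x - y)` is supported in `Ω` even though `ψ (x - ·)` need not
be, so the truncation of `ζ • f` to `Ω` can be differentiated through its convolution. -/
lemma HasWeakLineDeriv.fderiv_convolution_indicator [CompleteSpace E] (hΩ : MeasurableSet Ω)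
    {f g : V → E} {v : V} (hfg : HasWeakLineDeriv μ Ω f g v) (hf : IntegrableOn f Ω μ)
    (hg : IntegrableOn g Ω μ) {ζ ψ : V → ℝ} (hζ : ContDiff ℝ (⊤ : ℕ∞) ζ) (hζc : HasCompactSupport ζ)
    (hψ : ContDiff ℝ (⊤ : ℕ∞) ψ) (hψc : HasCompactSupport ψ) {x : V}
    (hx : ∀ y ∈ tsupport ζ, x - y ∈ tsupport ψ → y ∈ Ω) :
    fderiv ℝ (ψ ⋆[ContinuousLinearMap.lsmul ℝ ℝ, μ] Ω.indicator fun y => ζ y • f y) x v =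
      (ψ ⋆[ContinuousLinearMap.lsmul ℝ ℝ, μ]
        Ω.indicator fun y => ζ y • g y + fderiv ℝ ζ y v • f y) x := by
  have hψx : ContDiff ℝ (⊤ : ℕ∞) fun y => ψ (x - y) := hψ.comp (contDiff_const.sub contDiff_id)
  have hdψ : Continuous fun y => fderiv ℝ ψ (x - y) v :=
    ((hψ.continuous_fderiv (by simp)).comp (by fun_prop)).clm_apply continuous_const
  let φ : V → ℝ := fun y => ζ y * ψ (x - y)
  have hφ : ContDiff ℝ (⊤ : ℕ∞) φ := hζ.mul hψx
  have hφc : HasCompactSupport φ := hζc.mul_right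
  have hφΩ : tsupport φ ⊆ Ω := fun y hy => by
    refine hx y (tsupport_mul_subset_left hy) ?_
    exact tsupport_comp_subset_preimage ψ (f := fun y => x - y) (by fun_prop)
      (tsupport_mul_subset_right hy)
  have hF : Integrable (Ω.indicator fun y => ζ y • f y) μ :=
    (integrable_indicator_iff hΩ).2 (integrable_smul_of_hasCompactSupport hf hζ.continuous hζc)
  have hdψf : IntegrableOn (fun y => fderiv ℝ ψ (x - y) v • ζ y • f y) Ω μ := by
    simp_rw [smul_smul]
    exact integrable_smul_of_hasCompactSupport hf (hdψ.mul hζ.continuous) hζc.mul_left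
  have hφg : IntegrableOn (fun y => φ y • g y) Ω μ :=
    integrable_smul_of_hasCompactSupport hg hφ.continuous hφc
  have hdφf : IntegrableOn (fun y => fderiv ℝ φ y v • f y) Ω μ :=
    integrable_smul_of_hasCompactSupport hf
      ((hφ.continuous_fderiv (by simp)).clm_apply continuous_const) (hφc.fderiv_apply (𝕜 := ℝ) v)
  have hsum : ∫ y in Ω, fderiv ℝ φ y v • f y + φ y • g y ∂μ = 0 := by
    rw [integral_add hdφf hφg, hfg φ hφ hφc hφΩ, neg_add_cancel]
  rw [fderiv_convolution_left_apply (hψ.of_le (by exact_mod_cast le_top)) hψc hF,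
    convolution_lsmul_indicator hΩ, convolution_lsmul_indicator hΩ, ← add_zero (∫ _ in Ω, _ ∂μ),
    ← hsum, ← integral_add hdψf (hdφf.fun_add hφg)]
  refine integral_congr_ae (Eventually.of_forall fun y => ?_)
  simp only [φ, fderiv_mul_comp_const_sub_apply (hζ.differentiable (by simp) y)
    (hψ.differentiable (by simp) (x - y))]
  module

variable {ι : Type*} [Finite ι] [CompleteSpace E] {f : V → E} {g : ι → V → E} {e : ι → V}

lemma HasInwardBumps.exists_contDiff_lintegral_enorm_sub_le (hΩ : MeasurableSet Ω)
    (hfg : ∀ i, HasWeakLineDeriv μ Ω f (g i) (e i)) (hf : IntegrableOn f Ω μ)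
    (hg : ∀ i, IntegrableOn (g i) Ω μ) {p : V} {r : ℝ} (hp : HasInwardBumps Ω p r) {ζ : V → ℝ}
    (hζ : ContDiff ℝ (⊤ : ℕ∞) ζ) (hζp : tsupport ζ ⊆ ball p r) {ε : ℝ≥0∞} (hε : ε ≠ 0) :
    ∃ F : V → E, ContDiff ℝ 1 F ∧ ∫⁻ x in Ω, ‖F x - ζ x • f x‖ₑ ∂μ ≤ ε ∧
      ∀ i, ∫⁻ x in Ω,
        ‖fderiv ℝ F x (e i) - (ζ x • g i x + fderiv ℝ ζ x (e i) • f x)‖ₑ ∂μ ≤ ε := by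
  have := FiniteDimensional.proper ℝ V
  have hζc : HasCompactSupport ζ := (isCompact_closedBall p r).of_isClosed_subset
    (isClosed_tsupport ζ) (hζp.trans ball_subset_closedBall)
  have hF : Integrable (Ω.indicator fun x => ζ x • f x) μ :=
    (integrable_indicator_iff hΩ).2 (integrable_smul_of_hasCompactSupport hf hζ.continuous hζc)
  have hG : ∀ i, Integrable (Ω.indicator fun x => ζ x • g i x + fderiv ℝ ζ x (e i) • f x) μ :=
    fun i => (integrable_indicator_iff hΩ).2 <|
      (integrable_smul_of_hasCompactSupport (hg i) hζ.continuous hζc).fun_add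
        (integrable_smul_of_hasCompactSupport hf
          ((hζ.continuous_fderiv (by simp)).clm_apply continuous_const)
          (hζc.fderiv_apply (𝕜 := ℝ) (e i)))
  obtain ⟨δ₀, hδ₀, hmollF⟩ := exists_radius_convolution_normed_sub_le hF hε
  choose δ hδ hmollG using fun i => exists_radius_convolution_normed_sub_le (hG i) hε
  have hsmall : ∀ᶠ η in 𝓝 (0 : ℝ), η ≤ δ₀ ∧ ∀ i, η ≤ δ i :=
    (eventually_le_nhds hδ₀).and (eventually_all.2 fun i => eventually_le_nhds (hδ i))
  obtain ⟨η, hη, hη₀, hηδ⟩ :=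
    (eventually_mem_nhdsWithin.and (hsmall.filter_mono nhdsWithin_le_nhds)).exists (f := 𝓝[>] 0)
  obtain ⟨c, ψ, hψη, hψΩ⟩ := hp η hη
  have hψ : ContDiff ℝ (⊤ : ℕ∞) (ψ.normed μ) := ψ.contDiff_normed
  refine ⟨ψ.normed μ ⋆[ContinuousLinearMap.lsmul ℝ ℝ, μ] Ω.indicator fun x => ζ x • f x,
    ψ.hasCompactSupport_normed.contDiff_convolution_left _
      (hψ.of_le (by exact_mod_cast le_top)) hF.locallyIntegrable, ?_, fun i => ?_⟩
  · refine le_trans ?_ (hmollF c ψ (hψη.trans (ball_subset_ball hη₀)))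
    refine (setLIntegral_congr_fun hΩ fun x hx => ?_).trans_le (setLIntegral_le_lintegral Ω _)
    simp only [indicator_of_mem hx]
  · refine le_trans ?_ (hmollG i c ψ (hψη.trans (ball_subset_ball (hηδ i))))
    refine (setLIntegral_congr_fun hΩ fun x hx => ?_).trans_le (setLIntegral_le_lintegral Ω _)
    rw [(hfg i).fderiv_convolution_indicator hΩ hf (hg i) hζ hζc hψ ψ.hasCompactSupport_normed
      fun y hy hxy => hψΩ x hx y (hζp hy) (ψ.tsupport_normed_eq (μ := μ) ▸ hxy)]
    simp only [indicator_of_mem hx]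

lemma exists_contDiff_partition_of_isCompact {V : Type*} [NormedAddCommGroup V] [NormedSpace ℝ V]
    [FiniteDimensional ℝ V] {K : Set V} (hK : IsCompact K) {r : V → ℝ} (hr : ∀ p ∈ K, 0 < r p) :
    ∃ (t : Finset V) (ζ : t → V → ℝ), (∀ p ∈ t, p ∈ K) ∧ (∀ p, ContDiff ℝ (⊤ : ℕ∞) (ζ p)) ∧
      (∀ p, tsupport (ζ p) ⊆ ball p (r p)) ∧ ∀ x ∈ K, ∑ p, ζ p x = 1 := by
  obtain ⟨t, htK, hcover⟩ := hK.elim_nhds_subcover (fun p => ball p (r p))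
    fun p hp => ball_mem_nhds p (hr p hp)
  obtain ⟨ζ, hζ⟩ := SmoothPartitionOfUnity.exists_isSubordinate (modelWithCornersSelf ℝ V)
    hK.isClosed (fun p : t => ball (p : V) (r p)) (fun _ => isOpen_ball)
    (hcover.trans (iUnion₂_subset fun p hp =>
      subset_iUnion (fun p : t => ball (p : V) (r p)) ⟨p, hp⟩))
  refine ⟨t, fun p => ζ p, htK, fun p => (ζ p).contMDiff.contDiff, hζ, fun x hx => ?_⟩
  rw [← finsum_eq_sum_of_fintype, ζ.sum_eq_one hx]

lemma sum_fderiv_apply_eq_zero {V ι : Type*} [NormedAddCommGroup V] [NormedSpace ℝ V] [Fintype ι]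
    {ζ : ι → V → ℝ} {x : V} (hζ : ∀ i, DifferentiableAt ℝ (ζ i) x)
    (hone : (fun y => ∑ i, ζ i y) =ᶠ[𝓝 x] 1) (v : V) : ∑ i, fderiv ℝ (ζ i) x v = 0 := by
  rw [← sum_apply, ← fderiv_fun_sum fun i _ => hζ i, hone.fderiv_eq, fderiv_one, Pi.zero_apply,
    zero_apply]

lemma sum_le_of_le_div_card_succ {ι : Type*} [Fintype ι] {c : ι → ℝ≥0∞} {ε : ℝ≥0∞}
    (hc : ∀ i, c i ≤ ε / (Fintype.card ι + 1)) : ∑ i, c i ≤ ε :=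
  calc ∑ i, c i ≤ ∑ _i : ι, ε / (Fintype.card ι + 1) := Finset.sum_le_sum fun i _ => hc i
    _ = Fintype.card ι * (ε / (Fintype.card ι + 1)) := by simp
    _ ≤ (Fintype.card ι + 1) * (ε / (Fintype.card ι + 1)) := by gcongr; exact le_self_add
    _ ≤ ε := ENNReal.mul_div_le

lemma lintegral_enorm_sum_sub_sum_le {α ι E : Type*} [MeasurableSpace α] [NormedAddCommGroup E]
    {μ : Measure α} (t : Finset ι) {F f : ι → α → E}
    (h : ∀ i ∈ t, AEStronglyMeasurable (F i - f i) μ) :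
    ∫⁻ x, ‖∑ i ∈ t, F i x - ∑ i ∈ t, f i x‖ₑ ∂μ ≤ ∑ i ∈ t, ∫⁻ x, ‖F i x - f i x‖ₑ ∂μ := by
  refine le_trans ?_ (lintegral_finsetSum' t fun i hi => (h i hi).enorm).le
  refine lintegral_mono fun x => ?_
  rw [← Finset.sum_sub_distrib]
  exact enorm_sum_le _ _

theorem exists_contDiff_lintegral_enorm_sub_le (hΩo : IsOpen Ω) (hΩb : Bornology.IsBounded Ω)
    (hΩs : HasSegmentProperty Ω) (hfg : ∀ i, HasWeakLineDeriv μ Ω f (g i) (e i))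
    (hf : IntegrableOn f Ω μ) (hg : ∀ i, IntegrableOn (g i) Ω μ) {ε : ℝ≥0∞} (hε : ε ≠ 0) :
    ∃ F : V → E, ContDiff ℝ 1 F ∧ ∫⁻ x in Ω, ‖F x - f x‖ₑ ∂μ ≤ ε ∧
      ∀ i, ∫⁻ x in Ω, ‖fderiv ℝ F x (e i) - g i x‖ₑ ∂μ ≤ ε := by
  have := FiniteDimensional.proper ℝ V
  choose! r hr hbumps using fun p (hp : p ∈ closure Ω) => hΩs.exists_hasInwardBumps hΩo hp
  obtain ⟨t, ζ, htΩ, hζ, hζr, hζ_sum⟩ :=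
    exists_contDiff_partition_of_isCompact hΩb.isCompact_closure hr
  have hη : ε / (Fintype.card t + 1) ≠ 0 := ENNReal.div_ne_zero.2 ⟨hε, by finiteness⟩
  choose F hF hFf hFg using fun p : t =>
    (hbumps p (htΩ p p.2)).exists_contDiff_lintegral_enorm_sub_le hΩo.measurableSet hfg hf hg
      (hζ p) (hζr p) hη
  have hdF : ∀ p i, Continuous fun x => fderiv ℝ (F p) x (e i) := fun p i =>
    ((hF p).continuous_fderiv one_ne_zero).clm_apply continuous_const
  have hdζ : ∀ p i, Continuous fun x => fderiv ℝ (ζ p) x (e i) := fun p i =>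
    ((hζ p).continuous_fderiv (by simp)).clm_apply continuous_const
  refine ⟨fun x => ∑ p, F p x, ContDiff.sum fun p _ => hF p, ?_, fun i => ?_⟩
  · refine le_trans (le_of_eq (setLIntegral_congr_fun hΩo.measurableSet fun x hx => ?_))
      ((lintegral_enorm_sum_sub_sum_le Finset.univ fun p _ => ?_).trans
        (sum_le_of_le_div_card_succ hFf))
    · simp only [← Finset.sum_smul, hζ_sum x (subset_closure hx), one_smul]
    · exact (hF p).continuous.aestronglyMeasurable.sub
        ((hζ p).continuous.aestronglyMeasurable.smul hf.aestronglyMeasurable)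
  · refine le_trans (le_of_eq (setLIntegral_congr_fun hΩo.measurableSet fun x hx => ?_))
      ((lintegral_enorm_sum_sub_sum_le Finset.univ fun p _ => ?_).trans
        (sum_le_of_le_div_card_succ fun p => hFg p i))
    · have hζ_one : (fun y => ∑ p, ζ p y) =ᶠ[𝓝 x] 1 := by
        filter_upwards [hΩo.mem_nhds hx] with y hy using hζ_sum y (subset_closure hy)
      simp only [Finset.sum_add_distrib, ← Finset.sum_smul, hζ_sum x (subset_closure hx), one_smul,
        sum_fderiv_apply_eq_zero (fun p => (hζ p).differentiable (by simp) x) hζ_one, zero_smul,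
        add_zero, fderiv_fun_sum fun p _ => (hF p).differentiable one_ne_zero x, sum_apply]
    · exact (hdF p i).aestronglyMeasurable.sub
        (((hζ p).continuous.aestronglyMeasurable.smul (hg i).aestronglyMeasurable).add
          ((hdζ p i).aestronglyMeasurable.smul hf.aestronglyMeasurable))

end WeakDerivative

/-! ### Convergence in `L¹` -/

section TendstoInL1

variable {X E : Type*} [MeasurableSpace X] [NormedAddCommGroup E] {μ : Measure X}
  {f f' : ℕ → X → E} {g g' : X → E}

/-- Convergence of `f n` to `g` in `L¹(μ)`, without requiring either to be integrable. -/
def TendstoInL1 (μ : Measure X) (f : ℕ → X → E) (g : X → E) : Prop :=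
  Tendsto (fun n => ∫⁻ x, ‖f n x - g x‖ₑ ∂μ) atTop (𝓝 0)

lemma TendstoInL1.add (hf : TendstoInL1 μ f g) (hf' : TendstoInL1 μ f' g')
    (hfg : ∀ n, AEStronglyMeasurable (fun x => f n x - g x) μ) :
    TendstoInL1 μ (fun n x => f n x + f' n x) (fun x => g x + g' x) := by
  have hsum := Tendsto.add hf hf'
  rw [add_zero] at hsum
  refine tendsto_of_tendsto_of_tendsto_of_le_of_le tendsto_const_nhds hsum (fun _ => bot_le)
    fun n => ?_
  rw [← lintegral_add_left' (hfg n).enorm]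
  refine lintegral_mono fun x => ?_
  rw [add_sub_add_comm]
  exact enorm_add_le _ _

lemma TendstoInL1.continuousLinearMap_comp {F 𝕜 : Type*} [NormedAddCommGroup F]
    [NontriviallyNormedField 𝕜] [NormedSpace 𝕜 E] [NormedSpace 𝕜 F] (hf : TendstoInL1 μ f g)
    (L : E →L[𝕜] F) : TendstoInL1 μ (fun n x => L (f n x)) (fun x => L (g x)) := by
  have hL := ENNReal.Tendsto.const_mul hf (Or.inr (enorm_ne_top (x := L)))
  rw [mul_zero] at hL
  refine tendsto_of_tendsto_of_tendsto_of_le_of_le tendsto_const_nhds hL (fun _ => bot_le)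
    fun n => ?_
  rw [← lintegral_const_mul' _ _ enorm_ne_top]
  refine lintegral_mono fun x => ?_
  rw [← map_sub]
  exact L.le_opENorm _

section ContinuousLinearMap

variable {F 𝕜 : Type*} [NormedAddCommGroup F] [NontriviallyNormedField 𝕜] [NormedSpace 𝕜 E]
  [NormedSpace 𝕜 F] {T : ℕ → X → E →L[𝕜] F} {T' : X → E →L[𝕜] F} {M : ℕ → X → 𝕜} {N : X → 𝕜}
  {K : ℝ}

lemma tendstoInL1_clm_apply_of_norm_le (hg : Integrable g μ) (hTK : ∀ n, ∀ᵐ x ∂μ, ‖T n x‖ ≤ K)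
    (hT : ∀ n, AEStronglyMeasurable (T n) μ)
    (hTT' : ∀ᵐ x ∂μ, Tendsto (fun n => T n x) atTop (𝓝 (T' x))) :
    TendstoInL1 μ (fun n x => T n x (g x)) (fun x => T' x (g x)) := by
  have hT' : AEStronglyMeasurable T' μ := aestronglyMeasurable_of_tendsto_ae atTop hT hTT'
  have happly : ∀ {S : X → E →L[𝕜] F}, AEStronglyMeasurable S μ →
      AEStronglyMeasurable (fun x => S x (g x)) μ := fun hS =>
    (ContinuousLinearMap.id 𝕜 (E →L[𝕜] F)).aestronglyMeasurable_comp₂ hS hg.1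
  have hdom := tendsto_lintegral_of_dominated_convergence'
    (F := fun n x => ‖T n x (g x) - T' x (g x)‖ₑ) (f := fun _ => 0)
    (fun x => ENNReal.ofReal (2 * K) * ‖g x‖ₑ)
    (fun n => ((happly (hT n)).sub (happly hT')).enorm) (fun n => ?_) ?_ ?_
  · simpa only [TendstoInL1, lintegral_zero] using hdom
  · filter_upwards [hTT', ae_all_iff.2 hTK] with x hTT' hTK
    have hT'K : ‖T' x‖ ≤ K := le_of_tendsto hTT'.norm (Eventually.of_forall hTK)
    refine ((T n x - T' x).le_opENorm (g x)).trans ?_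
    rw [← ofReal_norm (T n x - T' x)]
    gcongr
    linarith [norm_sub_le (T n x) (T' x), hTK n]
  · rw [lintegral_const_mul' _ _ ENNReal.ofReal_ne_top]
    exact ENNReal.mul_ne_top ENNReal.ofReal_ne_top hg.2.ne
  · filter_upwards [hTT'] with x hTT'
    have hlim := ((ContinuousLinearMap.apply 𝕜 F (g x)).continuous.tendsto _).comp hTT'
    simpa using (hlim.sub_const (T' x (g x))).enorm

lemma TendstoInL1.clm_apply_of_norm_le (hf : TendstoInL1 μ f g)
    (hfm : ∀ n, AEStronglyMeasurable (f n) μ) (hg : Integrable g μ)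
    (hTK : ∀ n, ∀ᵐ x ∂μ, ‖T n x‖ ≤ K) (hT : ∀ n, AEStronglyMeasurable (T n) μ)
    (hTT' : ∀ᵐ x ∂μ, Tendsto (fun n => T n x) atTop (𝓝 (T' x))) :
    TendstoInL1 μ (fun n x => T n x (f n x)) (fun x => T' x (g x)) := by
  have hTf : TendstoInL1 μ (fun n x => T n x (f n x - g x)) fun _ => 0 := by
    have hK := ENNReal.Tendsto.const_mul hf (Or.inr (ENNReal.ofReal_ne_top (r := K)))
    rw [mul_zero] at hK
    refine tendsto_of_tendsto_of_tendsto_of_le_of_le tendsto_const_nhds hK (fun _ => bot_le)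
      fun n => ?_
    rw [← lintegral_const_mul' _ _ ENNReal.ofReal_ne_top]
    refine lintegral_mono_ae ?_
    filter_upwards [hTK n] with x hx
    rw [sub_zero]
    refine ((T n x).le_opENorm _).trans ?_
    rw [← ofReal_norm (T n x)]
    gcongr
  simpa only [map_sub, sub_add_cancel, zero_add] using
    hTf.add (tendstoInL1_clm_apply_of_norm_le hg hTK hT hTT') fun n => by
      simpa only [sub_zero] using!
        (ContinuousLinearMap.id 𝕜 (E →L[𝕜] F)).aestronglyMeasurable_comp₂ (hT n) ((hfm n).sub hg.1)

lemma TendstoInL1.smul_of_norm_le (hf : TendstoInL1 μ f g)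
    (hfm : ∀ n, AEStronglyMeasurable (f n) μ) (hg : Integrable g μ)
    (hMK : ∀ n, ∀ᵐ x ∂μ, ‖M n x‖ ≤ K) (hM : ∀ n, AEStronglyMeasurable (M n) μ)
    (hMN : ∀ᵐ x ∂μ, Tendsto (fun n => M n x) atTop (𝓝 (N x))) :
    TendstoInL1 μ (fun n x => M n x • f n x) (fun x => N x • g x) := by
  let L : 𝕜 →L[𝕜] E →L[𝕜] E := ContinuousLinearMap.lsmul 𝕜 𝕜
  exact hf.clm_apply_of_norm_le (T := fun n x => L (M n x)) (T' := fun x => L (N x)) hfm hg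
    (fun n => (hMK n).mono fun x hx => (ContinuousLinearMap.opNorm_lsmul_apply_le _).trans hx)
    (fun n => L.continuous.comp_aestronglyMeasurable (hM n))
    (hMN.mono fun x hx => (L.continuous.tendsto _).comp hx)

lemma tendstoInL1_smul_of_norm_le (hg : Integrable g μ) (hMK : ∀ n, ∀ᵐ x ∂μ, ‖M n x‖ ≤ K)
    (hM : ∀ n, AEStronglyMeasurable (M n) μ)
    (hMN : ∀ᵐ x ∂μ, Tendsto (fun n => M n x) atTop (𝓝 (N x))) :
    TendstoInL1 μ (fun n x => M n x • g x) (fun x => N x • g x) :=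
  TendstoInL1.smul_of_norm_le (by simp [TendstoInL1]) (fun _ => hg.1) hg hMK hM hMN

lemma tendstoInL1_of_norm_le [IsFiniteMeasure μ] (hMK : ∀ n, ∀ᵐ x ∂μ, ‖M n x‖ ≤ K)
    (hM : ∀ n, AEStronglyMeasurable (M n) μ)
    (hMN : ∀ᵐ x ∂μ, Tendsto (fun n => M n x) atTop (𝓝 (N x))) : TendstoInL1 μ M N := by
  simpa only [smul_eq_mul, mul_one] using
    tendstoInL1_smul_of_norm_le (integrable_const (1 : 𝕜)) hMK hM hMN

end ContinuousLinearMap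

lemma TendstoInL1.exists_seq_tendsto_ae (hf : TendstoInL1 μ f g)
    (hfm : ∀ n, AEStronglyMeasurable (f n) μ) (hg : AEStronglyMeasurable g μ) :
    ∃ ns : ℕ → ℕ, StrictMono ns ∧ ∀ᵐ x ∂μ, Tendsto (fun n => f (ns n) x) atTop (𝓝 (g x)) := by
  refine (tendstoInMeasure_of_tendsto_eLpNorm one_ne_zero hfm hg ?_).exists_seq_tendsto_ae
  simpa only [eLpNorm_one_eq_lintegral_enorm, Pi.sub_apply, TendstoInL1] using hf

lemma TendstoInL1.tendsto_integral_smul [NormedSpace ℝ E] [TopologicalSpace X]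
    [OpensMeasurableSpace X] (hfg : TendstoInL1 μ f g) (hf : ∀ n, Integrable (f n) μ)
    (hg : Integrable g μ) {φ : X → ℝ} (hφ : Continuous φ) (hφc : HasCompactSupport φ) :
    Tendsto (fun n => ∫ x, φ x • f n x ∂μ) atTop (𝓝 (∫ x, φ x • g x ∂μ)) := by
  obtain ⟨K, hK⟩ := hφc.exists_bound_of_continuous hφ
  have hφm : AEStronglyMeasurable φ μ :=
    (hφ.stronglyMeasurable_of_hasCompactSupport hφc).aestronglyMeasurable
  have hint : ∀ {h : X → E}, Integrable h μ → Integrable (fun x => φ x • h x) μ := fun hh =>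
    hh.bdd_smul K hφm (Eventually.of_forall hK)
  exact tendsto_integral_of_L1 _ (hint hg).1 (Eventually.of_forall fun n => hint (hf n))
    (hfg.smul_of_norm_le (M := fun _ => φ) (fun n => (hf n).1) hg
      (fun _ => Eventually.of_forall hK) (fun _ => hφm)
      (Eventually.of_forall fun _ => tendsto_const_nhds))

end TendstoInL1

section WeakDerivativeLimit

variable {V E : Type*} [NormedAddCommGroup V] [NormedSpace ℝ V] [MeasurableSpace V]
  [NormedAddCommGroup E] [NormedSpace ℝ E] {μ : Measure V} {Ω : Set V} {f g : V → E} {v : V}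

lemma HasWeakLineDeriv.mono (hfg : HasWeakLineDeriv μ Ω f g v) {A : Set V} (hA : A ⊆ Ω) :
    HasWeakLineDeriv μ A f g v := by
  intro φ hφ hφc hφA
  have hweak := hfg φ hφ hφc (hφA.trans hA)
  have hdφA := (tsupport_fderiv_apply_subset ℝ (f := φ) v).trans hφA
  have heq : ∀ {S : Set V}, A ⊆ S → ∀ {ψ : V → ℝ} {h : V → E}, tsupport ψ ⊆ A →
      ∫ x in S, ψ x • h x ∂μ = ∫ x, ψ x • h x ∂μ := fun hAS _ _ hψ =>
    setIntegral_eq_integral_of_forall_compl_eq_zero fun x hx => by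
      rw [image_eq_zero_of_notMem_tsupport fun hx' => hx (hAS (hψ hx')), zero_smul]
  rwa [heq hA hdφA, heq hA hφA, ← heq subset_rfl hdφA, ← heq subset_rfl hφA] at hweak

variable [BorelSpace V]

lemma HasWeakLineDeriv.of_tendstoInL1 {fn gn : ℕ → V → E}
    (hfgn : ∀ n, HasWeakLineDeriv μ Ω (fn n) (gn n) v)
    (hfn : TendstoInL1 (μ.restrict Ω) fn f) (hgn : TendstoInL1 (μ.restrict Ω) gn g)
    (hfni : ∀ n, IntegrableOn (fn n) Ω μ) (hgni : ∀ n, IntegrableOn (gn n) Ω μ)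
    (hf : IntegrableOn f Ω μ) (hg : IntegrableOn g Ω μ) : HasWeakLineDeriv μ Ω f g v := by
  intro φ hφ hφc hφΩ
  have hlim := hfn.tendsto_integral_smul hfni hf
    ((hφ.continuous_fderiv (by simp)).clm_apply continuous_const) (hφc.fderiv_apply (𝕜 := ℝ) v)
  simp only [fun n => hfgn n φ hφ hφc hφΩ] at hlim
  exact tendsto_nhds_unique hlim (hgn.tendsto_integral_smul hgni hg hφ.continuous hφc).neg

lemma HasWeakLineDeriv.ae_eq [FiniteDimensional ℝ V] [CompleteSpace E] (hΩ : IsOpen Ω)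
    (hfg : HasWeakLineDeriv μ Ω f g v) {g' : V → E} (hfg' : HasWeakLineDeriv μ Ω f g' v)
    (hg : IntegrableOn g Ω μ) (hg' : IntegrableOn g' Ω μ) : g =ᵐ[μ.restrict Ω] g' := by
  have hzero := hΩ.ae_eq_zero_of_integral_contDiff_smul_eq_zero (μ := μ)
    (f := fun x => g x - g' x) (hg.sub hg').locallyIntegrableOn fun φ hφ hφc hφΩ => ?_
  · filter_upwards [(ae_restrict_iff' hΩ.measurableSet).2 hzero] with x hx using sub_eq_zero.1 hx
  · rw [← setIntegral_eq_integral_of_forall_compl_eq_zero (s := Ω) fun x hx => by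
      rw [image_eq_zero_of_notMem_tsupport fun hx' => hx (hφΩ hx'), zero_smul]]
    simp only [smul_sub]
    rw [integral_sub (integrable_smul_of_hasCompactSupport hg hφ.continuous hφc)
      (integrable_smul_of_hasCompactSupport hg' hφ.continuous hφc), sub_eq_zero, ← neg_inj,
      ← hfg φ hφ hφc hφΩ, hfg' φ hφ hφc hφΩ]

end WeakDerivativeLimit

/-! ### Sphere-valued Sobolev maps in complex notation -/

/-- The partial derivative of `f` along the `j`-th coordinate. -/
abbrev partialDeriv {E : Type*} [NormedAddCommGroup E] [NormedSpace ℝ E] (j : Fin 2) (f : R2 → E)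
    (x : R2) : E :=
  fderiv ℝ f x (EuclideanSpace.single j 1)

lemma continuous_partialDeriv {E : Type*} [NormedAddCommGroup E] [NormedSpace ℝ E] {f : R2 → E}
    (hf : ContDiff ℝ 1 f) (j : Fin 2) : Continuous (partialDeriv j f) :=
  (hf.continuous_fderiv one_ne_zero).clm_apply continuous_const

lemma integrableOn_of_continuous {E : Type*} [NormedAddCommGroup E] {Ω : Set R2}
    (hΩb : Bornology.IsBounded Ω) {f : R2 → E} (hf : Continuous f) : IntegrableOn f Ω :=
  (hf.continuousOn.integrableOn_compact hΩb.isCompact_closure).mono_set subset_closure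

/-- The identification of `ℝ²` with `ℂ`, through which `S¹`-valued maps are multiplied. -/
def toC : R2 ≃ₗᵢ[ℝ] ℂ := Complex.orthonormalBasisOneI.repr.symm

lemma toC_apply (x : R2) : toC x = ⟨x 0, x 1⟩ := by
  apply toC.symm.injective
  rw [LinearIsometryEquiv.symm_apply_apply]
  ext i
  simp only [toC, LinearIsometryEquiv.symm_symm, Complex.orthonormalBasisOneI_repr_apply]
  fin_cases i <;> rfl

/-- The `j`-th column of a matrix field `G`, as a complex number: when `G` is the gradient of `u`,
this is the `j`-th partial derivative of `toC ∘ u`. -/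
def gradC (G : R2 → Matrix (Fin 2) (Fin 2) ℝ) (j : Fin 2) (x : R2) : ℂ := ⟨G x 0 j, G x 1 j⟩

section MemW11

variable {Ω : Set R2} {u : R2 → R2} {G : R2 → Matrix (Fin 2) (Fin 2) ℝ}

lemma MemW11.integrableOn_toC (hu : MemW11 Ω u G) : IntegrableOn (fun x => toC (u x)) Ω :=
  toC.toContinuousLinearEquiv.toContinuousLinearMap.integrable_comp hu.1

lemma MemW11.integrableOn_gradC (hu : MemW11 Ω u G) (j : Fin 2) : IntegrableOn (gradC G j) Ω := by
  refine ((hu.2.1 0 j).ofReal.add ((hu.2.1 1 j).ofReal.mul_const Complex.I)).congr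
    (Eventually.of_forall fun x => ?_)
  exact (Complex.mk_eq_add_mul_I _ _).symm

lemma MemW11.hasWeakLineDeriv (hu : MemW11 Ω u G) (j : Fin 2) :
    HasWeakLineDeriv volume Ω (fun x => toC (u x)) (gradC G j) (EuclideanSpace.single j 1) := by
  intro φ hφ hφc hφΩ
  have hdφ : Continuous (partialDeriv j φ) :=
    (hφ.continuous_fderiv (by simp)).clm_apply continuous_const
  have hui := integrable_smul_of_hasCompactSupport hu.integrableOn_toC hdφ
    (hφc.fderiv_apply (𝕜 := ℝ) _)
  have hGi := integrable_smul_of_hasCompactSupport (hu.integrableOn_gradC j) hφ.continuous hφc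
  have hweak := hu.2.2 φ hφ hφc hφΩ
  apply Complex.ext
  · rw [Complex.neg_re, ← Complex.reCLM_apply, ← Complex.reCLM_apply,
      ← Complex.reCLM.integral_comp_comm hui, ← Complex.reCLM.integral_comp_comm hGi]
    simpa only [Complex.reCLM_apply, Complex.smul_re, toC_apply, gradC, smul_eq_mul, mul_comm]
      using hweak 0 j
  · rw [Complex.neg_im, ← Complex.imCLM_apply, ← Complex.imCLM_apply,
      ← Complex.imCLM.integral_comp_comm hui, ← Complex.imCLM.integral_comp_comm hGi]
    simpa only [Complex.imCLM_apply, Complex.smul_im, toC_apply, gradC, smul_eq_mul, mul_comm]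
      using hweak 1 j

lemma SphereValued.norm_toC (hS : SphereValued Ω u) :
    ∀ᵐ x ∂(volume.restrict Ω), ‖toC (u x)‖ = 1 := by
  filter_upwards [hS] with x hx using (toC.norm_map (u x)).trans hx

theorem MemW11.exists_contDiff_tendsto (hΩo : IsOpen Ω) (hΩb : Bornology.IsBounded Ω)
    (hΩs : HasSegmentProperty Ω) (hu : MemW11 Ω u G) :
    ∃ F : ℕ → R2 → ℂ, (∀ n, ContDiff ℝ 1 (F n)) ∧
      (∀ j, TendstoInL1 (volume.restrict Ω) (fun n => partialDeriv j (F n)) (gradC G j)) ∧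
      ∀ᵐ x ∂(volume.restrict Ω), Tendsto (fun n => F n x) atTop (𝓝 (toC (u x))) := by
  choose F hF hFu hFG using fun n : ℕ => exists_contDiff_lintegral_enorm_sub_le hΩo hΩb hΩs
    hu.hasWeakLineDeriv hu.integrableOn_toC hu.integrableOn_gradC
    (ENNReal.inv_ne_zero.2 (ENNReal.natCast_ne_top n))
  have hlim : TendstoInL1 (volume.restrict Ω) F fun x => toC (u x) :=
    tendsto_of_tendsto_of_tendsto_of_le_of_le tendsto_const_nhds
      ENNReal.tendsto_inv_nat_nhds_zero (fun _ => bot_le) hFu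
  obtain ⟨ns, hns, hae⟩ := hlim.exists_seq_tendsto_ae
    (fun n => (hF n).continuous.aestronglyMeasurable) hu.integrableOn_toC.1
  refine ⟨fun n => F (ns n), fun n => hF _, fun j => ?_, hae⟩
  exact (tendsto_of_tendsto_of_tendsto_of_le_of_le tendsto_const_nhds
    ENNReal.tendsto_inv_nat_nhds_zero (fun _ => bot_le) fun n => hFG n j).comp hns.tendsto_atTop

end MemW11

lemma fderiv_conj_apply {V : Type*} [NormedAddCommGroup V] [NormedSpace ℝ V] {f : V → ℂ} {x : V}
    (hf : DifferentiableAt ℝ f x) (v : V) :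
    fderiv ℝ (fun y => conj (f y)) x v = conj (fderiv ℝ f x v) := by
  have hconj := (Complex.conjCLE.hasFDerivAt (x := f x)).comp x hf.hasFDerivAt
  rw [show fderiv ℝ (fun y => conj (f y)) x = _ from hconj.fderiv]
  rfl

lemma mul_conj_of_norm_eq_one {z : ℂ} (hz : ‖z‖ = 1) : z * conj z = 1 := by
  rw [Complex.mul_conj', hz, Complex.ofReal_one, one_pow]

/-- A smooth map of the plane into the closed unit disc which fixes the unit circle. -/
def foldDisc (z : ℂ) : ℂ := 2 * z * (1 + z * conj z)⁻¹

/-- The Wirtinger derivative `∂/∂z` of `foldDisc`. -/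
def foldDiscDz (z : ℂ) : ℂ := 2 * ((1 + z * conj z)⁻¹) ^ 2

/-- The Wirtinger derivative `∂/∂z̄` of `foldDisc`. -/
def foldDiscDzbar (z : ℂ) : ℂ := -2 * z ^ 2 * ((1 + z * conj z)⁻¹) ^ 2

lemma one_add_mul_conj (z : ℂ) : 1 + z * conj z = ((1 + ‖z‖ ^ 2 : ℝ) : ℂ) := by
  rw [Complex.mul_conj']
  push_cast
  rfl

lemma one_add_mul_conj_ne_zero (z : ℂ) : 1 + z * conj z ≠ 0 := by
  rw [one_add_mul_conj, Complex.ofReal_ne_zero]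
  positivity

lemma norm_inv_one_add_mul_conj (z : ℂ) : ‖(1 + z * conj z)⁻¹‖ = (1 + ‖z‖ ^ 2)⁻¹ := by
  rw [one_add_mul_conj, norm_inv, Complex.norm_real, Real.norm_of_nonneg (by positivity)]

lemma norm_foldDisc_le (z : ℂ) : ‖foldDisc z‖ ≤ 1 := by
  rw [foldDisc, norm_mul, norm_inv_one_add_mul_conj, norm_mul, Complex.norm_ofNat,
    ← div_eq_mul_inv, div_le_one (by positivity)]
  nlinarith [sq_nonneg (‖z‖ - 1)]

lemma norm_foldDiscDz_le (z : ℂ) : ‖foldDiscDz z‖ ≤ 2 := by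
  rw [foldDiscDz, norm_mul, norm_pow, norm_inv_one_add_mul_conj, Complex.norm_ofNat]
  have hinv : (1 + ‖z‖ ^ 2)⁻¹ ^ 2 ≤ 1 :=
    pow_le_one₀ (by positivity) (inv_le_one_of_one_le₀ (by nlinarith [sq_nonneg ‖z‖]))
  linarith

lemma norm_foldDiscDzbar_le (z : ℂ) : ‖foldDiscDzbar z‖ ≤ 2 := by
  rw [foldDiscDzbar, norm_mul, norm_mul, norm_neg, norm_pow, norm_pow, norm_inv_one_add_mul_conj,
    Complex.norm_ofNat, mul_assoc, ← mul_pow, ← div_eq_mul_inv]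
  have hdiv : (‖z‖ / (1 + ‖z‖ ^ 2)) ^ 2 ≤ 1 := by
    refine pow_le_one₀ (by positivity) ((div_le_one (by positivity)).2 ?_)
    nlinarith [sq_nonneg (‖z‖ - 1)]
  linarith

lemma continuous_inv_one_add_mul_conj : Continuous fun z : ℂ => (1 + z * conj z)⁻¹ :=
  Continuous.inv₀ (by fun_prop) one_add_mul_conj_ne_zero

lemma continuous_foldDiscDz : Continuous foldDiscDz :=
  continuous_const.mul (continuous_inv_one_add_mul_conj.pow 2)

lemma continuous_foldDiscDzbar : Continuous foldDiscDzbar :=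
  (continuous_const.mul (continuous_pow 2)).mul (continuous_inv_one_add_mul_conj.pow 2)

lemma contDiff_foldDisc : ContDiff ℝ 1 foldDisc :=
  (contDiff_const.mul contDiff_id).mul
    ((contDiff_const.add (contDiff_id.mul Complex.conjCLE.contDiff)).inv one_add_mul_conj_ne_zero)

lemma hasFDerivAt_foldDisc (z : ℂ) :
    HasFDerivAt foldDisc (foldDiscDz z • (1 : ℂ →L[ℝ] ℂ) +
      foldDiscDzbar z • (Complex.conjCLE : ℂ →L[ℝ] ℂ)) z := by
  have hden := one_add_mul_conj_ne_zero z
  have hconj : HasFDerivAt (fun z : ℂ => conj z) (Complex.conjCLE : ℂ →L[ℝ] ℂ) z :=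
    Complex.conjCLE.hasFDerivAt
  have hinv := (hasDerivAt_inv hden).complexToReal_fderiv.comp z
    (((hasFDerivAt_id z).mul hconj).const_add 1)
  refine (((hasFDerivAt_id z).const_mul (2 : ℂ)).mul hinv).congr_fderiv ?_
  refine ContinuousLinearMap.ext fun w => ?_
  simp only [id_eq, ContinuousLinearMap.comp_add, ContinuousLinearMap.smul_comp, neg_smul,
    smul_add, smul_neg, Pi.mul_apply, Function.comp_apply, add_apply, neg_apply, smul_apply,
    ContinuousLinearMap.comp_apply, ContinuousLinearEquiv.coe_coe,
    ContinuousAlgEquiv.coeCLE_apply, Complex.conjCAE_apply, smul_eq_mul, one_apply_eq_self,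
    ContinuousLinearMap.id_apply, foldDiscDz, inv_pow, foldDiscDzbar, neg_mul]
  field_simp
  ring

lemma foldDisc_of_norm_eq_one {z : ℂ} (hz : ‖z‖ = 1) : foldDisc z = z := by
  rw [foldDisc, mul_conj_of_norm_eq_one hz]
  ring

lemma foldDiscDz_of_norm_eq_one {z : ℂ} (hz : ‖z‖ = 1) : foldDiscDz z = 1 / 2 := by
  rw [foldDiscDz, mul_conj_of_norm_eq_one hz]
  norm_num

lemma foldDiscDzbar_of_norm_eq_one {z : ℂ} (hz : ‖z‖ = 1) : foldDiscDzbar z = -z ^ 2 / 2 := by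
  rw [foldDiscDzbar, mul_conj_of_norm_eq_one hz]
  ring

section FoldedApproximation

variable {Ω : Set R2} {u : R2 → R2} {G : R2 → Matrix (Fin 2) (Fin 2) ℝ} {F : ℕ → R2 → ℂ}

lemma tendstoInL1_partialDeriv_foldDisc (hu : MemW11 Ω u G) (hS : SphereValued Ω u)
    (hF : ∀ n, ContDiff ℝ 1 (F n))
    (hFu : ∀ᵐ x ∂(volume.restrict Ω), Tendsto (fun n => F n x) atTop (𝓝 (toC (u x)))) {j : Fin 2}
    (hFG : TendstoInL1 (volume.restrict Ω) (fun n => partialDeriv j (F n)) (gradC G j)) :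
    TendstoInL1 (volume.restrict Ω) (fun n => partialDeriv j fun x => foldDisc (F n x))
      fun x => (1 / 2 : ℂ) * gradC G j x + -toC (u x) ^ 2 / 2 * conj (gradC G j x) := by
  have hdFm : ∀ n, AEStronglyMeasurable (partialDeriv j (F n)) (volume.restrict Ω) := fun n =>
    (continuous_partialDeriv (hF n) j).aestronglyMeasurable
  have hlim : ∀ {D : ℂ → ℂ}, Continuous D → ∀ᵐ x ∂(volume.restrict Ω),
      Tendsto (fun n => D (F n x)) atTop (𝓝 (D (toC (u x)))) := fun hD => by
    filter_upwards [hFu] with x hx using (hD.tendsto _).comp hx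
  have hDz : TendstoInL1 (volume.restrict Ω)
      (fun n x => foldDiscDz (F n x) • partialDeriv j (F n) x)
      fun x => (1 / 2 : ℂ) • gradC G j x := by
    refine hFG.smul_of_norm_le hdFm (hu.integrableOn_gradC j)
      (fun n => Eventually.of_forall fun x => norm_foldDiscDz_le _)
      (fun n => (continuous_foldDiscDz.comp (hF n).continuous).aestronglyMeasurable) ?_
    filter_upwards [hlim continuous_foldDiscDz, hS.norm_toC] with x hx hux
    rwa [foldDiscDz_of_norm_eq_one hux] at hx
  have hDzbar : TendstoInL1 (volume.restrict Ω)
      (fun n x => foldDiscDzbar (F n x) • Complex.conjLIE (partialDeriv j (F n) x))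
      fun x => (-toC (u x) ^ 2 / 2) • Complex.conjLIE (gradC G j x) := by
    refine (hFG.continuousLinearMap_comp
      Complex.conjLIE.toLinearIsometry.toContinuousLinearMap).smul_of_norm_le
      (fun n => Complex.continuous_conj.comp_aestronglyMeasurable (hdFm n))
      (Complex.conjCLE.toContinuousLinearMap.integrable_comp (hu.integrableOn_gradC j))
      (fun n => Eventually.of_forall fun x => norm_foldDiscDzbar_le _)
      (fun n => (continuous_foldDiscDzbar.comp (hF n).continuous).aestronglyMeasurable) ?_
    filter_upwards [hlim continuous_foldDiscDzbar, hS.norm_toC] with x hx hux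
    rwa [foldDiscDzbar_of_norm_eq_one hux] at hx
  refine (hDz.add hDzbar fun n => ?_).congr fun n => lintegral_congr fun x => ?_
  · exact (((continuous_foldDiscDz.comp (hF n).continuous).aestronglyMeasurable).smul
      (hdFm n)).sub ((hu.integrableOn_gradC j).1.const_smul (1 / 2 : ℂ))
  · have hchain := (hasFDerivAt_foldDisc (F n x)).comp x
      ((hF n).differentiable one_ne_zero x).hasFDerivAt
    change _ = ‖fderiv ℝ (fun x => foldDisc (F n x)) x _ - _‖ₑ
    rw [show fderiv ℝ (fun x => foldDisc (F n x)) x = _ from hchain.fderiv]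
    rfl

/-- Folding into the disc turns `∂ⱼu` into its component tangential to the circle; weak
derivatives being unique, the radial component vanishes. -/
theorem MemW11.gradC_ae_eq_tangential (hΩo : IsOpen Ω) (hΩb : Bornology.IsBounded Ω)
    (hΩs : HasSegmentProperty Ω) (hu : MemW11 Ω u G) (hS : SphereValued Ω u) (j : Fin 2) :
    ∀ᵐ x ∂(volume.restrict Ω),
      gradC G j x = (1 / 2 : ℂ) * gradC G j x + -toC (u x) ^ 2 / 2 * conj (gradC G j x) := by
  have : IsFiniteMeasure (volume.restrict Ω) :=
    isFiniteMeasure_restrict.2 hΩb.measure_lt_top.ne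
  obtain ⟨F, hF, hFG, hFu⟩ := hu.exists_contDiff_tendsto hΩo hΩb hΩs
  have hV : ∀ n, ContDiff ℝ 1 fun x => foldDisc (F n x) := fun n => contDiff_foldDisc.comp (hF n)
  have hVu : TendstoInL1 (volume.restrict Ω) (fun n x => foldDisc (F n x)) fun x => toC (u x) := by
    refine tendstoInL1_of_norm_le (fun n => Eventually.of_forall fun x => norm_foldDisc_le _)
      (fun n => (hV n).continuous.aestronglyMeasurable) ?_
    filter_upwards [hFu, hS.norm_toC] with x hx hux
    have hfold := (contDiff_foldDisc.continuous.tendsto _).comp hx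
    rwa [foldDisc_of_norm_eq_one hux] at hfold
  have hint : IntegrableOn (fun x => (1 / 2 : ℂ) * gradC G j x +
      -toC (u x) ^ 2 / 2 * conj (gradC G j x)) Ω := by
    refine ((hu.integrableOn_gradC j).const_mul _).add (Integrable.bdd_mul (c := 1)
      (Complex.conjCLE.toContinuousLinearMap.integrable_comp (hu.integrableOn_gradC j))
      ((hu.integrableOn_toC.1.pow 2).neg.mul_const (2 : ℂ)⁻¹) ?_)
    filter_upwards [hS.norm_toC] with x hx
    rw [norm_div, norm_neg, norm_pow, hx]
    norm_num
  exact (hu.hasWeakLineDeriv j).ae_eq hΩo (.of_tendstoInL1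
    (fun n => .of_contDiffOn hΩo (hV n).contDiffOn _) hVu
    (tendstoInL1_partialDeriv_foldDisc hu hS hF hFu (hFG j))
    (fun n => integrableOn_of_continuous hΩb (hV n).continuous)
    (fun n => integrableOn_of_continuous hΩb (continuous_partialDeriv (hV n) j))
    hu.integrableOn_toC hint) (hu.integrableOn_gradC j) hint

theorem MemW11.gradC_ae_eq_neg_sq_mul_conj (hΩo : IsOpen Ω) (hΩb : Bornology.IsBounded Ω)
    (hΩs : HasSegmentProperty Ω) (hu : MemW11 Ω u G) (hS : SphereValued Ω u) (j : Fin 2) :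
    ∀ᵐ x ∂(volume.restrict Ω), gradC G j x = -toC (u x) ^ 2 * conj (gradC G j x) := by
  filter_upwards [hu.gradC_ae_eq_tangential hΩo hΩb hΩs hS j] with x hx
  linear_combination 2 * hx

theorem MemW11.exists_contDiff_norm_le_one_tendsto (hΩo : IsOpen Ω) (hΩb : Bornology.IsBounded Ω)
    (hΩs : HasSegmentProperty Ω) (hu : MemW11 Ω u G) (hS : SphereValued Ω u) :
    ∃ U : ℕ → R2 → ℂ, (∀ n, ContDiff ℝ 1 (U n)) ∧ (∀ n x, ‖U n x‖ ≤ 1) ∧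
      (∀ j, TendstoInL1 (volume.restrict Ω) (fun n => partialDeriv j (U n)) (gradC G j)) ∧
      ∀ᵐ x ∂(volume.restrict Ω), Tendsto (fun n => U n x) atTop (𝓝 (toC (u x))) := by
  obtain ⟨F, hF, hFG, hFu⟩ := hu.exists_contDiff_tendsto hΩo hΩb hΩs
  refine ⟨fun n x => foldDisc (F n x), fun n => contDiff_foldDisc.comp (hF n),
    fun n x => norm_foldDisc_le _, fun j => ?_, ?_⟩
  · refine (tendstoInL1_partialDeriv_foldDisc hu hS hF hFu (hFG j)).congr fun n =>
      lintegral_congr_ae ?_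
    filter_upwards [hu.gradC_ae_eq_tangential hΩo hΩb hΩs hS j] with x hx
    rw [← hx]
  · filter_upwards [hFu, hS.norm_toC] with x hx hux
    have hfold := (contDiff_foldDisc.continuous.tendsto _).comp hx
    rwa [foldDisc_of_norm_eq_one hux] at hfold

end FoldedApproximation

/-! ### Lower semicontinuity of the `L¹` norm and the lower bound -/

section LowerSemicontinuity

variable {V E : Type*} [NormedAddCommGroup V] [NormedSpace ℝ V] [FiniteDimensional ℝ V]
  [MeasurableSpace V] [BorelSpace V] [NormedAddCommGroup E] [NormedSpace ℝ E]
  {μ : Measure V} [μ.IsAddHaarMeasure] {A : Set V} {W : ℕ → V → E} {W₀ : V → E}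

lemma lintegral_enorm_convolution_indicator_le_liminf (hA : MeasurableSet A)
    (hW : ∀ k, AEStronglyMeasurable (W k) (μ.restrict A))
    (hlim : ∀ φ : V → ℝ, ContDiff ℝ (⊤ : ℕ∞) φ → HasCompactSupport φ → tsupport φ ⊆ A →
      Tendsto (fun k => ∫ x in A, φ x • W k x ∂μ) atTop (𝓝 (∫ x in A, φ x • W₀ x ∂μ)))
    (ψ : ContDiffBump (0 : V)) {S : Set V} (hS : MeasurableSet S)
    (hSA : ∀ x ∈ S, closedBall x ψ.rOut ⊆ A) :
    ∫⁻ x in S, ‖(ψ.normed μ ⋆[ContinuousLinearMap.lsmul ℝ ℝ, μ] A.indicator W₀) x‖ₑ ∂μ ≤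
      liminf (fun k => ∫⁻ x in A, ‖W k x‖ₑ ∂μ) atTop := by
  have hmeas : ∀ k, AEMeasurable (Function.uncurry fun x y => ‖ψ.normed μ (x - y)‖ₑ * ‖W k y‖ₑ)
      ((μ.restrict S).prod (μ.restrict A)) := fun k =>
    AEMeasurable.mul (ψ.continuous_normed.comp (continuous_fst.sub
      continuous_snd)).enorm.measurable.aemeasurable (hW k).comp_snd.enorm
  have hmass : ∀ y, ∫⁻ x in S, ‖ψ.normed μ (x - y)‖ₑ ∂μ ≤ 1 := fun y => by
    refine (setLIntegral_le_lintegral S _).trans_eq ?_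
    rw [lintegral_sub_right_eq_self (fun x => ‖ψ.normed μ x‖ₑ) y]
    simp_rw [← ofReal_norm, Real.norm_of_nonneg (ψ.nonneg_normed _)]
    rw [← ofReal_integral_eq_lintegral_ofReal ψ.integrable_normed
      (Eventually.of_forall ψ.nonneg_normed), ψ.integral_normed, ENNReal.ofReal_one]
  have hpointwise : ∀ x ∈ S,
      ‖(ψ.normed μ ⋆[ContinuousLinearMap.lsmul ℝ ℝ, μ] A.indicator W₀) x‖ₑ ≤
        liminf (fun k => ∫⁻ y in A, ‖ψ.normed μ (x - y)‖ₑ * ‖W k y‖ₑ ∂μ) atTop := fun x hx => by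
    have hsupp : tsupport (fun y => ψ.normed μ (x - y)) ⊆ closedBall x ψ.rOut := fun y hy => by
      have hxy := tsupport_comp_subset_preimage (ψ.normed μ)
        (f := fun y => x - y) (by fun_prop) hy
      rw [mem_preimage, ψ.tsupport_normed_eq, mem_closedBall_zero_iff] at hxy
      rwa [mem_closedBall_iff_norm']
    have := FiniteDimensional.proper ℝ V
    have hconv := (hlim _ (ψ.contDiff_normed.comp (contDiff_const.sub (g := fun y => y)
      contDiff_id))
      (.of_support_subset_isCompact (isCompact_closedBall x ψ.rOut)
        ((subset_tsupport _).trans hsupp)) (hsupp.trans (hSA x hx))).enorm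
    simp only [Function.comp_def] at hconv
    rw [convolution_lsmul_indicator hA, ← hconv.liminf_eq]
    refine liminf_le_liminf (Eventually.of_forall fun k => ?_)
    simpa only [enorm_smul] using enorm_integral_le_lintegral_enorm
      (μ := μ.restrict A) fun y => ψ.normed μ (x - y) • W k y
  calc ∫⁻ x in S, ‖(ψ.normed μ ⋆[ContinuousLinearMap.lsmul ℝ ℝ, μ] A.indicator W₀) x‖ₑ ∂μ
      ≤ ∫⁻ x in S, liminf (fun k => ∫⁻ y in A, ‖ψ.normed μ (x - y)‖ₑ * ‖W k y‖ₑ ∂μ) atTop ∂μ :=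
        setLIntegral_mono' hS hpointwise
    _ ≤ liminf (fun k => ∫⁻ x in S, ∫⁻ y in A, ‖ψ.normed μ (x - y)‖ₑ * ‖W k y‖ₑ ∂μ ∂μ) atTop :=
        lintegral_liminf_le' fun k => (hmeas k).lintegral_prod_right'
    _ ≤ liminf (fun k => ∫⁻ x in A, ‖W k x‖ₑ ∂μ) atTop := by
        refine liminf_le_liminf (Eventually.of_forall fun k => ?_)
        rw [lintegral_lintegral_swap (hmeas k)]
        refine lintegral_mono fun y => ?_
        rw [lintegral_mul_const' _ _ enorm_ne_top]
        exact mul_le_of_le_one_left' (hmass y)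

theorem lintegral_enorm_le_liminf_of_tendsto_integral_smul [CompleteSpace E] (hA : IsOpen A)
    (hW : ∀ k, AEStronglyMeasurable (W k) (μ.restrict A)) (hW₀ : IntegrableOn W₀ A μ)
    (hlim : ∀ φ : V → ℝ, ContDiff ℝ (⊤ : ℕ∞) φ → HasCompactSupport φ → tsupport φ ⊆ A →
      Tendsto (fun k => ∫ x in A, φ x • W k x ∂μ) atTop (𝓝 (∫ x in A, φ x • W₀ x ∂μ))) :
    ∫⁻ x in A, ‖W₀ x‖ₑ ∂μ ≤ liminf (fun k => ∫⁻ x in A, ‖W k x‖ₑ ∂μ) atTop := by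
  refine ENNReal.le_of_forall_pos_le_add fun ε hε _ => ?_
  have hint : Integrable (A.indicator W₀) μ := (integrable_indicator_iff hA.measurableSet).2 hW₀
  obtain ⟨δ, hδ, hconv⟩ := exists_radius_convolution_normed_sub_le hint
    (ENNReal.coe_ne_zero.2 hε.ne')
  let ν := (μ.restrict A).withDensity fun x => ‖W₀ x‖ₑ
  have : IsFiniteMeasure ν := isFiniteMeasure_withDensity hW₀.2.ne
  have hν : ∀ K ⊆ A, MeasurableSet K → ν K = ∫⁻ x in K, ‖W₀ x‖ₑ ∂μ := fun K hKA hK => by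
    rw [withDensity_apply _ hK, Measure.restrict_restrict hK, inter_eq_left.2 hKA]
  rw [← hν A subset_rfl hA.measurableSet, hA.measure_eq_iSup_isCompact]
  refine iSup₂_le fun K hKA => iSup_le fun hK => ?_
  obtain ⟨ρ, hρ, hρA⟩ := hK.exists_cthickening_subset_open hA hKA
  have hmin : 0 < min (δ / 2) ρ := lt_min (half_pos hδ) hρ
  let ψ : ContDiffBump (0 : V) :=
    ⟨min (δ / 2) ρ / 2, min (δ / 2) ρ, half_pos hmin, half_lt_self hmin⟩
  let Wψ : V → E := ψ.normed μ ⋆[ContinuousLinearMap.lsmul ℝ ℝ, μ] A.indicator W₀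
  have hψδ : closedBall (0 : V) ψ.rOut ⊆ ball 0 δ :=
    closedBall_subset_ball ((min_le_left _ _).trans_lt (half_lt_self hδ))
  have hWψ : Continuous Wψ := ψ.hasCompactSupport_normed.continuous_convolution_left _
    ψ.continuous_normed hint.locallyIntegrable
  calc ν K = ∫⁻ x in K, ‖A.indicator W₀ x‖ₑ ∂μ := by
        rw [hν K hKA hK.measurableSet]
        exact setLIntegral_congr_fun hK.measurableSet fun x hx => by
          rw [indicator_of_mem (hKA hx)]
    _ ≤ ∫⁻ x in K, ‖Wψ x‖ₑ + ‖Wψ x - A.indicator W₀ x‖ₑ ∂μ := by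
        refine lintegral_mono fun x => ?_
        simpa only [sub_sub_cancel] using enorm_sub_le (a := Wψ x) (b := Wψ x - A.indicator W₀ x)
    _ = ∫⁻ x in K, ‖Wψ x‖ₑ ∂μ + ∫⁻ x in K, ‖Wψ x - A.indicator W₀ x‖ₑ ∂μ :=
        lintegral_add_left hWψ.enorm.measurable _
    _ ≤ _ := add_le_add (lintegral_enorm_convolution_indicator_le_liminf hA.measurableSet hW hlim ψ
          hK.measurableSet fun x hx => (closedBall_subset_cthickening hx _).trans
            ((cthickening_mono (min_le_right _ _) K).trans hρA))
          ((setLIntegral_le_lintegral K _).trans (hconv 0 ψ hψδ))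

end LowerSemicontinuity

lemma HasWeakLineDeriv.tendsto_integral_smul {V E : Type*} [NormedAddCommGroup V] [NormedSpace ℝ V]
    [MeasurableSpace V] [BorelSpace V] [NormedAddCommGroup E] [NormedSpace ℝ E] {μ : Measure V}
    {A : Set V} {f g : V → E} {v : V} {fn gn : ℕ → V → E} (hfg : HasWeakLineDeriv μ A f g v)
    (hfgn : ∀ n, HasWeakLineDeriv μ A (fn n) (gn n) v) (hfn : TendstoInL1 (μ.restrict A) fn f)
    (hfni : ∀ n, IntegrableOn (fn n) A μ) (hf : IntegrableOn f A μ) {φ : V → ℝ}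
    (hφ : ContDiff ℝ (⊤ : ℕ∞) φ) (hφc : HasCompactSupport φ) (hφA : tsupport φ ⊆ A) :
    Tendsto (fun n => ∫ x in A, φ x • gn n x ∂μ) atTop (𝓝 (∫ x in A, φ x • g x ∂μ)) := by
  have hlim := hfn.tendsto_integral_smul hfni hf
    ((hφ.continuous_fderiv (by simp)).clm_apply continuous_const) (hφc.fderiv_apply (𝕜 := ℝ) v)
  simp only [hfg φ hφ hφc hφA, fun n => hfgn n φ hφ hφc hφA] at hlim
  simpa only [neg_neg] using hlim.neg

section LowerBound

variable {Ω A : Set R2} {u : R2 → R2} {G : R2 → Matrix (Fin 2) (Fin 2) ℝ}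

lemma partialDeriv_toC {v : R2 → R2} {x : R2} (hv : DifferentiableAt ℝ v x) (j : Fin 2) :
    partialDeriv j (fun y => toC (v y)) x = toC (partialDeriv j v x) := by
  have hchain := (toC.toContinuousLinearEquiv.hasFDerivAt (x := v x)).comp x hv.hasFDerivAt
  rw [partialDeriv, show fderiv ℝ (fun y => toC (v y)) x = _ from hchain.fderiv]
  rfl

lemma sum_jacobianMatrix_sq {v : R2 → R2} {x : R2} (hv : DifferentiableAt ℝ v x) :
    ∑ i, ∑ j, (jacobianMatrix v x i j) ^ 2 =
      ‖partialDeriv 0 (fun y => toC (v y)) x‖ ^ 2 +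
        ‖partialDeriv 1 (fun y => toC (v y)) x‖ ^ 2 := by
  rw [partialDeriv_toC hv, partialDeriv_toC hv]
  simp only [jacobianMatrix, Matrix.of_apply, Fin.sum_univ_two, LinearIsometryEquiv.norm_map,
    EuclideanSpace.norm_sq_eq, Real.norm_eq_abs, sq_abs]
  ring

lemma det_jacobianMatrix {v : R2 → R2} {x : R2} (hv : DifferentiableAt ℝ v x) :
    (jacobianMatrix v x).det = (conj (partialDeriv 0 (fun y => toC (v y)) x) *
      partialDeriv 1 (fun y => toC (v y)) x).im := by
  rw [partialDeriv_toC hv, partialDeriv_toC hv, Matrix.det_fin_two, toC_apply, toC_apply]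
  simp only [jacobianMatrix, Matrix.of_apply, Complex.mul_im, Complex.conj_re, Complex.conj_im]
  ring

/-- The area integrand of a map with partial derivatives `p`, `q` and vanishing Jacobian. -/
def areaDensity (p q : ℂ) : ℝ := Real.sqrt (1 + ‖p‖ ^ 2 + ‖q‖ ^ 2)

lemma lintegral_areaDensity_le_classicalArea (hA : IsOpen A) {v : R2 → R2}
    (hv : ContDiffOn ℝ 1 v A) :
    ∫⁻ x in A, ENNReal.ofReal (areaDensity (partialDeriv 0 (fun y => toC (v y)) x)
      (partialDeriv 1 (fun y => toC (v y)) x)) ≤ classicalArea A v := by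
  refine setLIntegral_mono' hA.measurableSet fun x hx =>
    ENNReal.ofReal_le_ofReal (Real.sqrt_le_sqrt ?_)
  rw [sum_jacobianMatrix_sq ((hv.contDiffAt (hA.mem_nhds hx)).differentiableAt one_ne_zero)]
  linarith [sq_nonneg (jacobianMatrix v x).det]

/-- The vector `(1, p, q)`, whose norm is the area integrand. -/
def graphVec (p q : ℂ) : EuclideanSpace ℂ (Fin 3) := WithLp.toLp 2 ![1, p, q]

lemma enorm_graphVec (p q : ℂ) : ‖graphVec p q‖ₑ = ENNReal.ofReal (areaDensity p q) := by
  rw [← ofReal_norm, EuclideanSpace.norm_eq]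
  simp only [graphVec, Fin.sum_univ_three, areaDensity, Matrix.cons_val_zero, Matrix.cons_val_one,
    Matrix.cons_val, norm_one, one_pow]

lemma integral_smul_graphVec {X : Type*} [MeasurableSpace X] {μ : Measure X} {φ : X → ℝ}
    {p q : X → ℂ} (hφ : Integrable φ μ) (hp : Integrable (fun x => φ x • p x) μ)
    (hq : Integrable (fun x => φ x • q x) μ) :
    ∫ x, φ x • graphVec (p x) (q x) ∂μ =
      WithLp.toLp 2 ![((∫ x, φ x ∂μ : ℝ) : ℂ), ∫ x, φ x • p x ∂μ, ∫ x, φ x • q x ∂μ] := by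
  have hint : ∀ i, Integrable (fun x => (φ x • graphVec (p x) (q x)) i) μ := by
    intro i
    fin_cases i
    · simpa [graphVec] using! hφ.ofReal (𝕜 := ℂ)
    · simpa [graphVec] using hp
    · simpa [graphVec] using hq
  ext i
  rw [eval_integral_piLp hint]
  fin_cases i <;> simp [graphVec, integral_complex_ofReal]

lemma tendsto_integral_smul_graphVec {X : Type*} [MeasurableSpace X] {μ : Measure X} {φ : X → ℝ}
    {p q : ℕ → X → ℂ} {p₀ q₀ : X → ℂ} (hφ : Integrable φ μ)
    (hp : ∀ k, Integrable (fun x => φ x • p k x) μ) (hq : ∀ k, Integrable (fun x => φ x • q k x) μ)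
    (hp₀ : Integrable (fun x => φ x • p₀ x) μ) (hq₀ : Integrable (fun x => φ x • q₀ x) μ)
    (hpp₀ : Tendsto (fun k => ∫ x, φ x • p k x ∂μ) atTop (𝓝 (∫ x, φ x • p₀ x ∂μ)))
    (hqq₀ : Tendsto (fun k => ∫ x, φ x • q k x ∂μ) atTop (𝓝 (∫ x, φ x • q₀ x ∂μ))) :
    Tendsto (fun k => ∫ x, φ x • graphVec (p k x) (q k x) ∂μ) atTop
      (𝓝 (∫ x, φ x • graphVec (p₀ x) (q₀ x) ∂μ)) := by
  rw [integral_smul_graphVec hφ hp₀ hq₀]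
  simp only [fun k => integral_smul_graphVec hφ (hp k) (hq k)]
  refine ((PiLp.continuous_toLp 2 _).tendsto _).comp (tendsto_pi_nhds.2 fun i => ?_)
  fin_cases i
  exacts [tendsto_const_nhds, hpp₀, hqq₀]

lemma continuous_graphVec : Continuous fun p : ℂ × ℂ => graphVec p.1 p.2 :=
  (PiLp.continuous_toLp 2 _).comp (by fun_prop)

lemma tendstoInL1_toC_comp {v : ℕ → R2 → R2} (hvi : ∀ k, IntegrableOn (fun x => v k x - u x) A)
    (hvu : Tendsto (fun k => ∫ x in A, ‖v k x - u x‖) atTop (𝓝 0)) :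
    TendstoInL1 (volume.restrict A) (fun k x => toC (v k x)) fun x => toC (u x) := by
  refine TendstoInL1.continuousLinearMap_comp (f := v) (g := u) ?_
    toC.toLinearIsometry.toContinuousLinearMap
  simpa only [TendstoInL1, ofReal_integral_norm_eq_lintegral_enorm (hvi _), ENNReal.ofReal_zero]
    using ENNReal.tendsto_ofReal hvu

/-- Weak convergence of the gradients is enough: the Jacobian term of the area is discarded. -/
theorem MemW11.lintegral_areaDensity_le_relaxedArea (hu : MemW11 Ω u G) (hA : IsOpen A)
    (hAΩ : A ⊆ Ω) (hAb : Bornology.IsBounded A) :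
    ∫⁻ x in A, ENNReal.ofReal (areaDensity (gradC G 0 x) (gradC G 1 x)) ≤ relaxedArea u A := by
  refine le_sInf ?_
  rintro _ ⟨v, hv, hvi, hvu, rfl⟩
  have : IsFiniteMeasure (volume.restrict A) :=
    isFiniteMeasure_restrict.2 hAb.measure_lt_top.ne
  let F : ℕ → R2 → ℂ := fun k x => toC (v k x)
  have hF : ∀ k, ContDiffOn ℝ 1 (F k) A := fun k =>
    toC.toContinuousLinearEquiv.contDiff.comp_contDiffOn (hv k)
  have hdF : ∀ k j, ContinuousOn (partialDeriv j (F k)) A := fun k j =>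
    ((hF k).continuousOn_fderiv_of_isOpen hA le_rfl).clm_apply continuousOn_const
  have hui : IntegrableOn (fun x => toC (u x)) A := hu.integrableOn_toC.mono_set hAΩ
  have hGi : ∀ j, IntegrableOn (gradC G j) A := fun j => (hu.integrableOn_gradC j).mono_set hAΩ
  have hFi : ∀ k, IntegrableOn (F k) A := fun k => by
    have hsum := (toC.toContinuousLinearEquiv.toContinuousLinearMap.integrable_comp (hvi k)).add hui
    exact hsum.congr (Eventually.of_forall fun x => by simp [F])
  have hweak : ∀ φ : R2 → ℝ, ContDiff ℝ (⊤ : ℕ∞) φ → HasCompactSupport φ → tsupport φ ⊆ A → ∀ j,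
      Tendsto (fun k => ∫ x in A, φ x • partialDeriv j (F k) x) atTop
        (𝓝 (∫ x in A, φ x • gradC G j x)) := fun φ hφ hφc hφA j =>
    ((hu.hasWeakLineDeriv j).mono hAΩ).tendsto_integral_smul
      (fun k => .of_contDiffOn hA (hF k) _) (tendstoInL1_toC_comp hvi hvu) hFi hui hφ hφc hφA
  calc ∫⁻ x in A, ENNReal.ofReal (areaDensity (gradC G 0 x) (gradC G 1 x))
      = ∫⁻ x in A, ‖graphVec (gradC G 0 x) (gradC G 1 x)‖ₑ := by simp only [enorm_graphVec]
    _ ≤ liminf (fun k => ∫⁻ x in A,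
          ‖graphVec (partialDeriv 0 (F k) x) (partialDeriv 1 (F k) x)‖ₑ) atTop := by
        refine lintegral_enorm_le_liminf_of_tendsto_integral_smul hA (fun k =>
          (continuous_graphVec.comp_continuousOn
            ((hdF k 0).prodMk (hdF k 1))).aestronglyMeasurable hA.measurableSet) ?_
          fun φ hφ hφc hφA => ?_
        · refine Integrable.of_eval_piLp fun i => ?_
          fin_cases i
          exacts [integrable_const _, hGi 0, hGi 1]
        have hφi : IntegrableOn φ A :=
          (hφ.continuous.integrable_of_hasCompactSupport hφc).integrableOn
        have hφF := fun k j => (integrable_smul_of_tsupport_subset (μ := volume) hφ.continuous hφc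
          hφA (hdF k j)).integrableOn (s := A)
        have hφG := fun j => integrable_smul_of_hasCompactSupport (hGi j) hφ.continuous hφc
        exact tendsto_integral_smul_graphVec hφi (fun k => hφF k 0) (fun k => hφF k 1) (hφG 0)
          (hφG 1) (hweak φ hφ hφc hφA 0) (hweak φ hφ hφc hφA 1)
    _ ≤ liminf (fun k => classicalArea A (v k)) atTop :=
        liminf_le_liminf (Eventually.of_forall fun k => by
          simpa only [enorm_graphVec] using lintegral_areaDensity_le_classicalArea hA (hv k))

end LowerBound

/-! ### The unit twist -/

section UnitTwist

variable {a g p : ℂ}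

/-- A circle-valued map on the closed unit disc, which tends to the identity on the circle minus a
point as `a` tends to that point. It turns disc-valued approximations of a circle-valued map into
circle-valued ones. -/
def unitTwist (a g : ℂ) : ℂ := -(a / ‖a‖) * ((1 - conj a * g) / conj (1 - conj a * g))

/-- The logarithmic derivative of `unitTwist a` at `g` in the direction `p`. -/
def twistLogDeriv (a g p : ℂ) : ℂ :=
  conj (conj a / (1 - conj a * g) * p) - conj a / (1 - conj a * g) * p

lemma one_sub_norm_le_norm_one_sub_conj_mul (hg : ‖g‖ ≤ 1) : 1 - ‖a‖ ≤ ‖1 - conj a * g‖ := by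
  have hmul : ‖conj a * g‖ ≤ ‖a‖ := by
    rw [norm_mul, Complex.norm_conj]
    exact mul_le_of_le_one_right (norm_nonneg a) hg
  have htri := norm_sub_norm_le 1 (conj a * g)
  rw [norm_one] at htri
  linarith

lemma one_sub_conj_mul_ne_zero (ha : ‖a‖ < 1) (hg : ‖g‖ ≤ 1) : 1 - conj a * g ≠ 0 :=
  norm_pos_iff.1 ((sub_pos.2 ha).trans_le (one_sub_norm_le_norm_one_sub_conj_mul hg))

lemma norm_unitTwist (ha : a ≠ 0) (ha1 : ‖a‖ < 1) (hg : ‖g‖ ≤ 1) : ‖unitTwist a g‖ = 1 := by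
  have hne := norm_ne_zero_iff.2 (one_sub_conj_mul_ne_zero ha1 hg)
  rw [unitTwist, norm_mul, norm_neg, norm_div, norm_div, Complex.norm_conj, div_self hne,
    Complex.norm_real, norm_norm, div_self (norm_ne_zero_iff.2 ha), one_mul]

lemma contDiffAt_unitTwist (ha : ‖a‖ < 1) (hg : ‖g‖ ≤ 1) : ContDiffAt ℝ 1 (unitTwist a) g := by
  have hconj : ContDiff ℝ 1 fun z : ℂ => conj z := Complex.conjCLE.contDiff
  have hden : ContDiff ℝ 1 fun z : ℂ => 1 - conj a * z := by fun_prop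
  unfold unitTwist
  simp only [div_eq_mul_inv]
  exact contDiffAt_const.mul (hden.contDiffAt.mul ((hconj.comp hden).contDiffAt.inv
    ((map_ne_zero _).2 (one_sub_conj_mul_ne_zero ha hg))))

lemma fderiv_unitTwist (ha : ‖a‖ < 1) (hg : ‖g‖ ≤ 1) (p : ℂ) :
    fderiv ℝ (unitTwist a) g p = unitTwist a g * twistLogDeriv a g p := by
  have hne := one_sub_conj_mul_ne_zero ha hg
  have hne' : conj (1 - conj a * g) ≠ 0 := (map_ne_zero _).2 hne
  have hden : HasDerivAt (fun t : ℝ => 1 - conj a * (g + t • p)) (-(conj a * p)) 0 := by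
    simpa using! (((hasDerivAt_id (0 : ℝ)).smul_const p).const_add g).const_mul (conj a)
      |>.const_sub 1
  have hline : HasDerivAt (fun t : ℝ => unitTwist a (g + t • p))
      (unitTwist a g * twistLogDeriv a g p) 0 := by
    have h0 : g + (0 : ℝ) • p = g := by rw [zero_smul, add_zero]
    refine ((hden.div hden.star ?_).const_mul (-(a / ‖a‖))).congr_deriv ?_
    · rwa [h0]
    · simp only [h0, unitTwist, twistLogDeriv, ← starRingEnd_apply, map_mul, map_div₀,
        Complex.conj_conj, map_neg]
      field_simp
      ring
  rw [← ((contDiffAt_unitTwist ha hg).differentiableAt one_ne_zero).lineDeriv_eq_fderiv]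
  exact hline.deriv

lemma norm_one_sub_conj_mul_of_norm_eq_one (hg : ‖g‖ = 1) : ‖1 - conj a * g‖ = ‖g - a‖ := by
  rw [← Complex.norm_conj, ← mul_one ‖conj (1 - conj a * g)‖, ← hg, ← norm_mul]
  congr 1
  simp only [map_sub, map_one, map_mul, Complex.conj_conj]
  linear_combination -a * mul_conj_of_norm_eq_one hg

lemma poissonKernel_zero_nonneg (ha : ‖a‖ < 1) (hg : ‖g‖ = 1) : 0 ≤ poissonKernel 0 a g := by
  rw [poissonKernel_def, sub_zero, sub_zero, hg]
  exact div_nonneg (by nlinarith [norm_nonneg a]) (sq_nonneg _)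

lemma conj_add_self_eq_poissonKernel_sub_one (ha : ‖a‖ < 1) (hg : ‖g‖ = 1) :
    conj (conj a * g / (1 - conj a * g)) + conj a * g / (1 - conj a * g) =
      ((poissonKernel 0 a g - 1 : ℝ) : ℂ) := by
  have hne := one_sub_conj_mul_ne_zero ha hg.le
  have hne' : conj (1 - conj a * g) ≠ 0 := (map_ne_zero _).2 hne
  have hden : (‖g - a‖ : ℂ) ^ 2 = (1 - conj a * g) * conj (1 - conj a * g) := by
    rw [Complex.mul_conj, Complex.normSq_eq_norm_sq, norm_one_sub_conj_mul_of_norm_eq_one hg,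
      Complex.ofReal_pow]
  have hnum : (‖a‖ : ℂ) ^ 2 = a * conj a := by
    rw [Complex.mul_conj, Complex.normSq_eq_norm_sq, Complex.ofReal_pow]
  rw [poissonKernel_def, sub_zero, sub_zero, hg]
  push_cast
  rw [hden, hnum, map_div₀, div_add_div _ _ hne' hne, mul_comm (1 - conj a * g),
    div_sub_one (mul_ne_zero hne' hne)]
  congr 1
  simp only [map_sub, map_one, map_mul, Complex.conj_conj]
  linear_combination -(a * conj a) * mul_conj_of_norm_eq_one hg

lemma norm_twistLogDeriv_le (ha : ‖a‖ < 1) (hg : ‖g‖ = 1) (hp : p * conj g + g * conj p = 0) :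
    ‖twistLogDeriv a g p‖ ≤ ‖p‖ * (1 + poissonKernel 0 a g) := by
  have hgg := mul_conj_of_norm_eq_one hg
  have hreal : twistLogDeriv a g p = -(p * conj g) * ((poissonKernel 0 a g - 1 : ℝ) : ℂ) := by
    rw [← conj_add_self_eq_poissonKernel_sub_one ha hg]
    have hlin : conj a / (1 - conj a * g) * p =
        p * conj g * (conj a * g / (1 - conj a * g)) := by
      linear_combination -(conj a / (1 - conj a * g) * p) * hgg
    rw [twistLogDeriv, hlin, map_mul, map_mul, Complex.conj_conj]
    linear_combination conj (conj a * g / (1 - conj a * g)) * hp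
  have hP := poissonKernel_zero_nonneg ha hg
  rw [hreal, norm_mul, norm_neg, norm_mul, Complex.norm_conj, hg, mul_one, Complex.norm_real,
    Real.norm_eq_abs]
  gcongr
  exact abs_le.2 ⟨by linarith, by linarith⟩

lemma unitTwist_sub_self (ha : a ≠ 0) (ha1 : ‖a‖ < 1) (hg : ‖g‖ = 1) :
    unitTwist a g - g = (1 - ‖a‖) * (-(a / ‖a‖) - g) / conj (1 - conj a * g) := by
  have hne' : conj (1 - conj a * g) ≠ 0 :=
    (map_ne_zero _).2 (one_sub_conj_mul_ne_zero ha1 hg.le)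
  have hn : (‖a‖ : ℂ) ≠ 0 := Complex.ofReal_ne_zero.2 (norm_ne_zero_iff.2 ha)
  have hphase : a / ‖a‖ * conj a = ‖a‖ := by
    rw [div_mul_eq_mul_div, Complex.mul_conj, Complex.normSq_eq_norm_sq, Complex.ofReal_pow, sq,
      mul_div_cancel_right₀ _ hn]
  have hmul : (‖a‖ : ℂ) * (a / ‖a‖) = a := mul_div_cancel₀ a hn
  rw [unitTwist, eq_div_iff hne', sub_mul, mul_assoc, div_mul_cancel₀ _ hne']
  simp only [map_sub, map_one, map_mul, Complex.conj_conj]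
  linear_combination a * mul_conj_of_norm_eq_one hg + g * hphase - hmul

lemma norm_unitTwist_sub_self_le (ha : a ≠ 0) (ha1 : ‖a‖ < 1) (hg : ‖g‖ = 1) :
    ‖unitTwist a g - g‖ ≤ √(1 - ‖a‖) * (1 + poissonKernel 0 a g) := by
  have hphase : ‖-(a / ‖a‖) - g‖ ≤ 2 := by
    refine (norm_sub_le _ _).trans ?_
    rw [norm_neg, norm_div, Complex.norm_real, norm_norm, div_self (norm_ne_zero_iff.2 ha), hg]
    norm_num
  have hfactor : ‖(1 - ‖a‖ : ℂ)‖ = 1 - ‖a‖ := by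
    rw [← Complex.ofReal_one, ← Complex.ofReal_sub, Complex.norm_real,
      Real.norm_of_nonneg (sub_pos.2 ha1).le]
  have ht := norm_pos_iff.2 (one_sub_conj_mul_ne_zero ha1 hg.le)
  rw [unitTwist_sub_self ha ha1 hg, norm_div, norm_mul, hfactor, Complex.norm_conj,
    norm_one_sub_conj_mul_of_norm_eq_one hg, poissonKernel_def, sub_zero, sub_zero, hg]
  rw [norm_one_sub_conj_mul_of_norm_eq_one hg] at ht
  obtain ⟨s, hs, hsa⟩ : ∃ s : ℝ, 0 ≤ s ∧ ‖a‖ = 1 - s ^ 2 :=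
    ⟨√(1 - ‖a‖), Real.sqrt_nonneg _, by rw [Real.sq_sqrt (sub_pos.2 ha1).le]; ring⟩
  have : 0 ≤ 1 - ‖a‖ := (sub_pos.2 ha1).le
  refine (show _ ≤ (1 - ‖a‖) * 2 / ‖g - a‖ by gcongr).trans ?_
  rw [hsa, sub_sub_cancel, Real.sqrt_sq hs]
  have hgap : s * (1 + (1 ^ 2 - (1 - s ^ 2) ^ 2) / ‖g - a‖ ^ 2) - s ^ 2 * 2 / ‖g - a‖ =
      s * ((‖g - a‖ - s) ^ 2 + s ^ 2 * (1 - s ^ 2)) / ‖g - a‖ ^ 2 := by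
    field_simp
    ring
  have hgap0 : 0 ≤ s * ((‖g - a‖ - s) ^ 2 + s ^ 2 * (1 - s ^ 2)) / ‖g - a‖ ^ 2 := by
    have : 0 ≤ 1 - s ^ 2 := hsa ▸ norm_nonneg a
    positivity
  linarith

end UnitTwist

section PoissonAveraging

/-- In its interior variable the Poisson kernel is harmonic, hence has mean value `1`. -/
lemma circleAverage_poissonKernel {ρ : ℝ} (h0 : 0 ≤ ρ) (h1 : ρ < 1) {g : ℂ} (hg : ‖g‖ = 1) :
    Real.circleAverage (fun a => poissonKernel 0 a g) 0 ρ = 1 := by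
  have hharm : InnerProductSpace.HarmonicOnNhd (fun a => poissonKernel 0 a g)
      (closedBall 0 |ρ|) := by
    intro a ha
    have hne : g - a ≠ 0 := by
      rw [mem_closedBall_zero_iff, abs_of_nonneg h0] at ha
      exact norm_pos_iff.1 ((sub_pos.2 (ha.trans_lt h1)).trans_le (hg ▸ norm_sub_norm_le g a))
    have han : AnalyticAt ℂ (fun a => (g + a) / (g - a)) a := by fun_prop (disch := assumption)
    simpa [poissonKernel_eq_re_herglotzRieszKernel, herglotzRieszKernel_def] using
      han.harmonicAt_re
  rw [hharm.circleAverage_eq, poissonKernel_def, sub_self, norm_zero, sub_zero, hg]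
  norm_num [hg]

lemma measurable_poissonKernel_zero : Measurable fun w : ℂ × ℂ => poissonKernel 0 w.1 w.2 := by
  unfold poissonKernel
  fun_prop

lemma lintegral_poissonKernel_circleMap {ρ : ℝ} (h0 : 0 ≤ ρ) (h1 : ρ < 1) {g : ℂ}
    (hg : ‖g‖ = 1) :
    ∫⁻ θ in Ioc 0 (2 * Real.pi), ENNReal.ofReal (poissonKernel 0 (circleMap 0 ρ θ) g) =
      ENNReal.ofReal (2 * Real.pi) := by
  have hnorm : ∀ θ, ‖circleMap 0 ρ θ‖ < 1 := fun θ => by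
    rwa [norm_circleMap_zero, abs_of_nonneg h0]
  have hcont : Continuous fun θ => poissonKernel 0 (circleMap 0 ρ θ) g := by
    unfold poissonKernel
    refine Continuous.div (by fun_prop) (by fun_prop) fun θ => pow_ne_zero 2 ?_
    rw [sub_zero, sub_zero, ← norm_one_sub_conj_mul_of_norm_eq_one hg]
    exact norm_ne_zero_iff.2 (one_sub_conj_mul_ne_zero (hnorm θ) hg.le)
  have havg := circleAverage_poissonKernel h0 h1 hg
  rw [Real.circleAverage_def, smul_eq_mul, inv_mul_eq_one₀ Real.two_pi_pos.ne',
    intervalIntegral.integral_of_le Real.two_pi_pos.le] at havg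
  rw [← ofReal_integral_eq_lintegral_ofReal hcont.integrableOn_Ioc
    (Eventually.of_forall fun θ => poissonKernel_zero_nonneg (hnorm θ) hg), ← havg]

variable {X : Type*} [MeasurableSpace X] {μ : Measure X} {g : X → ℂ}

lemma exists_norm_eq_lintegral_poissonKernel_mul_le [SFinite μ] (hg : AEMeasurable g μ)
    (hg1 : ∀ᵐ x ∂μ, ‖g x‖ = 1) {q : X → ℝ≥0∞} (hq : AEMeasurable q μ) {ρ : ℝ} (h0 : 0 ≤ ρ)
    (h1 : ρ < 1) :
    ∃ a : ℂ, ‖a‖ = ρ ∧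
      ∫⁻ x, ENNReal.ofReal (poissonKernel 0 a (g x)) * q x ∂μ ≤ ∫⁻ x, q x ∂μ := by
  let ν : Measure ℝ := volume.restrict (Ioc 0 (2 * Real.pi))
  have hνu : ν univ = ENNReal.ofReal (2 * Real.pi) := by simp [ν]
  have hpi : ENNReal.ofReal (2 * Real.pi) ≠ 0 := (ENNReal.ofReal_pos.2 Real.two_pi_pos).ne'
  have hmeas : AEMeasurable (Function.uncurry fun (θ : ℝ) (x : X) =>
      ENNReal.ofReal (poissonKernel 0 (circleMap 0 ρ θ) (g x)) * q x) (ν.prod μ) :=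
    (measurable_poissonKernel_zero.comp_aemeasurable
      (((continuous_circleMap 0 ρ).measurable.comp measurable_fst).aemeasurable.prodMk
        hg.comp_snd)).ennreal_ofReal.mul hq.comp_snd
  have hinner : ∫⁻ θ, ∫⁻ x, ENNReal.ofReal (poissonKernel 0 (circleMap 0 ρ θ) (g x)) * q x ∂μ ∂ν =
      ENNReal.ofReal (2 * Real.pi) * ∫⁻ x, q x ∂μ := by
    rw [lintegral_lintegral_swap hmeas, ← lintegral_const_mul' _ _ ENNReal.ofReal_ne_top]
    refine lintegral_congr_ae (hg1.mono fun x hx => ?_)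
    beta_reduce
    rw [lintegral_mul_const, lintegral_poissonKernel_circleMap h0 h1 hx]
    exact (measurable_poissonKernel_zero.comp ((continuous_circleMap 0 ρ).measurable.prodMk
      measurable_const)).ennreal_ofReal
  obtain ⟨θ, hθ⟩ := exists_le_laverage (μ := ν) (fun h => hpi (by rw [← hνu, h]; rfl))
    hmeas.lintegral_prod_right'
  refine ⟨circleMap 0 ρ θ, by rw [norm_circleMap_zero, abs_of_nonneg h0], hθ.trans_eq ?_⟩
  rw [laverage_eq]
  simp only [Function.uncurry_apply_pair]
  rw [hinner, hνu, mul_comm, ENNReal.mul_div_cancel_right hpi ENNReal.ofReal_ne_top]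

end PoissonAveraging

section TwistedApproximation

variable {X ι : Type*} [Fintype ι] [MeasurableSpace X] {μ : Measure X} {g : X → ℂ}
  {D : ι → X → ℂ}

lemma enorm_twistLogDeriv_le {a g p : ℂ} (ha : ‖a‖ < 1) (hg : ‖g‖ = 1)
    (hp : p * conj g + g * conj p = 0) :
    ‖twistLogDeriv a g p‖ₑ ≤ (1 + ENNReal.ofReal (poissonKernel 0 a g)) * ‖p‖ₑ := by
  have hP := poissonKernel_zero_nonneg ha hg
  rw [← ENNReal.ofReal_one, ← ENNReal.ofReal_add zero_le_one hP, ← ofReal_norm, ← ofReal_norm,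
    ← ENNReal.ofReal_mul (by linarith), mul_comm]
  exact ENNReal.ofReal_le_ofReal (norm_twistLogDeriv_le ha hg hp)

lemma enorm_unitTwist_sub_self_le {a g : ℂ} (ha : a ≠ 0) (ha1 : ‖a‖ < 1) (hg : ‖g‖ = 1) :
    ‖unitTwist a g - g‖ₑ ≤
      ENNReal.ofReal √(1 - ‖a‖) * (1 + ENNReal.ofReal (poissonKernel 0 a g)) := by
  have hP := poissonKernel_zero_nonneg ha1 hg
  rw [← ENNReal.ofReal_one, ← ENNReal.ofReal_add zero_le_one hP, ← ofReal_norm,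
    ← ENNReal.ofReal_mul (Real.sqrt_nonneg _)]
  exact ENNReal.ofReal_le_ofReal (norm_unitTwist_sub_self_le ha ha1 hg)

lemma exists_norm_eq_lintegral_one_add_poissonKernel_mul_le [SFinite μ] (hg : AEMeasurable g μ)
    (hg1 : ∀ᵐ x ∂μ, ‖g x‖ = 1) {q : X → ℝ≥0∞} (hq : AEMeasurable q μ) {ρ : ℝ} (h0 : 0 ≤ ρ)
    (h1 : ρ < 1) :
    ∃ a : ℂ, ‖a‖ = ρ ∧
      ∫⁻ x, (1 + ENNReal.ofReal (poissonKernel 0 a (g x))) * q x ∂μ ≤ 2 * ∫⁻ x, q x ∂μ := by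
  obtain ⟨a, ha, haq⟩ := exists_norm_eq_lintegral_poissonKernel_mul_le hg hg1 hq h0 h1
  refine ⟨a, ha, ?_⟩
  simp only [add_mul, one_mul]
  rw [lintegral_add_left' hq, two_mul]
  gcongr

lemma lintegral_enorm_unitTwist_sub_self_le (hg1 : ∀ᵐ x ∂μ, ‖g x‖ = 1) {a : ℂ} (ha : a ≠ 0)
    (ha1 : ‖a‖ < 1) {q : X → ℝ≥0∞} {c : ℝ≥0∞} (hc : c ≠ 0) (hc' : c ≠ ⊤) (hcq : ∀ x, c ≤ q x) :
    ∫⁻ x, ‖unitTwist a (g x) - g x‖ₑ ∂μ ≤ ENNReal.ofReal √(1 - ‖a‖) *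
      (c⁻¹ * ∫⁻ x, (1 + ENNReal.ofReal (poissonKernel 0 a (g x))) * q x ∂μ) := by
  rw [← lintegral_const_mul' _ _ (ENNReal.inv_ne_top.2 hc),
    ← lintegral_const_mul' _ _ ENNReal.ofReal_ne_top]
  refine lintegral_mono_ae (hg1.mono fun x hx => ?_)
  refine (enorm_unitTwist_sub_self_le ha ha1 hx).trans ?_
  rw [mul_left_comm c⁻¹]
  gcongr
  refine le_mul_of_one_le_right' ?_
  rw [← ENNReal.inv_mul_cancel hc hc']
  gcongr
  exact hcq x

/-- The Poisson kernels of a circle `‖a‖ = ρ` average to `1`, so some `a` is good for the weight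
`c + ∑ ‖D j‖`; the constant `c` controls the distance to `g`, which is small as `ρ → 1`. -/
theorem exists_lintegral_enorm_unitTwist_sub_le [IsFiniteMeasure μ] (hg : AEMeasurable g μ)
    (hg1 : ∀ᵐ x ∂μ, ‖g x‖ = 1) (hD : ∀ j, Integrable (D j) μ)
    (hDg : ∀ j, ∀ᵐ x ∂μ, D j x * conj (g x) + g x * conj (D j x) = 0) {ε : ℝ≥0∞} (hε : ε ≠ 0)
    (hε' : ε ≠ ⊤) :
    ∃ a : ℂ, a ≠ 0 ∧ ‖a‖ < 1 ∧ ∫⁻ x, ‖unitTwist a (g x) - g x‖ₑ ∂μ ≤ ε ∧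
      ∫⁻ x, ∑ j, ‖twistLogDeriv a (g x) (D j x)‖ₑ ∂μ ≤ 2 * ∫⁻ x, ∑ j, ‖D j x‖ₑ ∂μ + ε := by
  have hDm : AEMeasurable (fun x => ∑ j, ‖D j x‖ₑ) μ :=
    Finset.aemeasurable_fun_sum _ fun j _ => (hD j).1.enorm
  have hD' : ∫⁻ x, ∑ j, ‖D j x‖ₑ ∂μ ≠ ⊤ := by
    rw [lintegral_finsetSum' _ fun j _ => (hD j).1.enorm]
    exact ENNReal.sum_ne_top.2 fun j _ => (hD j).2.ne
  set I := ∫⁻ x, ∑ j, ‖D j x‖ₑ ∂μ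
  obtain ⟨c, hc, hcε⟩ := ENNReal.exists_nnreal_pos_mul_lt (a := 2 * μ univ) (by finiteness) hε
  have hc0 : (c : ℝ≥0∞) ≠ 0 := ENNReal.coe_ne_zero.2 hc.ne'
  obtain ⟨s, hs, hsε⟩ := ENNReal.exists_nnreal_pos_mul_lt
    (a := (c : ℝ≥0∞)⁻¹ * (2 * I + ε)) (by finiteness) hε
  obtain ⟨r, hr, hrs, hr1⟩ : ∃ r : ℝ≥0, 0 < r ∧ r ≤ s ∧ r < 1 :=
    ⟨min s (1 / 2), lt_min hs (by norm_num), min_le_left _ _,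
      (min_le_right _ _).trans_lt (by norm_num)⟩
  have hr0 : 0 < (r : ℝ) ^ 2 := pow_pos hr 2
  have hr2 : (r : ℝ) ^ 2 < 1 := pow_lt_one₀ r.2 hr1 two_ne_zero
  obtain ⟨a, ha, hq⟩ := exists_norm_eq_lintegral_one_add_poissonKernel_mul_le hg hg1
    (hDm.add_const (c : ℝ≥0∞)) (sub_pos.2 hr2).le (sub_lt_self _ hr0)
  have ha0 : a ≠ 0 := norm_pos_iff.1 (by linarith)
  have ha1 : ‖a‖ < 1 := by linarith
  rw [lintegral_add_left' hDm, lintegral_const, mul_add, mul_left_comm] at hq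
  replace hq := hq.trans (add_le_add_right hcε.le _)
  refine ⟨a, ha0, ha1, ?_, (lintegral_mono_ae ?_).trans hq⟩
  · refine (lintegral_enorm_unitTwist_sub_self_le (q := fun x => ∑ j, ‖D j x‖ₑ + c) hg1 ha0 ha1 hc0
      ENNReal.coe_ne_top (fun _ => le_add_self)).trans (le_trans ?_ hsε.le)
    rw [ha, sub_sub_cancel, Real.sqrt_sq r.coe_nonneg, ENNReal.ofReal_coe_nnreal]
    gcongr
  · filter_upwards [hg1, ae_all_iff.2 hDg] with x hx hDx
    rw [mul_add, Finset.mul_sum]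
    exact (Finset.sum_le_sum fun j _ => enorm_twistLogDeriv_le ha1 hx (hDx j)).trans le_self_add

end TwistedApproximation
section TwistedConvergence

variable {X : Type*} [MeasurableSpace X] {μ : Measure X} {U : ℕ → X → ℂ} {g : X → ℂ} {a : ℂ}

lemma aestronglyMeasurable_unitTwist_comp (hg : AEStronglyMeasurable g μ) (a : ℂ) :
    AEStronglyMeasurable (fun x => unitTwist a (g x)) μ := by
  have := Complex.continuous_conj.measurable
  have := hg.aemeasurable
  unfold unitTwist
  exact AEMeasurable.aestronglyMeasurable (by fun_prop)

lemma aestronglyMeasurable_twistLogDeriv_comp {p : X → ℂ} (hg : AEStronglyMeasurable g μ)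
    (hp : AEStronglyMeasurable p μ) (a : ℂ) :
    AEStronglyMeasurable (fun x => twistLogDeriv a (g x) (p x)) μ := by
  have := Complex.continuous_conj.measurable
  have := hg.aemeasurable
  have := hp.aemeasurable
  unfold twistLogDeriv
  exact AEMeasurable.aestronglyMeasurable (by fun_prop)

lemma tendstoInL1_unitTwist [IsFiniteMeasure μ] (ha : a ≠ 0) (ha1 : ‖a‖ < 1)
    (hU : ∀ n, AEStronglyMeasurable (U n) μ) (hU1 : ∀ n, ∀ᵐ x ∂μ, ‖U n x‖ ≤ 1)
    (hUg : ∀ᵐ x ∂μ, Tendsto (fun n => U n x) atTop (𝓝 (g x))) :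
    TendstoInL1 μ (fun n x => unitTwist a (U n x)) fun x => unitTwist a (g x) := by
  refine tendstoInL1_of_norm_le (K := 1)
    (fun n => (hU1 n).mono fun x hx => (norm_unitTwist ha ha1 hx).le)
    (fun n => aestronglyMeasurable_unitTwist_comp (hU n) a) ?_
  filter_upwards [hUg, ae_all_iff.2 hU1] with x hxg hx1
  have hg1 : ‖g x‖ ≤ 1 := le_of_tendsto hxg.norm (Eventually.of_forall hx1)
  exact (contDiffAt_unitTwist ha1 hg1).continuousAt.tendsto.comp hxg

lemma tendstoInL1_twistLogDeriv {P : ℕ → X → ℂ} {D : X → ℂ} (ha1 : ‖a‖ < 1)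
    (hU : ∀ n, AEStronglyMeasurable (U n) μ) (hU1 : ∀ n, ∀ᵐ x ∂μ, ‖U n x‖ ≤ 1)
    (hUg : ∀ᵐ x ∂μ, Tendsto (fun n => U n x) atTop (𝓝 (g x)))
    (hP : ∀ n, AEStronglyMeasurable (P n) μ) (hD : Integrable D μ) (hPD : TendstoInL1 μ P D) :
    TendstoInL1 μ (fun n x => twistLogDeriv a (U n x) (P n x))
      fun x => twistLogDeriv a (g x) (D x) := by
  refine (hPD.smul_of_norm_le (M := fun n x => conj a / (1 - conj a * U n x))
    (N := fun x => conj a / (1 - conj a * g x)) (K := ‖a‖ / (1 - ‖a‖)) hP hD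
    (fun n => (hU1 n).mono fun x hx => ?_) (fun n => ?_) ?_).continuousLinearMap_comp
      (Complex.conjCLE.toContinuousLinearMap - ContinuousLinearMap.id ℝ ℂ)
  · rw [norm_div, Complex.norm_conj]
    have := sub_pos.2 ha1
    gcongr
    exact one_sub_norm_le_norm_one_sub_conj_mul hx
  · have hUn := (hU n).aemeasurable
    exact AEMeasurable.aestronglyMeasurable (by fun_prop)
  · filter_upwards [hUg, ae_all_iff.2 hU1] with x hxg hx1
    have hg1 : ‖g x‖ ≤ 1 := le_of_tendsto hxg.norm (Eventually.of_forall hx1)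
    exact tendsto_const_nhds.div ((hxg.const_mul _).const_sub 1) (one_sub_conj_mul_ne_zero ha1 hg1)

lemma lintegral_sum_enorm_le_add {ι E : Type*} [Fintype ι] [NormedAddCommGroup E] {f g : ι → X → E}
    (hfg : ∀ j, AEStronglyMeasurable (fun x => f j x - g j x) μ) :
    ∫⁻ x, ∑ j, ‖f j x‖ₑ ∂μ ≤ ∫⁻ x, ∑ j, ‖g j x‖ₑ ∂μ + ∑ j, ∫⁻ x, ‖f j x - g j x‖ₑ ∂μ := by
  have hm := fun j => (hfg j).enorm
  rw [← lintegral_finsetSum' _ fun j _ => hm j,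
    ← lintegral_add_right' _ (Finset.aemeasurable_fun_sum _ fun j _ => hm j)]
  refine lintegral_mono fun x => ?_
  rw [← Finset.sum_add_distrib]
  gcongr with j
  simpa only [add_sub_cancel] using enorm_add_le (g j x) (f j x - g j x)

theorem exists_lintegral_enorm_unitTwist_seq_sub_le {ι : Type*} [Fintype ι] [IsFiniteMeasure μ]
    {P : ι → ℕ → X → ℂ} {D : ι → X → ℂ} (hU : ∀ n, AEStronglyMeasurable (U n) μ)
    (hU1 : ∀ n, ∀ᵐ x ∂μ, ‖U n x‖ ≤ 1) (hUg : ∀ᵐ x ∂μ, Tendsto (fun n => U n x) atTop (𝓝 (g x)))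
    (hg1 : ∀ᵐ x ∂μ, ‖g x‖ = 1) (hP : ∀ j n, AEStronglyMeasurable (P j n) μ)
    (hD : ∀ j, Integrable (D j) μ) (hPD : ∀ j, TendstoInL1 μ (P j) (D j))
    (hDg : ∀ j, ∀ᵐ x ∂μ, D j x * conj (g x) + g x * conj (D j x) = 0) {ε : ℝ≥0∞} (hε : ε ≠ 0)
    (hε' : ε ≠ ⊤) :
    ∃ a : ℂ, a ≠ 0 ∧ ‖a‖ < 1 ∧ ∃ n, ∫⁻ x, ‖unitTwist a (U n x) - g x‖ₑ ∂μ ≤ ε ∧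
      ∫⁻ x, ∑ j, ‖twistLogDeriv a (U n x) (P j n x)‖ₑ ∂μ ≤
        2 * ∫⁻ x, ∑ j, ‖D j x‖ₑ ∂μ + ε := by
  have hgm := aestronglyMeasurable_of_tendsto_ae atTop hU hUg
  have hε2 : 0 < ε / 2 := ENNReal.half_pos hε
  obtain ⟨a, ha, ha1, hag, haD⟩ := exists_lintegral_enorm_unitTwist_sub_le hgm.aemeasurable
    hg1 hD hDg hε2.ne' (ENNReal.div_ne_top hε' two_ne_zero)
  have hD_lim : Tendsto (fun n => ∑ j, ∫⁻ x, ‖twistLogDeriv a (U n x) (P j n x) -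
      twistLogDeriv a (g x) (D j x)‖ₑ ∂μ) atTop (𝓝 0) := by
    simpa only [Finset.sum_const_zero] using tendsto_finsetSum _ fun j _ =>
      tendstoInL1_twistLogDeriv ha1 hU hU1 hUg (hP j) (hD j) (hPD j)
  obtain ⟨n, hn, hnD⟩ := (((tendsto_order.1 (tendstoInL1_unitTwist ha ha1 hU hU1 hUg)).2 _
    hε2).and ((tendsto_order.1 hD_lim).2 _ hε2)).exists
  refine ⟨a, ha, ha1, n, ?_, ?_⟩
  · have htri := lintegral_edist_triangle (g := g) (aestronglyMeasurable_unitTwist_comp (hU n) a)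
      (aestronglyMeasurable_unitTwist_comp hgm a)
    simp only [edist_eq_enorm_sub, enorm_sub_rev (g _)] at htri
    exact (htri.trans (add_le_add hn.le hag)).trans_eq (ENNReal.add_halves ε)
  · have hsum := lintegral_sum_enorm_le_add (μ := μ)
      (f := fun j x => twistLogDeriv a (U n x) (P j n x))
      (g := fun j x => twistLogDeriv a (g x) (D j x))
      fun j => (aestronglyMeasurable_twistLogDeriv_comp (hU n) (hP j n) a).sub
        (aestronglyMeasurable_twistLogDeriv_comp hgm (hD j).1 a)
    refine (hsum.trans (add_le_add haD hnD.le)).trans_eq ?_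
    rw [add_assoc, ENNReal.add_halves]

end TwistedConvergence

section DiscLimit

/-- On `S`, the circle-valued map `g` with gradient `D` is a limit of disc-valued `C¹` maps, in
`W^{1,1}` as regards the gradients and almost everywhere as regards the values. -/
structure IsDiscLimit (S : Set R2) (g : R2 → ℂ) (D : Fin 2 → R2 → ℂ) : Prop where
  norm_eq_one : ∀ᵐ x ∂volume.restrict S, ‖g x‖ = 1
  integrableOn : ∀ j, IntegrableOn (D j) S
  tangential : ∀ j, ∀ᵐ x ∂volume.restrict S, D j x * conj (g x) + g x * conj (D j x) = 0
  exists_seq : ∃ U : ℕ → R2 → ℂ, (∀ n, ContDiffOn ℝ 1 (U n) S) ∧ (∀ n, ∀ x ∈ S, ‖U n x‖ ≤ 1) ∧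
    (∀ j, TendstoInL1 (volume.restrict S) (fun n => partialDeriv j (U n)) (D j)) ∧
    ∀ᵐ x ∂volume.restrict S, Tendsto (fun n => U n x) atTop (𝓝 (g x))

variable {S : Set R2} {g w : R2 → ℂ} {D : Fin 2 → R2 → ℂ}

lemma aestronglyMeasurable_partialDeriv (hw : ContDiffOn ℝ 1 w S) (hS : IsOpen S) (j : Fin 2) :
    AEStronglyMeasurable (partialDeriv j w) (volume.restrict S) :=
  ((hw.continuousOn_fderiv_of_isOpen hS le_rfl).clm_apply
    continuousOn_const).aestronglyMeasurable hS.measurableSet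

lemma norm_partialDeriv_unitTwist_comp {a : ℂ} (ha : a ≠ 0) (ha1 : ‖a‖ < 1) {x : R2}
    (hw : DifferentiableAt ℝ w x) (hw1 : ‖w x‖ ≤ 1) (j : Fin 2) :
    ‖partialDeriv j (fun y => unitTwist a (w y)) x‖ =
      ‖twistLogDeriv a (w x) (partialDeriv j w x)‖ := by
  have htw := (contDiffAt_unitTwist ha1 hw1).differentiableAt one_ne_zero
  rw [partialDeriv, fderiv_fun_comp x htw hw, ContinuousLinearMap.comp_apply,
    fderiv_unitTwist ha1 hw1, norm_mul, norm_unitTwist ha ha1 hw1, one_mul]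

theorem IsDiscLimit.exists_contDiffOn_norm_eq_one (h : IsDiscLimit S g D) (hS : IsOpen S)
    (hSfin : volume S ≠ ⊤) {ε : ℝ≥0∞} (hε : ε ≠ 0) (hε' : ε ≠ ⊤) :
    ∃ v : R2 → ℂ, ContDiffOn ℝ 1 v S ∧ (∀ x ∈ S, ‖v x‖ = 1) ∧
      ∫⁻ x in S, ‖v x - g x‖ₑ ≤ ε ∧
      ∫⁻ x in S, ∑ j, ‖partialDeriv j v x‖ₑ ≤ 2 * (∫⁻ x in S, ∑ j, ‖D j x‖ₑ) + ε := by
  have : IsFiniteMeasure (volume.restrict S) := isFiniteMeasure_restrict.2 hSfin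
  obtain ⟨U, hU, hU1, hUD, hUg⟩ := h.exists_seq
  obtain ⟨a, ha, ha1, n, hag, haD⟩ := exists_lintegral_enorm_unitTwist_seq_sub_le
    (fun n => (hU n).continuousOn.aestronglyMeasurable hS.measurableSet)
    (fun n => ae_restrict_of_forall_mem hS.measurableSet (hU1 n)) hUg h.norm_eq_one
    (fun j n => aestronglyMeasurable_partialDeriv (hU n) hS j) h.integrableOn hUD h.tangential
    hε hε'
  refine ⟨fun x => unitTwist a (U n x), fun x hx => (contDiffAt_unitTwist ha1
    (hU1 n x hx)).comp_contDiffWithinAt x (hU n x hx), fun x hx => norm_unitTwist ha ha1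
    (hU1 n x hx), hag, (setLIntegral_congr_fun hS.measurableSet fun x hx => ?_).trans_le haD⟩
  have hUx := ((hU n).contDiffAt (hS.mem_nhds hx)).differentiableAt one_ne_zero
  exact Finset.sum_congr rfl fun j _ => enorm_eq_iff_norm_eq.2
    (norm_partialDeriv_unitTwist_comp ha ha1 hUx (hU1 n x hx) j)

end DiscLimit

/-! ### Upper bounds for the relaxed area -/

section UpperBound

variable {Ω S : Set R2} {u : R2 → R2} {G : R2 → Matrix (Fin 2) (Fin 2) ℝ} {v w g : R2 → ℂ}
  {D : Fin 2 → R2 → ℂ} {x : R2}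

lemma partialDeriv_mul (hv : DifferentiableAt ℝ v x) (hw : DifferentiableAt ℝ w x) (j : Fin 2) :
    partialDeriv j (fun y => v y * w y) x =
      partialDeriv j v x * w x + v x * partialDeriv j w x := by
  simp only [partialDeriv, fderiv_fun_mul hv hw, add_apply, smul_apply, smul_eq_mul]
  ring

lemma partialDeriv_mul_conj_add_eq_zero (hS : IsOpen S) (hx : x ∈ S)
    (hv : DifferentiableAt ℝ v x) (hv1 : ∀ y ∈ S, ‖v y‖ = 1) (j : Fin 2) :
    partialDeriv j v x * conj (v x) + v x * conj (partialDeriv j v x) = 0 := by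
  have hconst : (fun y => v y * conj (v y)) =ᶠ[𝓝 x] fun _ => 1 := by
    filter_upwards [hS.mem_nhds hx] with y hy using mul_conj_of_norm_eq_one (hv1 y hy)
  have hv' : DifferentiableAt ℝ (fun y => conj (v y)) x := hv.star
  rw [← fderiv_conj_apply hv, ← partialDeriv_mul hv hv', partialDeriv, hconst.fderiv_eq,
    fderiv_const_apply, zero_apply]

lemma im_conj_mul_eq_zero {z p q : ℂ} (hz : ‖z‖ = 1) (hp : p * conj z + z * conj p = 0)
    (hq : q * conj z + z * conj q = 0) : (conj p * q).im = 0 := by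
  have hz1 := mul_conj_of_norm_eq_one hz
  refine Complex.conj_eq_iff_im.1 ?_
  rw [map_mul, Complex.conj_conj]
  linear_combination z * conj q * hp - z * conj p * hq - (p * conj q - conj p * q) * hz1

lemma classicalArea_toC_symm_comp (hS : IsOpen S) (hv : ContDiffOn ℝ 1 v S)
    (hv1 : ∀ y ∈ S, ‖v y‖ = 1) :
    classicalArea S (fun x => toC.symm (v x)) =
      ∫⁻ x in S, ENNReal.ofReal (areaDensity (partialDeriv 0 v x) (partialDeriv 1 v x)) := by
  refine setLIntegral_congr_fun hS.measurableSet fun x hx => ?_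
  have hvx := (hv.contDiffAt (hS.mem_nhds hx)).differentiableAt one_ne_zero
  have hvx' : DifferentiableAt ℝ (fun x => toC.symm (v x)) x :=
    toC.symm.differentiable.differentiableAt.comp x hvx
  have htan := partialDeriv_mul_conj_add_eq_zero hS hx hvx hv1
  simp only [sum_jacobianMatrix_sq hvx', det_jacobianMatrix hvx',
    LinearIsometryEquiv.apply_symm_apply, im_conj_mul_eq_zero (hv1 x hx) (htan 0) (htan 1),
    areaDensity, ← add_assoc, ne_eq, OfNat.ofNat_ne_zero, not_false_eq_true, zero_pow, add_zero]

lemma areaDensity_mul {z : ℂ} (hz : ‖z‖ = 1) (p q : ℂ) :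
    areaDensity (p * z) (q * z) = areaDensity p q := by
  rw [areaDensity, areaDensity, norm_mul, norm_mul, hz, mul_one, mul_one]

lemma ofReal_areaDensity_le_add (p p' : Fin 2 → ℂ) :
    ENNReal.ofReal (areaDensity (p 0) (p 1)) ≤
      ENNReal.ofReal (areaDensity (p' 0) (p' 1)) + ∑ j, ‖p j - p' j‖ₑ := by
  have hsplit : graphVec (p 0) (p 1) = graphVec (p' 0) (p' 1) +
      (EuclideanSpace.single 1 (p 0 - p' 0) + EuclideanSpace.single 2 (p 1 - p' 1)) := by
    ext i
    fin_cases i <;> simp [graphVec]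
  rw [← enorm_graphVec, ← enorm_graphVec, hsplit, Fin.sum_univ_two]
  refine (enorm_add_le _ _).trans (add_le_add_right ((enorm_add_le _ _).trans_eq ?_) _)
  simp only [← ofReal_norm, PiLp.norm_single]

lemma relaxedArea_le_of_forall_exists (hum : AEStronglyMeasurable u (volume.restrict S))
    (hS : MeasurableSet S) {L : ℝ≥0∞}
    (h : ∀ ε : ℝ≥0∞, ε ≠ 0 → ε ≠ ⊤ → ∃ v : R2 → R2, ContDiffOn ℝ 1 v S ∧
      ∫⁻ x in S, ‖v x - u x‖ₑ ≤ ε ∧ classicalArea S v ≤ L + ε) : relaxedArea u S ≤ L := by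
  have hε0 (n : ℕ) : (n + 1 : ℝ≥0∞)⁻¹ ≠ 0 := ENNReal.inv_ne_zero.2 (by finiteness)
  have hε_top (n : ℕ) : (n + 1 : ℝ≥0∞)⁻¹ ≠ ⊤ := ENNReal.inv_ne_top.2 (by simp)
  choose v hv hvu hvL using fun n : ℕ => h _ (hε0 n) (hε_top n)
  have hε : Tendsto (fun n : ℕ => (n + 1 : ℝ≥0∞)⁻¹) atTop (𝓝 0) := by
    simpa only [Nat.cast_add, Nat.cast_one] using
      (tendsto_add_atTop_iff_nat 1).2 ENNReal.tendsto_inv_nat_nhds_zero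
  have hi k : IntegrableOn (fun x => v k x - u x) S :=
    ⟨((hv k).continuousOn.aestronglyMeasurable hS).sub hum, (hvu k).trans_lt (hε_top k).lt_top⟩
  have hL : Tendsto (fun n : ℕ => L + (n + 1 : ℝ≥0∞)⁻¹) atTop (𝓝 L) := by
    simpa only [add_zero] using tendsto_const_nhds.add hε
  refine le_trans (sInf_le ⟨v, hv, hi, ?_, rfl⟩)
    ((liminf_le_liminf (Eventually.of_forall hvL)).trans_eq hL.liminf_eq)
  have hvu0 := tendsto_of_tendsto_of_tendsto_of_le_of_le tendsto_const_nhds hε (fun _ => bot_le) hvu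
  refine ((ENNReal.tendsto_toReal ENNReal.zero_ne_top).comp hvu0).congr fun k => ?_
  exact (integral_norm_eq_lintegral_enorm (hi k).aestronglyMeasurable).symm

lemma IsDiscLimit.mono (h : IsDiscLimit Ω g D) (hSΩ : S ⊆ Ω) : IsDiscLimit S g D := by
  have hμ : volume.restrict S ≤ volume.restrict Ω := Measure.restrict_mono hSΩ le_rfl
  obtain ⟨U, hU, hU1, hUD, hUg⟩ := h.exists_seq
  exact ⟨ae_mono hμ h.norm_eq_one, fun j => (h.integrableOn j).mono_set hSΩ,
    fun j => ae_mono hμ (h.tangential j), U, fun n => (hU n).mono hSΩ,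
    fun n x hx => hU1 n x (hSΩ hx), fun j => tendsto_of_tendsto_of_tendsto_of_le_of_le
      tendsto_const_nhds (hUD j) (fun _ => bot_le) fun n => lintegral_mono' hμ le_rfl,
    ae_mono hμ hUg⟩

theorem MemW11.isDiscLimit (hΩo : IsOpen Ω) (hΩb : Bornology.IsBounded Ω)
    (hΩs : HasSegmentProperty Ω) (hu : MemW11 Ω u G) (hS : SphereValued Ω u) :
    IsDiscLimit Ω (fun x => toC (u x)) (gradC G) := by
  obtain ⟨U, hU, hU1, hUG, hUu⟩ := hu.exists_contDiff_norm_le_one_tendsto hΩo hΩb hΩs hS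
  refine ⟨hS.norm_toC, hu.integrableOn_gradC, fun j => ?_, U, fun n => (hU n).contDiffOn,
    fun n x _ => hU1 n x, hUG, hUu⟩
  filter_upwards [hu.gradC_ae_eq_neg_sq_mul_conj hΩo hΩb hΩs hS j, hS.norm_toC] with x hG hu1
  linear_combination
    conj (toC (u x)) * hG - toC (u x) * conj (gradC G j x) * mul_conj_of_norm_eq_one hu1

lemma tendstoInL1_partialDeriv_mul_conj {U : ℕ → R2 → ℂ} {f : R2 → ℂ} {j : Fin 2} (hS : IsOpen S)
    (hU : ∀ n, ContDiffOn ℝ 1 (U n) S) (hU1 : ∀ n, ∀ x ∈ S, ‖U n x‖ ≤ 1)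
    (hUf : TendstoInL1 (volume.restrict S) (fun n => partialDeriv j (U n)) f)
    (hUg : ∀ᵐ x ∂volume.restrict S, Tendsto (fun n => U n x) atTop (𝓝 (g x)))
    (hf : IntegrableOn f S) (hw : ContDiffOn ℝ 1 w S) (hw1 : ∀ x ∈ S, ‖w x‖ ≤ 1)
    (hwi : IntegrableOn (partialDeriv j w) S) :
    TendstoInL1 (volume.restrict S) (fun n => partialDeriv j fun x => U n x * conj (w x))
      fun x => f x * conj (w x) + g x * conj (partialDeriv j w x) := by
  have hwm : AEStronglyMeasurable (fun x => conj (w x)) (volume.restrict S) :=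
    Complex.continuous_conj.comp_aestronglyMeasurable
      (hw.continuousOn.aestronglyMeasurable hS.measurableSet)
  have hUf' := hUf.smul_of_norm_le (M := fun _ x => conj (w x)) (N := fun x => conj (w x))
    (K := 1) (fun n => aestronglyMeasurable_partialDeriv (hU n) hS j) hf
    (fun _ => ae_restrict_of_forall_mem hS.measurableSet fun x hx =>
      (Complex.norm_conj _).trans_le (hw1 x hx))
    (fun _ => hwm) (Eventually.of_forall fun _ => tendsto_const_nhds)
  have hUg' := tendstoInL1_smul_of_norm_le (K := 1)
    (Complex.conjCLE.toContinuousLinearMap.integrable_comp hwi)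
    (fun n => ae_restrict_of_forall_mem hS.measurableSet (hU1 n))
    (fun n => (hU n).continuousOn.aestronglyMeasurable hS.measurableSet) hUg
  refine (hUf'.add hUg' fun n => ?_).congr fun n =>
    setLIntegral_congr_fun hS.measurableSet fun x hx => ?_
  · exact (hwm.smul (aestronglyMeasurable_partialDeriv (hU n) hS j)).sub (hwm.smul hf.1)
  · have hUx := ((hU n).contDiffAt (hS.mem_nhds hx)).differentiableAt one_ne_zero
    have hwx := (hw.contDiffAt (hS.mem_nhds hx)).differentiableAt one_ne_zero
    have hwx' : DifferentiableAt ℝ (fun y => conj (w y)) x := hwx.star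
    simp only [partialDeriv_mul hUx hwx', partialDeriv, fderiv_conj_apply hwx, smul_eq_mul,
      ContinuousLinearEquiv.coe_coe, Complex.conjCLE_apply, mul_comm (conj (w x))]

lemma IsDiscLimit.mul_conj (h : IsDiscLimit S g D) (hS : IsOpen S) (hw : ContDiffOn ℝ 1 w S)
    (hw1 : ∀ x ∈ S, ‖w x‖ = 1) (hwi : ∀ j, IntegrableOn (partialDeriv j w) S) :
    IsDiscLimit S (fun x => g x * conj (w x))
      fun j x => D j x * conj (w x) + g x * conj (partialDeriv j w x) := by
  obtain ⟨U, hU, hU1, hUD, hUg⟩ := h.exists_seq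
  have hgm := aestronglyMeasurable_of_tendsto_ae atTop
    (fun n => (hU n).continuousOn.aestronglyMeasurable hS.measurableSet) hUg
  have hwc : ContDiffOn ℝ 1 (fun x => conj (w x)) S := Complex.conjCLE.contDiff.comp_contDiffOn hw
  have hwm := hwc.continuousOn.aestronglyMeasurable (μ := volume) hS.measurableSet
  have hwc1 x (hx : x ∈ S) : ‖conj (w x)‖ = 1 := (Complex.norm_conj _).trans (hw1 x hx)
  have hdwi j : IntegrableOn (fun x => conj (partialDeriv j w x)) S :=
    Complex.conjCLE.toContinuousLinearMap.integrable_comp (hwi j)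
  refine ⟨?_, fun j => ?_, fun j => ?_, fun n x => U n x * conj (w x), fun n => (hU n).mul hwc,
    fun n x hx => ?_, fun j => tendstoInL1_partialDeriv_mul_conj hS hU hU1 (hUD j) hUg
      (h.integrableOn j) hw (fun x hx => (hw1 x hx).le) (hwi j),
    hUg.mono fun x hx => hx.mul_const _⟩
  · filter_upwards [h.norm_eq_one, ae_restrict_mem hS.measurableSet] with x hgx hx
    rw [norm_mul, hgx, hwc1 x hx, one_mul]
  · exact ((h.integrableOn j).mul_bdd (c := 1) hwm
      (ae_restrict_of_forall_mem hS.measurableSet fun x hx => (hwc1 x hx).le)).add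
      ((hdwi j).bdd_mul (c := 1) hgm (h.norm_eq_one.mono fun x hx => hx.le))
  · filter_upwards [h.tangential j, ae_restrict_mem hS.measurableSet] with x hDx hx
    have htan := partialDeriv_mul_conj_add_eq_zero hS hx
      ((hw.contDiffAt (hS.mem_nhds hx)).differentiableAt one_ne_zero) hw1 j
    simp only [map_mul, map_add, Complex.conj_conj]
    linear_combination w x * conj (w x) * hDx + g x * conj (g x) * htan
  · rw [norm_mul, hwc1 x hx, mul_one]
    exact hU1 n x hx

lemma ofReal_areaDensity_partialDeriv_mul_le (hw : DifferentiableAt ℝ w x)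
    (hv : DifferentiableAt ℝ v x) (hw1 : ‖w x‖ = 1) (hv1 : ‖v x‖ = 1) :
    ENNReal.ofReal (areaDensity (partialDeriv 0 (fun y => w y * v y) x)
      (partialDeriv 1 (fun y => w y * v y) x)) ≤
    ENNReal.ofReal (areaDensity (partialDeriv 0 w x) (partialDeriv 1 w x)) +
      ∑ j, ‖partialDeriv j v x‖ₑ := by
  refine (ofReal_areaDensity_le_add (fun j => partialDeriv j (fun y => w y * v y) x)
    fun j => partialDeriv j w x * v x).trans_eq ?_
  have hw1' : ‖w x‖ₑ = 1 := by rw [← ofReal_norm, hw1, ENNReal.ofReal_one]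
  simp only [areaDensity_mul hv1, partialDeriv_mul hw hv, add_sub_cancel_left, enorm_mul, hw1',
    one_mul]

theorem relaxedArea_le_of_isDiscLimit (hS : IsOpen S) (hSfin : volume S ≠ ⊤)
    (hw : ContDiffOn ℝ 1 w S) (hw1 : ∀ x ∈ S, ‖w x‖ = 1)
    (h : IsDiscLimit S (fun x => toC (u x) * conj (w x)) D)
    (hum : AEStronglyMeasurable u (volume.restrict S)) :
    relaxedArea u S ≤ (∫⁻ x in S, ENNReal.ofReal (areaDensity (partialDeriv 0 w x)
      (partialDeriv 1 w x))) + 2 * ∫⁻ x in S, ∑ j, ‖D j x‖ₑ := by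
  refine relaxedArea_le_of_forall_exists hum hS.measurableSet fun ε hε hε' => ?_
  obtain ⟨v, hv, hv1, hvu, hvD⟩ := h.exists_contDiffOn_norm_eq_one hS hSfin hε hε'
  have hwv : ContDiffOn ℝ 1 (fun x => w x * v x) S := hw.mul hv
  have hwv1 x (hx : x ∈ S) : ‖w x * v x‖ = 1 := by
    rw [norm_mul, hw1 x hx, hv1 x hx, one_mul]
  refine ⟨fun x => toC.symm (w x * v x),
    toC.symm.toContinuousLinearEquiv.contDiff.comp_contDiffOn hwv, ?_, ?_⟩
  · refine (setLIntegral_congr_fun hS.measurableSet fun x hx => ?_).trans_le hvu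
    rw [enorm_eq_iff_norm_eq, ← toC.norm_map, map_sub, toC.apply_symm_apply,
      ← one_mul ‖v x - _‖, ← hw1 x hx, ← norm_mul]
    congr 1
    linear_combination toC (u x) * mul_conj_of_norm_eq_one (hw1 x hx)
  · rw [classicalArea_toC_symm_comp hS hwv hwv1, add_assoc]
    refine le_trans ?_ (add_le_add_right hvD _)
    rw [← lintegral_add_right' _ (Finset.aemeasurable_fun_sum _ fun j _ =>
      (aestronglyMeasurable_partialDeriv hv hS j).enorm)]
    exact setLIntegral_mono' hS.measurableSet fun x hx => ofReal_areaDensity_partialDeriv_mul_le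
      ((hw.contDiffAt (hS.mem_nhds hx)).differentiableAt one_ne_zero)
      ((hv.contDiffAt (hS.mem_nhds hx)).differentiableAt one_ne_zero) (hw1 x hx) (hv1 x hx)

end UpperBound

/-! ### Retractions of the punctured disc onto the circle -/

section PuncturedDiscRetraction

variable {a z p : ℂ}

/-- The product of the two factors of the Möbius map `z ↦ (z - a) / (1 - conj a * z)`. On the unit
circle it is a positive multiple of `z`, and in the unit disc it vanishes only at `a`. -/
def retractionFactor (a z : ℂ) : ℂ := (z - a) * (1 - conj a * z)

/-- The retraction of the closed unit disc punctured at `a` onto the unit circle obtained by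
normalizing `retractionFactor a`. -/
def puncturedDiscRetraction (a z : ℂ) : ℂ := retractionFactor a z / ‖retractionFactor a z‖

/-- The logarithmic derivative of `retractionFactor a`. -/
def retractionLogDeriv (a z : ℂ) : ℂ := (z - a)⁻¹ - conj a * (1 - conj a * z)⁻¹

lemma ne_of_norm_lt_one (ha : ‖a‖ < 1) (hz : ‖z‖ = 1) : z ≠ a := by
  rintro rfl
  exact ha.ne hz

lemma retractionFactor_ne_zero (ha : ‖a‖ < 1) (hz : ‖z‖ ≤ 1) (hza : z ≠ a) :
    retractionFactor a z ≠ 0 :=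
  mul_ne_zero (sub_ne_zero.2 hza) (one_sub_conj_mul_ne_zero ha hz)

lemma norm_puncturedDiscRetraction (h : retractionFactor a z ≠ 0) :
    ‖puncturedDiscRetraction a z‖ = 1 := by
  rw [puncturedDiscRetraction, norm_div, Complex.norm_real, norm_norm,
    div_self (norm_ne_zero_iff.2 h)]

lemma norm_puncturedDiscRetraction_le (a z : ℂ) : ‖puncturedDiscRetraction a z‖ ≤ 1 := by
  rw [puncturedDiscRetraction, norm_div, Complex.norm_real, norm_norm]
  exact div_self_le_one _

lemma measurable_puncturedDiscRetraction (a : ℂ) : Measurable (puncturedDiscRetraction a) := by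
  unfold puncturedDiscRetraction retractionFactor
  fun_prop

lemma contDiffAt_puncturedDiscRetraction (h : retractionFactor a z ≠ 0) :
    ContDiffAt ℝ 1 (puncturedDiscRetraction a) z := by
  have hf : ContDiff ℝ 1 (retractionFactor a) := by
    unfold retractionFactor
    fun_prop
  unfold puncturedDiscRetraction
  simp only [div_eq_mul_inv, ← Complex.ofReal_inv]
  exact hf.contDiffAt.mul (Complex.ofRealCLM.contDiff.contDiffAt.comp z
    ((hf.contDiffAt.norm ℝ h).inv (norm_ne_zero_iff.2 h)))

lemma puncturedDiscRetraction_eq_self (ha : ‖a‖ < 1) (hz : ‖z‖ = 1) :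
    puncturedDiscRetraction a z = z := by
  have hpos : 0 < ‖1 - conj a * z‖ := norm_pos_iff.2 (one_sub_conj_mul_ne_zero ha hz.le)
  have hf : retractionFactor a z = (‖1 - conj a * z‖ ^ 2 : ℝ) * z := by
    rw [← Complex.normSq_eq_norm_sq, ← Complex.mul_conj, retractionFactor]
    simp only [map_sub, map_one, map_mul, Complex.conj_conj]
    linear_combination a * (1 - conj a * z) * mul_conj_of_norm_eq_one hz
  rw [puncturedDiscRetraction, hf, norm_mul, hz, mul_one, Complex.norm_real,
    Real.norm_of_nonneg (sq_nonneg _), mul_div_cancel_left₀]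
  exact Complex.ofReal_ne_zero.2 (pow_ne_zero 2 hpos.ne')

lemma hasDerivAt_norm_of_hasDerivAt_mul {f : ℝ → ℂ} {q : ℂ} {t : ℝ} (h : f t ≠ 0)
    (hf : HasDerivAt f (f t * q) t) : HasDerivAt (fun s => ‖f s‖) (‖f t‖ * q.re) t := by
  have hne := norm_ne_zero_iff.2 h
  have hinner : inner ℝ (f t) (f t * q) = ‖f t‖ ^ 2 * q.re := by
    rw [Complex.inner, mul_right_comm, Complex.mul_conj, Complex.re_ofReal_mul,
      Complex.normSq_eq_norm_sq]
  have hsqrt := hf.norm_sq.sqrt (pow_ne_zero 2 hne)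
  simp only [Real.sqrt_sq (norm_nonneg _), hinner] at hsqrt
  refine hsqrt.congr_deriv ?_
  field_simp

lemma fderiv_puncturedDiscRetraction (h : retractionFactor a z ≠ 0) (p : ℂ) :
    fderiv ℝ (puncturedDiscRetraction a) z p = puncturedDiscRetraction a z *
      ((p * retractionLogDeriv a z - conj (p * retractionLogDeriv a z)) / 2) := by
  have hza := left_ne_zero_of_mul h
  have hza' := right_ne_zero_of_mul h
  set q := p * retractionLogDeriv a z with hq
  have h0 : z + (0 : ℝ) • p = z := by rw [zero_smul, add_zero]
  have hf : HasDerivAt (fun t : ℝ => retractionFactor a (z + t • p))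
      (retractionFactor a (z + (0 : ℝ) • p) * q) 0 := by
    have hline : HasDerivAt (fun t : ℝ => z + t • p) p 0 := by
      simpa using! ((hasDerivAt_id (0 : ℝ)).smul_const p).const_add z
    refine ((hline.sub_const a).mul ((hline.const_mul (conj a)).const_sub 1)).congr_deriv ?_
    rw [h0, hq, retractionFactor, retractionLogDeriv]
    field_simp
    ring
  have hne : (‖retractionFactor a (z + (0 : ℝ) • p)‖ : ℂ) ≠ 0 :=
    Complex.ofReal_ne_zero.2 (norm_ne_zero_iff.2 (by rwa [h0]))
  have hline : HasDerivAt (fun t : ℝ => puncturedDiscRetraction a (z + t • p))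
      (puncturedDiscRetraction a z * ((q - conj q) / 2)) 0 := by
    refine (hf.div (hasDerivAt_norm_of_hasDerivAt_mul (by rwa [h0]) hf).ofReal_comp
      hne).congr_deriv ?_
    rw [h0] at hne ⊢
    rw [Complex.ofReal_mul, Complex.re_eq_add_conj, puncturedDiscRetraction]
    field_simp
    ring
  rw [← ((contDiffAt_puncturedDiscRetraction h).differentiableAt one_ne_zero).lineDeriv_eq_fderiv]
  exact hline.deriv

lemma norm_fderiv_puncturedDiscRetraction_le (ha : ‖a‖ ≤ 1 / 2) (hz : ‖z‖ ≤ 1) (hza : z ≠ a) :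
    ‖fderiv ℝ (puncturedDiscRetraction a) z‖ ≤ ‖z - a‖⁻¹ + 1 := by
  have ha1 : ‖a‖ < 1 := by linarith
  have h := retractionFactor_ne_zero ha1 hz hza
  have hk : ‖retractionLogDeriv a z‖ ≤ ‖z - a‖⁻¹ + 1 := by
    have hpos := norm_pos_iff.2 (one_sub_conj_mul_ne_zero ha1 hz)
    refine (norm_sub_le _ _).trans ?_
    rw [norm_inv, norm_mul, norm_inv, Complex.norm_conj, ← div_eq_mul_inv]
    gcongr
    rw [div_le_one hpos]
    linarith [one_sub_norm_le_norm_one_sub_conj_mul (a := a) hz]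
  refine ContinuousLinearMap.opNorm_le_bound _ (by positivity) fun p => ?_
  rw [fderiv_puncturedDiscRetraction h, norm_mul, norm_puncturedDiscRetraction h, one_mul, norm_div,
    RCLike.norm_ofNat, div_le_iff₀ two_pos]
  refine (norm_sub_le _ _).trans ?_
  rw [Complex.norm_conj, norm_mul]
  nlinarith [mul_le_mul_of_nonneg_left hk (norm_nonneg p)]

lemma fderiv_puncturedDiscRetraction_of_tangential (ha : ‖a‖ < 1) (hz : ‖z‖ = 1)
    (hp : p * conj z + z * conj p = 0) : fderiv ℝ (puncturedDiscRetraction a) z p = p := by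
  have hre : (p * conj z).re = 0 := by
    have hadd := Complex.add_conj (p * conj z)
    rw [map_mul, Complex.conj_conj, mul_comm (conj p), hp] at hadd
    linarith [Complex.ofReal_eq_zero.1 hadd.symm]
  let γ : ℝ → ℂ := fun t => z * Complex.exp (t * (p * conj z))
  have hγ0 : γ 0 = z := by simp [γ]
  have hγ1 : ∀ t, ‖γ t‖ = 1 := fun t => by
    rw [norm_mul, hz, one_mul, Complex.norm_exp, Complex.re_ofReal_mul, hre, mul_zero,
      Real.exp_zero]
  have hγ : HasDerivAt γ p 0 := by
    refine (((hasDerivAt_id (0 : ℝ)).ofReal_comp.mul_const (p * conj z)).cexp.const_mul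
      z).congr_deriv ?_
    simp only [id, Complex.ofReal_zero, Complex.ofReal_one, zero_mul, Complex.exp_zero]
    linear_combination p * mul_conj_of_norm_eq_one hz
  have hdiff : DifferentiableAt ℝ (puncturedDiscRetraction a) (γ 0) := by
    rw [hγ0]
    exact (contDiffAt_puncturedDiscRetraction (retractionFactor_ne_zero ha hz.le
      (ne_of_norm_lt_one ha hz))).differentiableAt one_ne_zero
  have hcomp : puncturedDiscRetraction a ∘ γ = γ :=
    funext fun t => puncturedDiscRetraction_eq_self ha (hγ1 t)
  have hderiv := hdiff.hasFDerivAt.comp_hasDerivAt 0 hγ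
  rw [hcomp, hγ0] at hderiv
  exact hderiv.unique hγ

end PuncturedDiscRetraction

/-! ### Choice of the projection centre -/

section RegularValue

variable {E F : Type*} [NormedAddCommGroup E] [NormedSpace ℝ E] [FiniteDimensional ℝ E]
  [NormedAddCommGroup F] [NormedSpace ℝ F] {f : E → F}

lemma finite_preimage_of_injective_fderiv (hf : Differentiable ℝ f) {Ω : Set E}
    (hΩ : Bornology.IsBounded Ω) {a : F}
    (ha : ∀ x, f x = a → Function.Injective (fderiv ℝ f x)) : {x ∈ Ω | f x = a}.Finite := by
  by_contra hinf
  have hcompact : IsCompact (closure Ω ∩ f ⁻¹' {a}) :=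
    hΩ.isCompact_closure.inter_right (isClosed_singleton.preimage hf.continuous)
  obtain ⟨x, hx, hacc⟩ := Set.Infinite.exists_accPt_of_subset_isCompact hinf hcompact
    fun y hy => ⟨subset_closure hy.1, hy.2⟩
  obtain ⟨K, -, hK⟩ := (fderiv ℝ f x).toLinearMap.injective_iff_antilipschitz.1 (ha x hx.2)
  obtain ⟨y, hy, hne⟩ := ((accPt_iff_frequently_nhdsNE.1 hacc).and_eventually
    ((hf x).hasFDerivAt.eventually_ne (c := a) ⟨K, hK⟩)).exists
  exact hne hy.2

variable [FiniteDimensional ℝ F] [MeasurableSpace F] [BorelSpace F] (μ : Measure F)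
  [μ.IsAddHaarMeasure]

lemma ae_forall_eq_imp_injective_fderiv (hEF : Module.finrank ℝ E = Module.finrank ℝ F)
    (hf : Differentiable ℝ f) :
    ∀ᵐ a ∂μ, ∀ x, f x = a → Function.Injective (fderiv ℝ f x) := by
  let e : F ≃L[ℝ] E := ContinuousLinearEquiv.ofFinrankEq hEF.symm
  have hderiv : ∀ y, HasFDerivAt (f ∘ e) ((fderiv ℝ f (e y)).comp (e : F →L[ℝ] E)) y := fun y =>
    (hf (e y)).hasFDerivAt.comp y e.hasFDerivAt
  have hnull := addHaar_image_eq_zero_of_det_fderivWithin_eq_zero μ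
    (s := {y | ((fderiv ℝ f (e y)).comp (e : F →L[ℝ] E)).det = 0})
    (fun y _ => (hderiv y).hasFDerivWithinAt) fun _ hy => hy
  rw [ae_iff]
  refine measure_mono_null (fun a ha => ?_) hnull
  simp only [mem_ofPred_eq, not_forall] at ha
  obtain ⟨x, rfl, hx⟩ := ha
  refine ⟨e.symm x, ?_, by simp⟩
  contrapose! hx
  have hinj := LinearMap.ker_eq_bot.1
    (not_not.1 (mt LinearMap.det_eq_zero_iff_ker_ne_bot.2 hx))
  simpa using hinj.comp e.symm.injective

end RegularValue

section PotentialAveraging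

variable {E : Type*} [NormedAddCommGroup E] [NormedSpace ℝ E] [FiniteDimensional ℝ E]
  [MeasurableSpace E] [BorelSpace E] (μ : Measure E) [μ.IsAddHaarMeasure]

lemma setLIntegral_ball_inv_enorm_lt_top (hE : 1 < Module.finrank ℝ E) (r : ℝ) :
    ∫⁻ x in ball 0 r, ‖x‖ₑ⁻¹ ∂μ < ⊤ := by
  have : Nontrivial E := Module.nontrivial_of_finrank_pos (zero_lt_one.trans hE)
  have hint : IntegrableOn (fun x : E => ‖x‖⁻¹) (ball 0 r) μ :=
    integrableOn_ball_of_norm_le_rpow (C := 1) (α := 1) hE.le (mod_cast hE)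
      (Eventually.of_forall fun x => by simp [Real.rpow_neg_one])
      measurable_norm.inv.aestronglyMeasurable
  refine lt_of_le_of_lt (lintegral_mono_ae ?_) hint.2
  filter_upwards [ae_restrict_of_ae (Measure.ae_ne μ 0)] with x hx
  rw [enorm_inv (norm_ne_zero_iff.2 hx), enorm_norm]

lemma setLIntegral_ball_inv_enorm_sub_le {r R : ℝ} {y : E} (hy : ‖y‖ ≤ R) :
    ∫⁻ a in ball 0 r, ‖y - a‖ₑ⁻¹ ∂μ ≤ ∫⁻ x in ball 0 (R + r), ‖x‖ₑ⁻¹ ∂μ := by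
  have htrans := (Measure.measurePreserving_sub_left μ y).setLIntegral_comp_preimage
    (measurableSet_ball (x := 0) (ε := R + r)) (f := fun x => ‖x‖ₑ⁻¹) measurable_enorm.inv
  rw [← htrans]
  refine lintegral_mono_set fun a ha => ?_
  rw [mem_ball_zero_iff] at ha
  rw [mem_preimage, mem_ball_zero_iff]
  linarith [norm_sub_le y a]

variable {X : Type*} [MeasurableSpace X] {ν : Measure X} [SFinite ν]

lemma ae_liminf_lintegral_mul_inv_enorm_sub_eq_zero (hE : 1 < Module.finrank ℝ E) {r R : ℝ}
    {U : ℕ → X → E} (hU : ∀ n, Measurable (U n)) (hUR : ∀ n x, ‖U n x‖ ≤ R) {d : ℕ → X → ℝ≥0∞}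
    (hd : ∀ n, Measurable (d n)) (hd0 : Tendsto (fun n => ∫⁻ x, d n x ∂ν) atTop (𝓝 0)) :
    ∀ᵐ a ∂μ.restrict (ball 0 r),
      liminf (fun n => ∫⁻ x, d n x * (‖U n x - a‖ₑ⁻¹ + 1) ∂ν) atTop = 0 := by
  let K : ℝ≥0∞ := (∫⁻ x in ball 0 (R + r), ‖x‖ₑ⁻¹ ∂μ) + μ (ball 0 r)
  have hK : K ≠ ⊤ :=
    ENNReal.add_ne_top.2 ⟨(setLIntegral_ball_inv_enorm_lt_top μ hE _).ne, measure_ball_lt_top.ne⟩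
  have hm : ∀ n, Measurable fun p : E × X => d n p.2 * (‖U n p.2 - p.1‖ₑ⁻¹ + 1) := fun n =>
    ((hd n).comp measurable_snd).mul
      ((((hU n).comp measurable_snd).sub measurable_fst).enorm.inv.add_const 1)
  have hma : ∀ n, Measurable fun a => ∫⁻ x, d n x * (‖U n x - a‖ₑ⁻¹ + 1) ∂ν := fun n =>
    (hm n).lintegral_prod_right'
  have hle : ∀ n, ∫⁻ a in ball 0 r, ∫⁻ x, d n x * (‖U n x - a‖ₑ⁻¹ + 1) ∂ν ∂μ ≤
      (∫⁻ x, d n x ∂ν) * K := fun n => by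
    rw [lintegral_lintegral_swap (hm n).aemeasurable, ← lintegral_mul_const _ (hd n)]
    refine lintegral_mono fun x => ?_
    beta_reduce
    have hsub : Measurable fun a => ‖U n x - a‖ₑ⁻¹ :=
      (measurable_const.sub measurable_id).enorm.inv
    rw [lintegral_const_mul _ (hsub.add_const 1), lintegral_add_right _ measurable_const,
      setLIntegral_one]
    gcongr
    exact add_le_add (setLIntegral_ball_inv_enorm_sub_le μ (hUR n x)) le_rfl
  have hzero : ∫⁻ a in ball 0 r,
      liminf (fun n => ∫⁻ x, d n x * (‖U n x - a‖ₑ⁻¹ + 1) ∂ν) atTop ∂μ = 0 := by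
    have hlim := ENNReal.Tendsto.mul_const hd0 (Or.inr hK)
    rw [zero_mul] at hlim
    refine le_antisymm ((lintegral_liminf_le hma).trans ?_) bot_le
    rw [← hlim.liminf_eq]
    exact liminf_le_liminf (Eventually.of_forall hle)
  exact (lintegral_eq_zero_iff (Measurable.liminf hma)).1 hzero

end PotentialAveraging

/-! ### Circle-valued maps with finitely many singularities -/

section FiniteSingularities

section Annulus

variable {X : Type*} [MeasurableSpace X] {μ : Measure X} {U f : ℕ → X → ℂ} {g D : X → ℂ} {a : ℂ}

lemma norm_indicator_fderiv_puncturedDiscRetraction_le (ha : ‖a‖ ≤ 1 / 2) {z : ℂ} (hz : ‖z‖ ≤ 1) :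
    ‖(ball 0 (3 / 4))ᶜ.indicator (fderiv ℝ (puncturedDiscRetraction a)) z‖ ≤ 5 := by
  rcases em (z ∈ (ball (0 : ℂ) (3 / 4))ᶜ) with hmem | hmem
  · rw [indicator_of_mem hmem]
    rw [mem_compl_iff, mem_ball_zero_iff, not_lt] at hmem
    have hgap : 1 / 4 ≤ ‖z - a‖ := by linarith [norm_sub_norm_le z a]
    have hinv : ‖z - a‖⁻¹ ≤ 4 := by
      rw [← inv_inv (4 : ℝ)]
      exact inv_anti₀ (by norm_num) (by linarith)
    have hza : z ≠ a := fun h => by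
      rw [h, sub_self, norm_zero] at hgap
      norm_num at hgap
    linarith [norm_fderiv_puncturedDiscRetraction_le ha hz hza]
  · rw [indicator_of_notMem hmem, norm_zero]
    norm_num

lemma eventually_notMem_ball_of_tendsto {V : ℕ → ℂ} {z : ℂ} (hz : ‖z‖ = 1)
    (hV : Tendsto V atTop (𝓝 z)) : ∀ᶠ n in atTop, V n ∉ ball (0 : ℂ) (3 / 4) := by
  filter_upwards [hV.norm.eventually (lt_mem_nhds (a := 3 / 4) (by rw [hz]; norm_num))] with n hn
  rw [mem_ball_zero_iff, not_lt]
  exact hn.le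

lemma tendstoInL1_indicator_fderiv_puncturedDiscRetraction (ha : ‖a‖ ≤ 1 / 2)
    (hU : ∀ n, Measurable (U n)) (hU1 : ∀ n x, ‖U n x‖ ≤ 1) (hg : ∀ᵐ x ∂μ, ‖g x‖ = 1)
    (hUg : ∀ᵐ x ∂μ, Tendsto (fun n => U n x) atTop (𝓝 (g x))) (hfD : TendstoInL1 μ f D)
    (hf : ∀ n, AEStronglyMeasurable (f n) μ) (hD : Integrable D μ)
    (htan : ∀ᵐ x ∂μ, D x * conj (g x) + g x * conj (D x) = 0) :
    TendstoInL1 μ (fun n x =>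
      (ball 0 (3 / 4))ᶜ.indicator (fderiv ℝ (puncturedDiscRetraction a)) (U n x) (f n x)) D := by
  have ha1 : ‖a‖ < 1 := by linarith
  have hlim := hfD.clm_apply_of_norm_le
    (T' := fun x => fderiv ℝ (puncturedDiscRetraction a) (g x)) hf hD
    (fun n => Eventually.of_forall fun x =>
      norm_indicator_fderiv_puncturedDiscRetraction_le ha (hU1 n x))
    (fun n => (((measurable_fderiv ℝ (puncturedDiscRetraction a)).indicator
      measurableSet_ball.compl).comp (hU n)).aestronglyMeasurable) ?_
  · refine hlim.congr fun n => lintegral_congr_ae ?_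
    filter_upwards [hg, htan] with x hx hxt
    rw [fderiv_puncturedDiscRetraction_of_tangential ha1 hx hxt]
  · filter_upwards [hg, hUg] with x hx hUx
    have hcont := ((contDiffAt_puncturedDiscRetraction (retractionFactor_ne_zero ha1 hx.le
      (ne_of_norm_lt_one ha1 hx))).continuousAt_fderiv one_ne_zero).tendsto.comp hUx
    refine hcont.congr' ?_
    filter_upwards [eventually_notMem_ball_of_tendsto hx hUx] with n hn
    exact (indicator_of_mem (mem_compl hn) _).symm

lemma tendstoInL1_indicator_smul_zero (hU : ∀ n, Measurable (U n)) (hg : ∀ᵐ x ∂μ, ‖g x‖ = 1)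
    (hUg : ∀ᵐ x ∂μ, Tendsto (fun n => U n x) atTop (𝓝 (g x))) (hfD : TendstoInL1 μ f D)
    (hf : ∀ n, AEStronglyMeasurable (f n) μ) (hD : Integrable D μ) :
    TendstoInL1 μ (fun n x => (ball (0 : ℂ) (3 / 4)).indicator (1 : ℂ → ℂ) (U n x) * f n x)
      fun _ => 0 := by
  have hlim := hfD.smul_of_norm_le (M := fun n x =>
    (ball (0 : ℂ) (3 / 4)).indicator (1 : ℂ → ℂ) (U n x)) (N := fun _ => 0) (K := 1) hf hD
    (fun n => Eventually.of_forall fun x => (norm_indicator_le_norm_self _ _).trans (by simp))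
    (fun n => ((measurable_one.indicator measurableSet_ball).comp (hU n)).aestronglyMeasurable) ?_
  · simpa only [smul_eq_mul, zero_mul] using hlim
  · filter_upwards [hg, hUg] with x hx hUx
    refine tendsto_const_nhds.congr' ?_
    filter_upwards [eventually_notMem_ball_of_tendsto hx hUx] with n hn
    exact (indicator_of_notMem hn _).symm

lemma tendsto_lintegral_enorm_sub_puncturedDiscRetraction_mul (ha : ‖a‖ < 1)
    (hU : ∀ n, Measurable (U n)) (hg : ∀ᵐ x ∂μ, ‖g x‖ = 1) (hgm : AEStronglyMeasurable g μ)
    (hUg : ∀ᵐ x ∂μ, Tendsto (fun n => U n x) atTop (𝓝 (g x))) (hD : Integrable D μ) :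
    Tendsto (fun n => ∫⁻ x, ‖g x - puncturedDiscRetraction a (U n x)‖ₑ * ‖D x‖ₑ ∂μ)
      atTop (𝓝 0) := by
  have hlim := tendstoInL1_smul_of_norm_le (K := 2) (N := fun _ => (0 : ℂ))
    (M := fun n x => g x - puncturedDiscRetraction a (U n x)) hD ?_
    (fun n => hgm.sub
      ((measurable_puncturedDiscRetraction a).comp (hU n)).aestronglyMeasurable) ?_
  · simpa only [TendstoInL1, smul_eq_mul, zero_mul, sub_zero, enorm_mul] using hlim
  · intro n
    filter_upwards [hg] with x hx
    linarith [norm_sub_le (g x) (puncturedDiscRetraction a (U n x)),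
      norm_puncturedDiscRetraction_le a (U n x)]
  · filter_upwards [hg, hUg] with x hx hUx
    have hcont := (contDiffAt_puncturedDiscRetraction (retractionFactor_ne_zero ha hx.le
      (ne_of_norm_lt_one ha hx))).continuousAt.tendsto.comp hUx
    rw [puncturedDiscRetraction_eq_self ha hx] at hcont
    simpa only [sub_self, Function.comp_apply] using hcont.const_sub (g x)

end Annulus

lemma enorm_partialDeriv_puncturedDiscRetraction_comp_sub_le {a : ℂ} (ha : ‖a‖ ≤ 1 / 2)
    {U : R2 → ℂ} {x : R2} (hU : DifferentiableAt ℝ U x) (hU1 : ‖U x‖ ≤ 1) (hUa : U x ≠ a)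
    (j : Fin 2) (q : ℂ) :
    ‖partialDeriv j (fun y => puncturedDiscRetraction a (U y)) x - q‖ₑ ≤
      ‖(ball 0 (3 / 4))ᶜ.indicator (fderiv ℝ (puncturedDiscRetraction a)) (U x)
        (partialDeriv j U x) - q‖ₑ +
      ‖(ball (0 : ℂ) (3 / 4)).indicator (1 : ℂ → ℂ) (U x) * partialDeriv j U x‖ₑ *
        (‖U x - a‖ₑ⁻¹ + 1) := by
  have hρ := (contDiffAt_puncturedDiscRetraction (retractionFactor_ne_zero
    (by linarith : ‖a‖ < 1) hU1 hUa)).differentiableAt one_ne_zero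
  have hbound : ‖fderiv ℝ (puncturedDiscRetraction a) (U x)‖ₑ ≤ ‖U x - a‖ₑ⁻¹ + 1 := by
    rw [← ofReal_norm, ← ofReal_norm,
      ← ENNReal.ofReal_inv_of_pos (norm_pos_iff.2 (sub_ne_zero.2 hUa)), ← ENNReal.ofReal_one,
      ← ENNReal.ofReal_add (by positivity) zero_le_one]
    exact ENNReal.ofReal_le_ofReal (norm_fderiv_puncturedDiscRetraction_le ha hU1 hUa)
  have hchain : partialDeriv j (fun y => puncturedDiscRetraction a (U y)) x =
      fderiv ℝ (puncturedDiscRetraction a) (U x) (partialDeriv j U x) := by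
    rw [partialDeriv, fderiv_fun_comp x hρ hU, ContinuousLinearMap.comp_apply]
  rw [hchain]
  rcases em (U x ∈ ball (0 : ℂ) (3 / 4)) with hmem | hmem
  · rw [indicator_of_mem hmem, indicator_of_notMem (not_not.2 hmem)]
    rw [zero_apply, Pi.one_apply, one_mul, add_comm]
    refine (enorm_sub_le (E := ℂ)).trans ?_
    rw [zero_sub, enorm_neg, mul_comm]
    gcongr
    exact (ContinuousLinearMap.le_opENorm _ _).trans (by gcongr)
  · rw [indicator_of_mem (mem_compl hmem)]
    exact le_self_add

lemma exists_center_frequently_lintegral_lt {U : ℕ → R2 → ℂ} {ν : Measure R2} [SFinite ν]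
    (hU : ∀ n, ContDiff ℝ 1 (U n)) (hU1 : ∀ n x, ‖U n x‖ ≤ 1) {d : ℕ → R2 → ℝ≥0∞}
    (hd : ∀ n, Measurable (d n)) (hd0 : Tendsto (fun n => ∫⁻ x, d n x ∂ν) atTop (𝓝 0)) :
    ∃ a : ℂ, ‖a‖ ≤ 1 / 2 ∧ (∀ n x, U n x = a → Function.Injective (fderiv ℝ (U n) x)) ∧
      ∀ δ : ℝ≥0∞, δ ≠ 0 → ∃ᶠ n in atTop, ∫⁻ x, d n x * (‖U n x - a‖ₑ⁻¹ + 1) ∂ν < δ := by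
  have hsmall := ae_liminf_lintegral_mul_inv_enorm_sub_eq_zero (volume : Measure ℂ) (r := 1 / 2)
    (Complex.finrank_real_complex ▸ one_lt_two) (fun n => (hU n).continuous.measurable) hU1 hd hd0
  have hregular : ∀ᵐ a ∂(volume : Measure ℂ).restrict (ball 0 (1 / 2)),
      ∀ n x, U n x = a → Function.Injective (fderiv ℝ (U n) x) :=
    ae_restrict_of_ae (ae_all_iff.2 fun n => ae_forall_eq_imp_injective_fderiv volume
      (by simp) ((hU n).differentiable one_ne_zero))
  have : (ae ((volume : Measure ℂ).restrict (ball 0 (1 / 2)))).NeBot := by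
    rw [ae_neBot, Ne, Measure.restrict_eq_zero]
    exact (measure_ball_pos volume _ (by norm_num)).ne'
  obtain ⟨a, ⟨hliminf, hinj⟩, ha⟩ :=
    ((hsmall.and hregular).and (ae_restrict_mem measurableSet_ball)).exists
  refine ⟨a, (mem_ball_zero_iff.1 ha).le, hinj, fun δ hδ => ?_⟩
  exact frequently_lt_of_liminf_lt (by isBoundedDefault) (hliminf ▸ pos_iff_ne_zero.2 hδ)

lemma contDiffOn_puncturedDiscRetraction_comp {a : ℂ} (ha : ‖a‖ < 1) {U : R2 → ℂ}
    (hU : ContDiff ℝ 1 U) (hU1 : ∀ x, ‖U x‖ ≤ 1) {S : Set R2} (hS : ∀ x ∈ S, U x ≠ a) :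
    ContDiffOn ℝ 1 (fun x => puncturedDiscRetraction a (U x)) S := fun x hx =>
  ((contDiffAt_puncturedDiscRetraction
    (retractionFactor_ne_zero ha (hU1 x) (hS x hx))).comp x hU.contDiffAt).contDiffWithinAt

lemma lintegral_enorm_partialDeriv_puncturedDiscRetraction_comp_sub_le {a : ℂ} (ha : ‖a‖ ≤ 1 / 2)
    {U : R2 → ℂ} (hU : ContDiff ℝ 1 U) (hU1 : ∀ x, ‖U x‖ ≤ 1) {Ω S : Set R2} (hSΩ : S ⊆ Ω)
    (hSm : MeasurableSet S) (hS : ∀ x ∈ S, U x ≠ a) (j : Fin 2) (D : R2 → ℂ) :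
    ∫⁻ x in S, ‖partialDeriv j (fun y => puncturedDiscRetraction a (U y)) x - D x‖ₑ ≤
      (∫⁻ x in Ω, ‖(ball 0 (3 / 4))ᶜ.indicator (fderiv ℝ (puncturedDiscRetraction a)) (U x)
        (partialDeriv j U x) - D x‖ₑ) +
      ∫⁻ x in Ω, (∑ i, ‖(ball (0 : ℂ) (3 / 4)).indicator (1 : ℂ → ℂ) (U x) *
        partialDeriv i U x‖ₑ) * (‖U x - a‖ₑ⁻¹ + 1) := by
  have hUm := hU.continuous.measurable
  have hmeas : Measurable fun x => (∑ i, ‖(ball (0 : ℂ) (3 / 4)).indicator (1 : ℂ → ℂ) (U x) *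
      partialDeriv i U x‖ₑ) * (‖U x - a‖ₑ⁻¹ + 1) :=
    (Finset.measurable_sum _ fun i _ => (((measurable_one.indicator measurableSet_ball).comp
      hUm).mul (continuous_partialDeriv hU i).measurable).enorm).mul
      ((hUm.sub_const a).enorm.inv.add_const 1)
  rw [← lintegral_add_right _ hmeas]
  refine (setLIntegral_mono' hSm fun x hx => ?_).trans (lintegral_mono_set hSΩ)
  refine (enorm_partialDeriv_puncturedDiscRetraction_comp_sub_le ha
    (hU.differentiable one_ne_zero x) (hU1 x) (hS x hx) j (D x)).trans ?_
  gcongr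
  exact Finset.single_le_sum
    (f := fun i => ‖(ball (0 : ℂ) (3 / 4)).indicator (1 : ℂ → ℂ) (U x) * partialDeriv i U x‖ₑ)
    (fun _ _ => zero_le) (Finset.mem_univ j)

lemma tendsto_lintegral_sum_indicator_smul_zero {Ω : Set R2} {U : ℕ → R2 → ℂ} {g : R2 → ℂ}
    {D : Fin 2 → R2 → ℂ} (hU : ∀ n, ContDiff ℝ 1 (U n))
    (hg : ∀ᵐ x ∂volume.restrict Ω, ‖g x‖ = 1)
    (hUg : ∀ᵐ x ∂volume.restrict Ω, Tendsto (fun n => U n x) atTop (𝓝 (g x)))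
    (hUD : ∀ j, TendstoInL1 (volume.restrict Ω) (fun n => partialDeriv j (U n)) (D j))
    (hD : ∀ j, IntegrableOn (D j) Ω) :
    Tendsto (fun n => ∫⁻ x in Ω, ∑ j, ‖(ball (0 : ℂ) (3 / 4)).indicator (1 : ℂ → ℂ) (U n x) *
      partialDeriv j (U n) x‖ₑ) atTop (𝓝 0) := by
  have hUm := fun n => (hU n).continuous.measurable
  have hdm := fun n j => (continuous_partialDeriv (hU n) j).measurable
  have hzero : ∀ j, Tendsto (fun n => ∫⁻ x in Ω, ‖(ball (0 : ℂ) (3 / 4)).indicator (1 : ℂ → ℂ)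
      (U n x) * partialDeriv j (U n) x‖ₑ) atTop (𝓝 0) := fun j => by
    simpa only [TendstoInL1, sub_zero] using tendstoInL1_indicator_smul_zero hUm hg hUg (hUD j)
      (fun n => (hdm n j).aestronglyMeasurable) (hD j)
  have hsum := tendsto_finsetSum Finset.univ fun j _ => hzero j
  rw [Finset.sum_const_zero] at hsum
  refine hsum.congr fun n => (lintegral_finsetSum _ fun j _ => ?_).symm
  exact (((measurable_one.indicator measurableSet_ball).comp (hUm n)).mul (hdm n j)).enorm

lemma MemW11.exists_finite_contDiffOn_norm_eq_one {Ω : Set R2} (hΩo : IsOpen Ω)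
    (hΩb : Bornology.IsBounded Ω) (hΩs : HasSegmentProperty Ω) {u : R2 → R2}
    {G : R2 → Matrix (Fin 2) (Fin 2) ℝ} (hu : MemW11 Ω u G) (hS : SphereValued Ω u)
    {η : ℝ≥0∞} (hη : η ≠ 0) :
    ∃ (C : Set R2) (w : R2 → ℂ), C ⊆ Ω ∧ C.Finite ∧ ContDiffOn ℝ 1 w (Ω \ C) ∧
      (∀ x ∈ Ω \ C, ‖w x‖ = 1) ∧
      (∀ j, ∫⁻ x in Ω \ C, ‖partialDeriv j w x - gradC G j x‖ₑ ≤ η) ∧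
      ∀ j, ∫⁻ x in Ω \ C, ‖toC (u x) - w x‖ₑ * ‖gradC G j x‖ₑ ≤ η := by
  obtain ⟨U, hU, hU1, hUD, hUg⟩ := hu.exists_contDiff_norm_le_one_tendsto hΩo hΩb hΩs hS
  have hUm := fun n => (hU n).continuous.measurable
  have hdm := fun n j => (continuous_partialDeriv (hU n) j).measurable
  have hlim := hu.isDiscLimit hΩo hΩb hΩs hS
  have hg := hlim.norm_eq_one
  obtain ⟨a, ha, hinj, hfreq⟩ := exists_center_frequently_lintegral_lt hU hU1
    (fun n => Finset.measurable_sum _ fun i _ => (((measurable_one.indicator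
      measurableSet_ball).comp (hUm n)).mul (hdm n i)).enorm)
    (tendsto_lintegral_sum_indicator_smul_zero hU hg hUg hUD hlim.integrableOn)
  have ha1 : ‖a‖ < 1 := by linarith
  have hhalf := pos_iff_ne_zero.2 (ENNReal.half_pos hη).ne'
  have hgrad := eventually_all.2 fun j =>
    (tendstoInL1_indicator_fderiv_puncturedDiscRetraction ha hUm hU1 hg hUg (hUD j)
      (fun n => (hdm n j).aestronglyMeasurable) (hlim.integrableOn j)
      (hlim.tangential j)).eventually (gt_mem_nhds hhalf)
  have hval := eventually_all.2 fun j =>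
    (tendsto_lintegral_enorm_sub_puncturedDiscRetraction_mul ha1 hUm hg
      hu.integrableOn_toC.aestronglyMeasurable hUg (hlim.integrableOn j)).eventually
      (gt_mem_nhds (pos_iff_ne_zero.2 hη))
  obtain ⟨n, hball, hgrad_n, hval_n⟩ := ((hfreq _ hhalf.ne').and_eventually (hgrad.and hval)).exists
  have hC := finite_preimage_of_injective_fderiv ((hU n).differentiable one_ne_zero) hΩb (hinj n)
  have hne : ∀ x ∈ Ω \ {x ∈ Ω | U n x = a}, U n x ≠ a := fun x hx h => hx.2 ⟨hx.1, h⟩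
  refine ⟨{x ∈ Ω | U n x = a}, fun x => puncturedDiscRetraction a (U n x), sep_subset _ _, hC,
    contDiffOn_puncturedDiscRetraction_comp ha1 (hU n) (hU1 n) hne, fun x hx =>
      norm_puncturedDiscRetraction (retractionFactor_ne_zero ha1 (hU1 n x) (hne x hx)),
    fun j => ?_, fun j => (lintegral_mono_set sdiff_subset).trans (hval_n j).le⟩
  refine (lintegral_enorm_partialDeriv_puncturedDiscRetraction_comp_sub_le ha (hU n) (hU1 n)
    sdiff_subset (hΩo.sdiff hC.isClosed).measurableSet hne j _).trans ?_
  exact (add_le_add (hgrad_n j).le hball.le).trans_eq (ENNReal.add_halves η)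

end FiniteSingularities

/-! ### The envelope and the removal of finite sets -/

section Envelope

variable {Ω S : Set R2} {u : R2 → R2} {G : R2 → Matrix (Fin 2) (Fin 2) ℝ} {w : R2 → ℂ}
  {D : Fin 2 → R2 → ℂ} {η : ℝ≥0∞}

lemma relaxedArea_empty (u : R2 → R2) : relaxedArea u ∅ = 0 := by
  refine le_antisymm (sInf_le ⟨fun _ => 0, fun _ => contDiffOn_const, ?_, ?_, ?_⟩) zero_le
  · exact fun _ => integrableOn_empty
  · simp only [Measure.restrict_empty, integral_zero_measure, tendsto_const_nhds]
  · simp only [classicalArea, Measure.restrict_empty, lintegral_zero_measure, liminf_const]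

lemma envA_le_add {V A B : Set R2} (hA : IsOpen A) (hAΩ : A ⊆ Ω) (hB : IsOpen B) (hBΩ : B ⊆ Ω)
    (hV : V ⊆ A ∪ B) : envA u Ω V ≤ relaxedArea u A + relaxedArea u B := by
  refine sInf_le ⟨fun k => if k = 0 then A else if k = 1 then B else ∅, fun k => ?_, ?_, ?_⟩
  · dsimp only
    split_ifs
    exacts [⟨hA, hAΩ⟩, ⟨hB, hBΩ⟩, ⟨isOpen_empty, empty_subset _⟩]
  · exact hV.trans (union_subset (subset_iUnion_of_subset 0 (by simp))
      (subset_iUnion_of_subset 1 (by simp)))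
  · rw [tsum_eq_sum (s := Finset.range 2) fun k hk => ?_]
    · simp [Finset.sum_range_succ]
    · have : k ≠ 0 ∧ k ≠ 1 := by
        rw [Finset.mem_range] at hk
        omega
      dsimp only
      rw [if_neg this.1, if_neg this.2, relaxedArea_empty]

lemma envA_le_relaxedArea_sdiff_of_le_measure {ν : Measure R2} [ν.OuterRegular]
    (hν : ∀ S, IsOpen S → S ⊆ Ω → relaxedArea u S ≤ ν S) (hΩ : IsOpen Ω) {C : Set R2}
    (hC : IsClosed C) (hνC : ν C = 0) : envA u Ω Ω ≤ relaxedArea u (Ω \ C) := by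
  refine le_of_forall_pos_le_add fun ε hε => ?_
  obtain ⟨A, hCA, hA, hνA⟩ := C.exists_isOpen_lt_of_lt ε (hνC ▸ hε)
  have hcover : Ω ⊆ Ω \ C ∪ A ∩ Ω := fun x hx =>
    (em (x ∈ C)).symm.imp (fun hxC => ⟨hx, hxC⟩) fun hxC => ⟨hCA hxC, hx⟩
  calc envA u Ω Ω ≤ relaxedArea u (Ω \ C) + relaxedArea u (A ∩ Ω) :=
        envA_le_add (hΩ.sdiff hC) sdiff_subset (hA.inter hΩ) inter_subset_right hcover
    _ ≤ relaxedArea u (Ω \ C) + ε := by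
        gcongr
        exact ((hν _ (hA.inter hΩ) inter_subset_right).trans
          (measure_mono inter_subset_left)).trans hνA.le

lemma MemW11.lintegral_areaDensity_le_envA (hu : MemW11 Ω u G) (hΩb : Bornology.IsBounded Ω) :
    ∫⁻ x in Ω, ENNReal.ofReal (areaDensity (gradC G 0 x) (gradC G 1 x)) ≤ envA u Ω Ω := by
  refine le_sInf ?_
  rintro _ ⟨A, hA, hcover, rfl⟩
  refine (lintegral_mono_set hcover).trans ((lintegral_iUnion_le _ _).trans ?_)
  exact ENNReal.tsum_le_tsum fun k =>
    hu.lintegral_areaDensity_le_relaxedArea (hA k).1 (hA k).2 (hΩb.subset (hA k).2)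

lemma IsDiscLimit.relaxedArea_le_lintegral_enorm (h : IsDiscLimit S (fun x => toC (u x)) D)
    (hS : IsOpen S) (hSfin : volume S ≠ ⊤) (hum : AEStronglyMeasurable u (volume.restrict S)) :
    relaxedArea u S ≤ ∫⁻ x in S, (1 + 2 * ∑ j, ‖D j x‖ₑ) := by
  have hone : IsDiscLimit S (fun x => toC (u x) * conj 1) D := by
    simpa only [map_one, mul_one] using h
  have hle := relaxedArea_le_of_isDiscLimit (w := fun _ => 1) hS hSfin contDiffOn_const
    (fun _ _ => norm_one) hone hum
  rw [lintegral_add_left measurable_const, lintegral_const_mul' _ _ ENNReal.ofNat_ne_top]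
  simpa [areaDensity, partialDeriv] using hle

lemma IsDiscLimit.envA_le_relaxedArea_sdiff (h : IsDiscLimit Ω (fun x => toC (u x)) D)
    (hΩ : IsOpen Ω) (hΩfin : volume Ω ≠ ⊤) (hum : AEStronglyMeasurable u (volume.restrict Ω))
    {C : Set R2} (hC : C.Finite) : envA u Ω Ω ≤ relaxedArea u (Ω \ C) := by
  set ν := (volume.restrict Ω).withDensity fun x => 1 + 2 * ∑ j, ‖D j x‖ₑ with hνdef
  have : IsFiniteMeasure ν := by
    refine isFiniteMeasure_withDensity ?_
    rw [lintegral_add_left measurable_const, setLIntegral_one,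
      lintegral_const_mul' _ _ ENNReal.ofNat_ne_top,
      lintegral_finsetSum' _ fun j _ => (h.integrableOn j).aestronglyMeasurable.enorm]
    exact ENNReal.add_ne_top.2 ⟨hΩfin, ENNReal.mul_ne_top ENNReal.ofNat_ne_top
      (ENNReal.sum_ne_top.2 fun j _ => (h.integrableOn j).2.ne)⟩
  have hνC : ν C = 0 := withDensity_absolutelyContinuous _ _
    (Measure.absolutelyContinuous_of_le Measure.restrict_le_self (hC.measure_zero volume))
  refine envA_le_relaxedArea_sdiff_of_le_measure (ν := ν) (fun S hS hSΩ => ?_) hΩ hC.isClosed hνC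
  rw [hνdef, withDensity_apply _ hS.measurableSet, Measure.restrict_restrict hS.measurableSet,
    inter_eq_self_of_subset_left hSΩ]
  exact (h.mono hSΩ).relaxedArea_le_lintegral_enorm hS (measure_ne_top_of_subset hSΩ hΩfin)
    (hum.mono_set hSΩ)

lemma enorm_mul_conj_add_mul_conj_le {p g w z : ℂ} (hw : ‖w‖ = 1) (hz : ‖z‖ = 1)
    (hp : p * conj w + w * conj p = 0) :
    ‖g * conj w + z * conj p‖ₑ ≤ 3 * ‖p - g‖ₑ + ‖z - w‖ₑ * ‖g‖ₑ := by
  have hsplit : g * conj w + z * conj p =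
      (g - p) * conj w + (z - w) * conj (p - g) + (z - w) * conj g := by
    rw [map_sub]
    linear_combination hp
  have hzw : ‖z - w‖ₑ ≤ 2 := by
    refine (enorm_sub_le (E := ℂ)).trans_eq ?_
    rw [← ofReal_norm, ← ofReal_norm, hz, hw, ENNReal.ofReal_one, one_add_one_eq_two]
  have hw' : ‖w‖ₑ = 1 := by rw [← ofReal_norm, hw, ENNReal.ofReal_one]
  have hconj : ∀ v : ℂ, ‖conj v‖ₑ = ‖v‖ₑ := fun v => by
    rw [← ofReal_norm, RCLike.norm_conj, ofReal_norm]
  calc ‖g * conj w + z * conj p‖ₑ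
      ≤ ‖(g - p) * conj w‖ₑ + ‖(z - w) * conj (p - g)‖ₑ + ‖(z - w) * conj g‖ₑ := by
        rw [hsplit]
        exact (enorm_add_le _ _).trans (by gcongr; exact enorm_add_le _ _)
    _ = ‖p - g‖ₑ + ‖z - w‖ₑ * ‖p - g‖ₑ + ‖z - w‖ₑ * ‖g‖ₑ := by
        simp only [enorm_mul, hconj, hw', mul_one, enorm_sub_rev g p]
    _ ≤ ‖p - g‖ₑ + 2 * ‖p - g‖ₑ + ‖z - w‖ₑ * ‖g‖ₑ := by gcongr
    _ = 3 * ‖p - g‖ₑ + ‖z - w‖ₑ * ‖g‖ₑ := by ring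

lemma lintegral_areaDensity_partialDeriv_le (hS : IsOpen S) (hw : ContDiffOn ℝ 1 w S)
    (hD : ∀ j, IntegrableOn (D j) S) (hwD : ∀ j, ∫⁻ x in S, ‖partialDeriv j w x - D j x‖ₑ ≤ η) :
    ∫⁻ x in S, ENNReal.ofReal (areaDensity (partialDeriv 0 w x) (partialDeriv 1 w x)) ≤
      (∫⁻ x in S, ENNReal.ofReal (areaDensity (D 0 x) (D 1 x))) + 2 * η := by
  have hm : ∀ j, AEMeasurable (fun x => ‖partialDeriv j w x - D j x‖ₑ) (volume.restrict S) :=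
    fun j => ((aestronglyMeasurable_partialDeriv hw hS j).sub (hD j).aestronglyMeasurable).enorm
  refine (lintegral_mono fun x => ofReal_areaDensity_le_add (fun j => partialDeriv j w x)
    fun j => D j x).trans ?_
  rw [lintegral_add_right' _ (Finset.aemeasurable_fun_sum _ fun j _ => hm j),
    lintegral_finsetSum' _ fun j _ => hm j]
  gcongr
  refine (Finset.sum_le_card_nsmul _ _ η fun j _ => hwD j).trans_eq ?_
  rw [Finset.card_univ, Fintype.card_fin, nsmul_eq_mul, Nat.cast_ofNat]

lemma lintegral_sum_enorm_mul_conj_add_le {g : R2 → ℂ} (hS : IsOpen S) (hw : ContDiffOn ℝ 1 w S)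
    (hw1 : ∀ x ∈ S, ‖w x‖ = 1) (hg : ∀ᵐ x ∂volume.restrict S, ‖g x‖ = 1)
    (hgm : AEStronglyMeasurable g (volume.restrict S)) (hD : ∀ j, IntegrableOn (D j) S)
    (hwD : ∀ j, ∫⁻ x in S, ‖partialDeriv j w x - D j x‖ₑ ≤ η)
    (hgw : ∀ j, ∫⁻ x in S, ‖g x - w x‖ₑ * ‖D j x‖ₑ ≤ η) :
    ∫⁻ x in S, ∑ j, ‖D j x * conj (w x) + g x * conj (partialDeriv j w x)‖ₑ ≤ 8 * η := by
  have hpm := aestronglyMeasurable_partialDeriv hw hS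
  have hwm := hw.continuousOn.aestronglyMeasurable (μ := volume) hS.measurableSet
  have hDm := fun j => (hD j).aestronglyMeasurable
  have hj : ∀ j, ∫⁻ x in S, ‖D j x * conj (w x) + g x * conj (partialDeriv j w x)‖ₑ ≤
      4 * η := fun j => by
    calc ∫⁻ x in S, ‖D j x * conj (w x) + g x * conj (partialDeriv j w x)‖ₑ
        ≤ ∫⁻ x in S, (3 * ‖partialDeriv j w x - D j x‖ₑ + ‖g x - w x‖ₑ * ‖D j x‖ₑ) := by
          refine lintegral_mono_ae ?_
          filter_upwards [hg, ae_restrict_mem hS.measurableSet] with x hx hxS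
          exact enorm_mul_conj_add_mul_conj_le (hw1 x hxS) hx
            (partialDeriv_mul_conj_add_eq_zero hS hxS
              (hw.differentiableOn_one.differentiableAt (hS.mem_nhds hxS)) hw1 j)
      _ ≤ 3 * η + η := by
          rw [lintegral_add_right' _ ((hgm.fun_sub hwm).enorm.fun_mul (hDm j).enorm),
            lintegral_const_mul' _ _ ENNReal.ofNat_ne_top]
          exact add_le_add (mul_le_mul_right (hwD j) 3) (hgw j)
      _ = 4 * η := by ring
  rw [lintegral_finsetSum' _ fun j _ => (((hDm j).fun_mul
    (Complex.continuous_conj.comp_aestronglyMeasurable hwm)).fun_add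
    (hgm.fun_mul (Complex.continuous_conj.comp_aestronglyMeasurable (hpm j)))).enorm]
  refine (Finset.sum_le_card_nsmul _ _ (4 * η) fun j _ => hj j).trans_eq ?_
  rw [Finset.card_univ, Fintype.card_fin, nsmul_eq_mul, Nat.cast_ofNat]
  ring

lemma IsDiscLimit.relaxedArea_le_lintegral_areaDensity_add
    (h : IsDiscLimit S (fun x => toC (u x)) D) (hS : IsOpen S) (hSfin : volume S ≠ ⊤)
    (hum : AEStronglyMeasurable u (volume.restrict S)) (hw : ContDiffOn ℝ 1 w S)
    (hw1 : ∀ x ∈ S, ‖w x‖ = 1) (hη : η ≠ ⊤)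
    (hwD : ∀ j, ∫⁻ x in S, ‖partialDeriv j w x - D j x‖ₑ ≤ η)
    (hgw : ∀ j, ∫⁻ x in S, ‖toC (u x) - w x‖ₑ * ‖D j x‖ₑ ≤ η) :
    relaxedArea u S ≤ (∫⁻ x in S, ENNReal.ofReal (areaDensity (D 0 x) (D 1 x))) + 18 * η := by
  have hpm := aestronglyMeasurable_partialDeriv hw hS
  have hwi : ∀ j, IntegrableOn (partialDeriv j w) S := fun j => by
    have hdiff : IntegrableOn (partialDeriv j w - D j) S :=
      ⟨(hpm j).sub (h.integrableOn j).aestronglyMeasurable, (hwD j).trans_lt hη.lt_top⟩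
    simpa only [sub_add_cancel] using hdiff.add (h.integrableOn j)
  have hgm := toC.continuous.comp_aestronglyMeasurable hum
  calc relaxedArea u S
      ≤ _ + 2 * ∫⁻ x in S, ∑ j,
          ‖D j x * conj (w x) + toC (u x) * conj (partialDeriv j w x)‖ₑ :=
        relaxedArea_le_of_isDiscLimit hS hSfin hw hw1 (h.mul_conj hS hw hw1 hwi) hum
    _ ≤ ((∫⁻ x in S, ENNReal.ofReal (areaDensity (D 0 x) (D 1 x))) + 2 * η) + 2 * (8 * η) :=
        add_le_add (lintegral_areaDensity_partialDeriv_le hS hw h.integrableOn hwD)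
          (mul_le_mul_right (lintegral_sum_enorm_mul_conj_add_le hS hw hw1 h.norm_eq_one hgm
            h.integrableOn hwD hgw) 2)
    _ = _ := by ring

lemma MemW11.exists_finite_relaxedArea_sdiff_le (hu : MemW11 Ω u G) (hΩo : IsOpen Ω)
    (hΩb : Bornology.IsBounded Ω) (hΩs : HasSegmentProperty Ω) (hS : SphereValued Ω u)
    {ε : ℝ≥0} (hε : 0 < ε) :
    ∃ C ⊆ Ω, C.Finite ∧ relaxedArea u (Ω \ C) ≤
      (∫⁻ x in Ω, ENNReal.ofReal (areaDensity (gradC G 0 x) (gradC G 1 x))) + ε := by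
  have hη : (ε : ℝ≥0∞) / 18 ≠ 0 :=
    ENNReal.div_ne_zero.2 ⟨ENNReal.coe_ne_zero.2 hε.ne', ENNReal.ofNat_ne_top⟩
  have hη' : (ε : ℝ≥0∞) / 18 ≠ ⊤ := ENNReal.div_ne_top ENNReal.coe_ne_top (by norm_num)
  obtain ⟨C, w, hCΩ, hC, hw, hw1, hwD, huw⟩ :=
    hu.exists_finite_contDiffOn_norm_eq_one hΩo hΩb hΩs hS hη
  have hle := ((hu.isDiscLimit hΩo hΩb hΩs hS).mono
    sdiff_subset).relaxedArea_le_lintegral_areaDensity_add (hΩo.sdiff hC.isClosed)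
    (measure_ne_top_of_subset sdiff_subset hΩb.measure_lt_top.ne)
    (hu.1.aestronglyMeasurable.mono_set sdiff_subset) hw hw1 hη' hwD huw
  rw [ENNReal.mul_div_cancel (by norm_num) ENNReal.ofNat_ne_top] at hle
  exact ⟨C, hCΩ, hC, hle.trans (by gcongr; exact sdiff_subset)⟩

end Envelope

theorem envA_eq_inf_finite_removal_general {Ω : Set R2} (hΩo : IsOpen Ω)
    (hΩb : Bornology.IsBounded Ω) (hΩs : HasSegmentProperty Ω) {u : R2 → R2}
    {G : R2 → Matrix (Fin 2) (Fin 2) ℝ} (hu : MemW11 Ω u G) (hS : SphereValued Ω u) :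
    envA u Ω Ω =
      sInf { a : ℝ≥0∞ | ∃ C : Set R2, C ⊆ Ω ∧ C.Finite ∧ a = relaxedArea u (Ω \ C) } := by
  apply le_antisymm
  · refine le_sInf ?_
    rintro _ ⟨C, -, hC, rfl⟩
    exact (hu.isDiscLimit hΩo hΩb hΩs hS).envA_le_relaxedArea_sdiff hΩo hΩb.measure_lt_top.ne
      hu.1.aestronglyMeasurable hC
  · refine ENNReal.le_of_forall_pos_le_add fun ε hε _ => ?_
    obtain ⟨C, hCΩ, hC, hle⟩ := hu.exists_finite_relaxedArea_sdiff_le hΩo hΩb hΩs hS hε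
    refine le_trans (b := relaxedArea u (Ω \ C)) (sInf_le ⟨C, hCΩ, hC, rfl⟩) (hle.trans ?_)
    gcongr
    exact hu.lintegral_areaDensity_le_envA hΩb

/-- **Theorem 1.2 (De Giorgi conjecture, adapted).** For `u ∈ W^{1,1}(Ω;S¹)`,
`𝒜**(u,Ω) = inf{𝒜(u,Ω∖C) : C ⊂ Ω finite}`. -/
theorem envA_eq_inf_finite_removal (Ω : Set R2) (hΩo : IsOpen Ω)
    (hΩb : Bornology.IsBounded Ω) (hΩc : IsConnected Ω) (hΩl : HasLipschitzBoundary Ω)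
    (u : R2 → R2) (G : R2 → Matrix (Fin 2) (Fin 2) ℝ)
    (hu : MemW11 Ω u G) (hS : SphereValued Ω u) :
    envA u Ω Ω =
      sInf { a : ℝ≥0∞ | ∃ C : Set R2, C ⊆ Ω ∧ C.Finite ∧ a = relaxedArea u (Ω \ C) } :=
  envA_eq_inf_finite_removal_general hΩo hΩb hΩl.hasSegmentProperty hu hS
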